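/- Case B1, all powers: Let l1, l2 be distinct odd primes with l1 ≡ 3 (mod 4) and l2 ≡ 1 (mod 4), let r1, r2 ≥ 1, and let N = l1^{r1} l2^{r2}. Assume the multiplicative order of p modulo l1^{r1} is φ(l1^{r1}), the multiplicative order of p modulo l2^{r2} is φ(l2^{r2}), and f = φ(N)/2. Set h12 = h(Q(√-l1 l2)). Then there exist integers a', b' with 4 p^{h12} = (a')² + l1 l2 (b')² and a' ≡ 2 p^{h12/2} (mod l1) such that for all integers t1, t2 with 0 ≤ t1 < r1 and 0 ≤ t2 < r2: G(χ^{l1^{t1} l2^{t2}}) = p^{(f - h12 · l1^{t1} l2^{t2})/2} · ((a' + b' √-(l1 l2))/2)^{l1^{t1} l2^{t2}}; G(χ^{l1^{r1} l2^{t2}}) = p^{f/2}; and G(χ^{l1^{t1} l2^{r2}}) = -p^{f/2}. -/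

import Mathlib

open Complex Polynomial IntermediateField

/-- The complex primitive `p`-th root of unity `exp(2πi/p)`. -/
noncomputable def zetaP (p : ℕ) : ℂ := Complex.exp (2 * Real.pi * Complex.I / p)

/-- The Gauss sum `G(χ^λ) = ∑_{x ∈ F, x ≠ 0} χ^λ(x) ζ_p^{T(x)}`, where
`T` is the trace map from `F` down to `ZMod p`. -/
noncomputable def gaussSumN (p : ℕ) {F : Type} [Field F] [Fintype F] [Algebra (ZMod p) F]
    (χ : MulChar F ℂ) (lam : ℕ) : ℂ :=
  letI : DecidableEq F := Classical.decEq F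
  ∑ x ∈ Finset.univ.filter (fun x : F => x ≠ 0),
    (χ ^ lam) x * zetaP p ^ (Algebra.trace (ZMod p) F x).val

/-- `√-m = i√m ∈ ℂ`. -/
noncomputable def sqrtNeg (m : ℕ) : ℂ := Real.sqrt m * Complex.I

theorem sqrtNeg_sq (m : ℕ) : sqrtNeg m ^ 2 = -(m : ℂ) := by
  have h : ((Real.sqrt m : ℝ) : ℂ) ^ 2 = ((m : ℝ) : ℂ) := by
    rw [← Complex.ofReal_pow, Real.sq_sqrt (by positivity)]
  simp only [sqrtNeg, mul_pow, Complex.I_sq, h]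
  push_cast
  ring

theorem isIntegral_sqrtNeg (m : ℕ) : IsIntegral ℚ (sqrtNeg m) := by
  refine ⟨X ^ 2 + C (m : ℚ), monic_X_pow_add_C _ (by norm_num), ?_⟩
  simp [sqrtNeg_sq]

/-- The class number `h(ℚ(√-m))` of the quadratic field `ℚ(√-m) ⊆ ℂ`. -/
noncomputable def classNumSqrtNeg (m : ℕ) : ℕ :=
  haveI : FiniteDimensional ℚ ℚ⟮sqrtNeg m⟯ :=
    IntermediateField.adjoin.finiteDimensional (isIntegral_sqrtNeg m)
  haveI : CharZero ℚ⟮sqrtNeg m⟯ :=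
    charZero_of_injective_algebraMap (algebraMap ℚ ℚ⟮sqrtNeg m⟯).injective
  haveI : NumberField ℚ⟮sqrtNeg m⟯ := ⟨⟩
  NumberField.classNumber ℚ⟮sqrtNeg m⟯

/-- `√p* = √p` if `p ≡ 1 (mod 4)` and `i√p` if `p ≡ 3 (mod 4)`. -/
noncomputable def sqrtPStar (p : ℕ) : ℂ :=
  if p % 4 = 1 then (Real.sqrt p : ℂ) else (Real.sqrt p : ℂ) * Complex.I



open Complex Polynomial IntermediateField

theorem rat_int_of_isIntegral (r : ℚ) (h : IsIntegral ℤ (r : ℂ)) : ∃ n : ℤ, r = n := by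
  have h2 : IsIntegral ℤ r := by
    have : (r : ℂ) = algebraMap ℚ ℂ r := by simp
    rw [this] at h
    exact (isIntegral_algebraMap_iff (algebraMap ℚ ℂ).injective).1 h
  obtain ⟨n, hn⟩ := IsIntegrallyClosed.isIntegral_iff.1 h2
  exact ⟨n, by simpa using hn.symm⟩

theorem isIntegral_conj {z : ℂ} (h : IsIntegral ℤ z) : IsIntegral ℤ ((starRingEnd ℂ) z) :=
  h.map ((starRingEnd ℂ).toIntAlgHom)

/-- squarefree denominators -/
theorem rat_int_of_sqfree_mul_sq (D : ℕ) (hD : Squarefree D) (b : ℚ) (m : ℤ)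
    (h : (D : ℚ) * b ^ 2 = m) : ∃ n : ℤ, b = n := by
  have hden : b.den = 1 := by
    by_contra hne
    obtain ⟨q, hq, hqd⟩ := Nat.exists_prime_and_dvd hne
    have h1 : (D : ℤ) * b.num ^ 2 = m * (b.den : ℤ) ^ 2 := by
      have hb : (b.den : ℚ) ≠ 0 := by exact_mod_cast b.den_ne_zero
      have : b = b.num / b.den := (Rat.num_div_den b).symm
      rw [this] at h
      field_simp at h
      rw [mul_comm m]
      exact_mod_cast h
    have hcop : IsCoprime (q : ℤ) b.num := by
      rw [Int.isCoprime_iff_gcd_eq_one]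
      have := b.reduced
      have h2 : Nat.Coprime b.num.natAbs q := Nat.Coprime.coprime_dvd_right hqd this
      simpa [Int.gcd, Nat.Coprime, Nat.gcd_comm] using h2
    have h3 : ((q : ℤ) ^ 2) ∣ (D : ℤ) * b.num ^ 2 := by
      rw [h1]
      exact Dvd.dvd.mul_left (pow_dvd_pow_of_dvd (by exact_mod_cast hqd) 2) _
    have h4 : ((q : ℤ) ^ 2) ∣ (D : ℤ) := (hcop.pow (m := 2) (n := 2)).dvd_of_dvd_mul_right h3
    have h5 : q * q ∣ D := by
      have : q ^ 2 ∣ D := by exact_mod_cast h4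
      rwa [sq] at this
    have := hD q h5
    exact hq.one_lt.ne' (Nat.isUnit_iff.1 this)
  exact ⟨b.num, (Rat.den_eq_one_iff b).1 hden |>.symm⟩

theorem int_of_trace_norm (D : ℕ) (hmod : D % 4 = 3) (hD : Squarefree D) (u v : ℚ)
    (t n : ℤ) (ht : 2 * u = t) (hn : u ^ 2 + D * v ^ 2 = n) :
    ∃ a b : ℤ, 2 * u = a ∧ 2 * v = b ∧ 2 ∣ a - b := by
  have h1 : (D : ℚ) * (2 * v) ^ 2 = ((4 * n - t ^ 2 : ℤ) : ℚ) := by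
    push_cast
    rw [← ht, ← hn]; ring
  obtain ⟨b, hb⟩ := rat_int_of_sqfree_mul_sq D hD _ _ h1
  refine ⟨t, b, ht, hb, ?_⟩
  rw [hb] at h1
  have h2 : (D : ℤ) * b ^ 2 = 4 * n - t ^ 2 := by exact_mod_cast h1
  obtain ⟨k, hk⟩ : ∃ k : ℤ, (D : ℤ) = 4 * k + 3 := ⟨D / 4, by omega⟩
  rw [hk] at h2
  rcases Int.even_or_odd' t with ⟨x, hx | hx⟩ <;> rcases Int.even_or_odd' b with ⟨y, hy | hy⟩
  · omega
  · exfalso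
    subst hx hy
    ring_nf at h2
    omega
  · exfalso
    subst hx hy
    ring_nf at h2
    omega
  · omega

structure QF (K : Type*) [Field K] [NumberField K] (D : ℕ) (s : K) : Prop where
  md : D % 4 = 3
  sqf : Squarefree D
  gt : 3 < D
  sq : s ^ 2 = -(D : K)
  span : ∀ x : K, ∃ u v : ℚ, x = u + v * s

namespace QF

variable {K : Type*} [Field K] [NumberField K] {D : ℕ} {s : K} (h : QF K D s)

include h

theorem emb_s (φ : K →+* ℂ) : (starRingEnd ℂ) (φ s) = - φ s := by
  have h1 : φ s ^ 2 = -(D : ℂ) := by rw [← map_pow, h.sq]; simp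
  have h2 : (φ s - sqrtNeg D) * (φ s + sqrtNeg D) = 0 := by
    have := sqrtNeg_sq D
    linear_combination h1 - this
  have h3 : (starRingEnd ℂ) (sqrtNeg D) = - sqrtNeg D := by
    simp [sqrtNeg]
  rcases mul_eq_zero.1 h2 with h4 | h4
  · rw [sub_eq_zero.1 h4, h3]
  · rw [eq_neg_of_add_eq_zero_left h4, map_neg, h3]

theorem normSq_emb (φ : K →+* ℂ) (u v : ℚ) :
    φ (u + v * s) * (starRingEnd ℂ) (φ (u + v * s)) = ((u ^ 2 + D * v ^ 2 : ℚ) : ℂ) := by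
  have h1 : φ s ^ 2 = -(D : ℂ) := by rw [← map_pow, h.sq]; simp
  simp only [map_add, map_mul, map_ratCast, h.emb_s φ]
  push_cast
  linear_combination (- (v:ℂ)^2) * h1

theorem coords (x : NumberField.RingOfIntegers K) :
    ∃ a b : ℤ, (x : K) = ((a : ℚ) / 2 : ℚ) + ((b : ℚ) / 2 : ℚ) * s ∧ 2 ∣ a - b := by
  obtain ⟨u, v, huv⟩ := h.span x
  let φ : K →+* ℂ := Classical.choice inferInstance
  have hx : IsIntegral ℤ (φ (x : K)) := x.isIntegral_coe.map φ.toIntAlgHom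
  have hx' := isIntegral_conj hx
  have e1 : φ (x : K) + (starRingEnd ℂ) (φ (x:K)) = ((2 * u : ℚ) : ℂ) := by
    rw [huv]
    simp only [map_add, map_mul, map_ratCast, h.emb_s φ]
    push_cast; ring
  obtain ⟨t, ht⟩ := rat_int_of_isIntegral _ (e1 ▸ hx.add hx')
  have e2 := h.normSq_emb φ u v
  rw [← huv] at e2
  obtain ⟨n, hn⟩ := rat_int_of_isIntegral _ (e2 ▸ hx.mul hx')
  obtain ⟨a, b, ha, hb, hab⟩ := int_of_trace_norm D h.md h.sqf u v t n ht hn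
  refine ⟨a, b, ?_, hab⟩
  rw [huv, ← ha, ← hb]
  congr 2 <;> push_cast <;> ring

theorem indep (u v : ℚ) (huv : (u : K) + v * s = 0) : u = 0 ∧ v = 0 := by
  let φ : K →+* ℂ := Classical.choice inferInstance
  have e2 := h.normSq_emb φ u v
  rw [huv] at e2
  simp only [map_zero, zero_mul] at e2
  have e3 : u ^ 2 + D * v ^ 2 = 0 := by exact_mod_cast e2.symm
  have hD : (0 : ℚ) < D := by have := h.gt; exact_mod_cast (by omega : 0 < D)
  have h1 : 0 ≤ D * v ^ 2 := by positivity
  have h2 : u ^ 2 = 0 := by nlinarith [sq_nonneg u]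
  have h3 : D * v ^ 2 = 0 := by nlinarith [sq_nonneg u]
  refine ⟨by simpa using h2, ?_⟩
  rcases mul_eq_zero.1 h3 with h4 | h4
  · exact absurd h4 hD.ne'
  · simpa using h4

theorem exists_omega : ∃ w : NumberField.RingOfIntegers K, algebraMap _ K w = (1 + s) / 2 ∧
    w ^ 2 = w - (((D + 1) / 4 : ℕ) : NumberField.RingOfIntegers K) := by
  have hc : ((((D + 1) / 4 : ℕ) : K)) = (D + 1) / 4 := by
    have : 4 * ((D + 1) / 4) = D + 1 := by have := h.md; omega
    have h2 : (4 : K) * (((D + 1) / 4 : ℕ) : K) = D + 1 := by exact_mod_cast this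
    rw [eq_div_iff (by norm_num)]
    linear_combination h2
  have hw : ((1 + s) / 2) ^ 2 = (1 + s) / 2 - (((D + 1) / 4 : ℕ) : K) := by
    rw [hc]
    have := h.sq
    linear_combination this / 4
  have hi : IsIntegral ℤ ((1 + s) / 2) := by
    refine ⟨X ^ 2 - (X - C (((D + 1) / 4 : ℕ) : ℤ)), ?_, ?_⟩
    · apply monic_X_pow_sub
      rw [degree_X_sub_C]; norm_num
    · simp only [eval₂_sub, eval₂_pow, eval₂_X, eval₂_C]
      rw [hw, eq_intCast, Int.cast_natCast]; ring
  obtain ⟨w, hw'⟩ : ∃ w : NumberField.RingOfIntegers K, algebraMap _ K w = (1 + s) / 2 :=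
    ⟨⟨(1 + s) / 2, hi⟩, rfl⟩
  refine ⟨w, hw', ?_⟩
  apply NumberField.RingOfIntegers.ext
  change algebraMap _ K _ = algebraMap _ K _
  rw [map_pow, map_sub, map_natCast, hw', hw]

end QF

/-- abstract integral data -/
structure QO (O : Type*) [CommRing O] (D : ℕ) (w : O) : Prop where
  md : D % 4 = 3
  sqf : Squarefree D
  gt : 3 < D
  sq : w ^ 2 = w - (((D + 1) / 4 : ℕ) : O)
  span : ∀ x : O, ∃ m n : ℤ, x = m + n * w
  indep : ∀ m n : ℤ, (m : O) + n * w = 0 → m = 0 ∧ n = 0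

theorem QF.exists_QO {K : Type*} [Field K] [NumberField K] {D : ℕ} {s : K} (h : QF K D s) :
    ∃ w : NumberField.RingOfIntegers K, QO _ D w := by
  obtain ⟨w, hw, hw2⟩ := h.exists_omega
  refine ⟨w, h.md, h.sqf, h.gt, hw2, ?_, ?_⟩
  · intro x
    obtain ⟨a, b, hx, k, hk⟩ := h.coords x
    refine ⟨k, b, ?_⟩
    apply NumberField.RingOfIntegers.ext
    rw [hx]
    change _ = algebraMap _ K _
    rw [map_add, map_mul, map_intCast, map_intCast, hw]
    push_cast
    have : (a : K) = b + 2 * k := by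
      have : a = b + 2 * k := by omega
      rw [this]; push_cast; ring
    rw [this]; ring
  · intro m n hmn
    have h1 : algebraMap _ K (m + n * w : NumberField.RingOfIntegers K) = 0 := by
      rw [hmn, map_zero]
    rw [map_add, map_mul, map_intCast, map_intCast, hw] at h1
    have h2 := h.indep (m + n / 2) (n / 2) (by push_cast; linear_combination h1)
    have h3 : n = 0 := by
      have : (n : ℚ) = 0 := by linarith [h2.2]
      exact_mod_cast this
    subst h3
    refine ⟨?_, rfl⟩
    have : (m : ℚ) = 0 := by simpa using h2.1
    exact_mod_cast this



open Complex Polynomial IntermediateField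

namespace QO
variable {O : Type*} [CommRing O] {D : ℕ} {w : O} (h : QO O D w)

noncomputable def basis (h : QO O D w) : Module.Basis (Fin 2) ℤ O :=
  Module.Basis.mk (v := ![1, w])
    (by
      rw [LinearIndependent.pair_iff]
      intro m n hmn
      apply h.indep
      simpa [zsmul_eq_mul] using hmn)
    (by
      intro x _
      obtain ⟨m, n, rfl⟩ := h.span x
      rw [Matrix.range_cons, Matrix.range_cons, Matrix.range_empty, Set.union_empty, Set.singleton_union, Submodule.mem_span_pair]
      exact ⟨m, n, by simp [zsmul_eq_mul]⟩)

theorem basis_0 : h.basis 0 = 1 := by simp [basis]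
theorem basis_1 : h.basis 1 = w := by simp [basis]

theorem repr_eq (m n : ℤ) : h.basis.repr (m + n * w) = Finsupp.single 0 m + Finsupp.single 1 n := by
  have : (m + n * w : O) = m • h.basis 0 + n • h.basis 1 := by
    rw [basis_0, basis_1]; simp [zsmul_eq_mul]
  rw [this, map_add, map_smul, map_smul, Module.Basis.repr_self, Module.Basis.repr_self]
  simp

include h in
theorem trace_eq (m n : ℤ) : Algebra.trace ℤ O (m + n * w) = 2 * m + n := by
  rw [Algebra.trace_eq_matrix_trace h.basis, Matrix.trace, Fin.sum_univ_two]
  simp only [Matrix.diag, Algebra.leftMulMatrix_apply, LinearMap.toMatrix_apply]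
  simp only [Algebra.coe_lmul_eq_mul, LinearMap.mul_apply', basis_0, basis_1, mul_one]
  have hsq := h.sq
  generalize (D + 1) / 4 = c at hsq
  have e : ((m : O) + n * w) * w = ((- n * (c : ℕ) : ℤ) : O) + ((m + n : ℤ) : O) * w := by
    push_cast
    linear_combination (n : O) * hsq
  rw [e, repr_eq, repr_eq]
  simp
  ring

theorem discr_eq : Algebra.discr ℤ h.basis = - (D : ℤ) := by
  have e : w * w = ((- ((D + 1) / 4 : ℕ) : ℤ) : O) + ((1 : ℤ) : O) * w := by
    have hsq := h.sq
    generalize (D + 1) / 4 = c at hsq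
    push_cast
    linear_combination hsq
  have t1 : Algebra.trace ℤ O 1 = 2 := by simpa using h.trace_eq 1 0
  have t2 : Algebra.trace ℤ O w = 1 := by simpa using h.trace_eq 0 1
  have t3 : Algebra.trace ℤ O (w * w) = 2 * (-((D + 1) / 4 : ℕ) : ℤ) + 1 := by
    rw [e, h.trace_eq]
  rw [Algebra.discr_def, Matrix.det_fin_two]
  simp only [Algebra.traceMatrix_apply, Algebra.traceForm_apply, basis_0, basis_1, mul_one, one_mul, t1, t2, t3]
  have := h.md
  push_cast
  omega

end QO

namespace QF
variable {K : Type*} [Field K] [NumberField K] {D : ℕ} {s : K} (h : QF K D s)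
include h
open NumberField

theorem discr_eq : NumberField.discr K = - (D : ℤ) := by
  obtain ⟨w, hw⟩ := h.exists_QO
  rw [← hw.discr_eq, NumberField.discr_eq_discr]

theorem finrank_eq : Module.finrank ℚ K = 2 := by
  obtain ⟨w, hw⟩ := h.exists_QO
  rw [← NumberField.RingOfIntegers.rank, Module.finrank_eq_card_basis hw.basis]
  simp

theorem nrReal : InfinitePlace.nrRealPlaces K = 0 := by
  classical
  rw [InfinitePlace.nrRealPlaces, Fintype.card_eq_zero_iff]
  refine ⟨fun ⟨v, hv⟩ => ?_⟩
  obtain ⟨φ, hφ, rfl⟩ := hv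
  have h1 := h.emb_s φ
  have h2 : (starRingEnd ℂ) (φ s) = φ s := by
    have := RingHom.congr_fun hφ s
    simpa [ComplexEmbedding.conjugate] using this
  have h3 : φ s = 0 := by
    rw [h2] at h1
    exact self_eq_neg.1 h1
  have h4 : s = 0 := by simpa using h3
  have h5 := h.sq
  rw [h4] at h5
  have : (D : K) = 0 := by simpa using h5.symm
  have := h.gt
  have : D = 0 := by simpa using ‹(D : K) = 0›
  omega

theorem nrComplex : InfinitePlace.nrComplexPlaces K = 1 := by
  have := InfinitePlace.card_add_two_mul_card_eq_rank K
  rw [h.nrReal, h.finrank_eq] at this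
  omega

theorem rank_zero : Units.rank K = 0 := by
  rw [Units.rank, InfinitePlace.card_eq_nrRealPlaces_add_nrComplexPlaces, h.nrReal, h.nrComplex]

theorem regulator_one : Units.regulator K = 1 := by
  classical
  have hE : IsEmpty (Fin (Units.rank K)) := by rw [h.rank_zero]; infer_instance
  have hE' : IsEmpty { w : InfinitePlace K // w ≠ Units.dirichletUnitTheorem.w₀ } :=
    (Units.equivFinRank K).symm.isEmpty
  have hc : Fintype.card { w : InfinitePlace K // w ≠ Units.dirichletUnitTheorem.w₀ } = 0 :=
    Fintype.card_eq_zero_iff.2 hE'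
  rw [Units.regulator_eq_det']
  clear hE'
  rw [Matrix.det_eq_one_of_card_eq_zero hc, abs_one]

theorem torsion_two : Units.torsionOrder K = 2 := by
  have key : ∀ x : (𝓞 K)ˣ, x ∈ Units.torsion K → x = 1 ∨ x = -1 := by
    intro x hx
    obtain ⟨a, b, hab, hd⟩ := h.coords (x : 𝓞 K)
    let φ : K →+* ℂ := Classical.choice inferInstance
    have h1 := h.normSq_emb φ ((a : ℚ) / 2) ((b : ℚ) / 2)
    rw [← hab] at h1
    have h2 : ‖φ ((x : 𝓞 K) : K)‖ = 1 := by
      have := (Units.mem_torsion K).1 hx (InfinitePlace.mk φ)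
      simpa using this
    rw [Complex.mul_conj, Complex.normSq_eq_norm_sq, h2] at h1
    have h3 : (1 : ℚ) = ((a : ℚ) / 2) ^ 2 + D * ((b : ℚ) / 2) ^ 2 := by
      exact_mod_cast h1
    have h4 : a ^ 2 + D * b ^ 2 = 4 := by
      have : (a ^ 2 + D * b ^ 2 : ℚ) = 4 := by linarith
      exact_mod_cast this
    have hD := h.gt
    have hb : b = 0 := by
      by_contra hb
      have : 1 ≤ b ^ 2 := by have : 0 < b ^ 2 := by positivity
                             omega
      have hmd := h.md
      nlinarith [sq_nonneg a, (by omega : (7 : ℤ) ≤ D)]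
    subst hb
    have h5 : (a - 2) * (a + 2) = 0 := by nlinarith
    have h6 : ((x : 𝓞 K) : K) = 1 ∨ ((x : 𝓞 K) : K) = -1 := by
      rcases mul_eq_zero.1 h5 with h6 | h6
      · left; rw [hab, show a = 2 by omega]; norm_num
      · right; rw [hab, show a = -2 by omega]; norm_num
    rcases h6 with h6 | h6
    · left; ext; simpa using h6
    · right; ext; simpa using h6
  have hle : Nat.card (Units.torsion K) ≤ 2 := by
    have : (Units.torsion K : Set (𝓞 K)ˣ) ⊆ ({1, -1} : Set (𝓞 K)ˣ) := by
      intro x hx; simpa using key x hx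
    have h2 := Set.ncard_le_ncard this (by simp)
    have h3 := Set.ncard_insert_le (1 : (𝓞 K)ˣ) {-1}
    rw [Set.ncard_singleton] at h3
    exact h2.trans h3
  have h1 := Units.even_torsionOrder K
  have h2 := Units.torsionOrder_pos K
  have h3 : Units.torsionOrder K ≤ 2 := hle
  obtain ⟨k, hk⟩ := h1
  omega

theorem residue_eq : dedekindZeta_residue K = Real.pi * classNumber K / Real.sqrt D := by
  rw [dedekindZeta_residue_def, h.nrReal, h.nrComplex, h.regulator_one, h.torsion_two, h.discr_eq]
  have : |((-(D:ℤ) : ℤ) : ℝ)| = D := by push_cast; rw [abs_neg]; simp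
  push_cast at this ⊢
  rw [this]
  have : Real.sqrt D ≠ 0 := by
    have := h.gt
    rw [Real.sqrt_ne_zero']; exact_mod_cast (by omega : 0 < D)
  field_simp
end QF



open Complex Polynomial IntermediateField

namespace IdCount
open NumberField Ideal
variable {K : Type*} [Field K] [NumberField K]

noncomputable def cnt (K : Type*) [Field K] [NumberField K] (n : ℕ) : ℕ :=
  Nat.card {I : Ideal (𝓞 K) // absNorm I = n}

theorem cnt_eq (n : ℕ) : cnt K n = Set.ncard {I : Ideal (𝓞 K) | absNorm I = n} := rfl

theorem cnt_one : cnt K 1 = 1 := by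
  rw [cnt_eq, Set.ncard_eq_one]
  refine ⟨1, ?_⟩
  ext I
  simp [absNorm_eq_one_iff]

theorem eq_of_dvd {I J : Ideal (𝓞 K)} (hd : I ∣ J) (hn : absNorm I = absNorm J)
    (h0 : absNorm I ≠ 0) : I = J := by
  obtain ⟨L, rfl⟩ := hd
  rw [map_mul] at hn
  have : absNorm L = 1 := by
    have := Nat.pos_of_ne_zero h0
    nlinarith
  rw [absNorm_eq_one_iff] at this
  rw [this, Ideal.mul_top]

theorem dvd_span (I : Ideal (𝓞 K)) (n : ℕ) (h : absNorm I = n) : I ∣ span {(n : 𝓞 K)} := by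
  rw [Ideal.dvd_span_singleton, ← h]
  exact absNorm_mem I

theorem cnt_mul {m n : ℕ} (hmn : m.Coprime n) (hm : m ≠ 0) (hn : n ≠ 0) :
    cnt K (m * n) = cnt K m * cnt K n := by
  unfold cnt
  rw [← Nat.card_prod]
  symm
  have hcop : ∀ I : Ideal (𝓞 K), (m : 𝓞 K) ∈ I → (n : 𝓞 K) ∈ I → I = ⊤ := by
    intro I h1 h2
    rw [Ideal.eq_top_iff_one]
    have := Nat.isCoprime_iff_coprime.2 hmn
    obtain ⟨a, b, hab⟩ := this
    have h3 : (1 : 𝓞 K) = a * m + b * n := by exact_mod_cast congrArg (Int.cast (R := 𝓞 K)) hab.symm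
    rw [h3]
    exact I.add_mem (I.mul_mem_left _ h1) (I.mul_mem_left _ h2)
  refine Nat.card_eq_of_bijective
    (fun x : {I : Ideal (𝓞 K) // absNorm I = m} × {I : Ideal (𝓞 K) // absNorm I = n} =>
      (⟨x.1.1 * x.2.1, by rw [map_mul, x.1.2, x.2.2]⟩ : {I : Ideal (𝓞 K) // absNorm I = m * n})) ⟨?_, ?_⟩
  · have rec1 : ∀ (m n : ℕ) (_ : ∀ I : Ideal (𝓞 K), (m : 𝓞 K) ∈ I → (n : 𝓞 K) ∈ I → I = ⊤)
        (I J : Ideal (𝓞 K)), absNorm I = m → absNorm J = n →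
        I * J ⊔ span {(m : 𝓞 K)} = I := by
      intro m n hcop I J hI hJ
      have hIm : span {(m : 𝓞 K)} ≤ I := by
        rw [Ideal.span_singleton_le_iff_mem, ← hI]; exact absNorm_mem I
      apply le_antisymm
      · exact sup_le Ideal.mul_le_left hIm
      · have h1 : J ⊔ span {(m : 𝓞 K)} = ⊤ := by
          apply hcop
          · exact Ideal.mem_sup_right (Ideal.mem_span_singleton_self _)
          · apply Ideal.mem_sup_left; rw [← hJ]; exact absNorm_mem J
        calc I = I * (J ⊔ span {(m : 𝓞 K)}) := by rw [h1, Ideal.mul_top]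
          _ = I * J ⊔ I * span {(m : 𝓞 K)} := Ideal.mul_sup _ _ _
          _ ≤ _ := sup_le_sup le_rfl Ideal.mul_le_right
    rintro ⟨⟨I, hI⟩, ⟨J, hJ⟩⟩ ⟨⟨I', hI'⟩, ⟨J', hJ'⟩⟩ heq
    simp only [Subtype.mk.injEq] at heq
    have e1 : I = I' := by
      rw [← rec1 m n hcop I J hI hJ, heq, rec1 m n hcop I' J' hI' hJ']
    have e2 : J = J' := by
      rw [← rec1 n m (fun I a b => hcop I b a) J I hJ hI, mul_comm J I, heq, mul_comm I' J',
        rec1 n m (fun I a b => hcop I b a) J' I' hJ' hI']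
    simp [e1, e2]
  · rintro ⟨I, hI⟩
    set A := I ⊔ span {(m : 𝓞 K)} with hA
    set B := I ⊔ span {(n : 𝓞 K)} with hB
    have hmnI : ((m : 𝓞 K) * n) ∈ I := by
      have := absNorm_mem I
      rw [hI] at this; push_cast at this; exact this
    have hAB : A * B = I := by
      apply le_antisymm
      · rw [hA, hB, Ideal.sup_mul, Ideal.mul_sup, Ideal.mul_sup]
        refine sup_le (sup_le Ideal.mul_le_left Ideal.mul_le_left) (sup_le Ideal.mul_le_right ?_)
        rw [Ideal.span_singleton_mul_span_singleton, Ideal.span_singleton_le_iff_mem]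
        exact hmnI
      · rw [Ideal.mul_eq_inf_of_coprime]
        · exact le_inf le_sup_left le_sup_left
        · apply hcop
          · exact Ideal.mem_sup_left (Ideal.mem_sup_right (Ideal.mem_span_singleton_self _))
          · exact Ideal.mem_sup_right (Ideal.mem_sup_right (Ideal.mem_span_singleton_self _))
    have hN : absNorm A * absNorm B = m * n := by rw [← map_mul, hAB, hI]
    have hpow : ∀ (m : ℕ) (J : Ideal (𝓞 K)), absNorm (J ⊔ span {(m : 𝓞 K)}) ∣
        m ^ (Module.finrank ℤ (𝓞 K)) := by
      intro m J
      have h1 : J ⊔ span {(m : 𝓞 K)} ∣ span {(m : 𝓞 K)} := Ideal.dvd_iff_le.2 le_sup_right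
      have h2 := map_dvd absNorm h1
      rwa [absNorm_span_natCast] at h2
    have hc1 : Nat.Coprime (absNorm A) n :=
      Nat.Coprime.coprime_dvd_left (hpow m I) (Nat.Coprime.pow_left _ hmn)
    have hc2 : Nat.Coprime (absNorm B) m :=
      Nat.Coprime.coprime_dvd_left (hpow n I) (Nat.Coprime.pow_left _ hmn.symm)
    have hd1 : absNorm A ∣ m := hc1.dvd_of_dvd_mul_right (hN ▸ Dvd.intro _ rfl)
    have hd2 : absNorm B ∣ n := hc2.dvd_of_dvd_mul_left (hN ▸ Dvd.intro_left _ rfl)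
    have hl1 := Nat.le_of_dvd (Nat.pos_of_ne_zero hm) hd1
    have hl2 := Nat.le_of_dvd (Nat.pos_of_ne_zero hn) hd2
    have he1 : absNorm A = m := by
      by_contra hne
      have : absNorm A < m := lt_of_le_of_ne hl1 hne
      have hn0 := Nat.pos_of_ne_zero hn
      nlinarith
    have he2 : absNorm B = n := by
      rw [he1] at hN
      exact Nat.eq_of_mul_eq_mul_left (Nat.pos_of_ne_zero hm) hN
    exact ⟨⟨⟨A, he1⟩, ⟨B, he2⟩⟩, by simp [hAB]⟩

variable (h2 : Module.finrank ℚ K = 2) {p : ℕ} (hp : p.Prime)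

include h2 in
theorem norm_p : absNorm (span {(p : 𝓞 K)}) = p ^ 2 := by
  rw [absNorm_span_natCast, RingOfIntegers.rank, h2]

include hp in
theorem prime_of_norm {P : Ideal (𝓞 K)} (hP : absNorm P = p) : Prime P := by
  have h1 : P.IsPrime := isPrime_of_irreducible_absNorm (by rw [hP]; exact hp)
  refine Ideal.prime_of_isPrime ?_ h1
  rintro rfl
  simp at hP
  exact hp.ne_zero hP.symm

include h2 hp in
theorem cofactor {P : Ideal (𝓞 K)} (hP : absNorm P = p) :
    ∃ Q : Ideal (𝓞 K), absNorm Q = p ∧ span {(p : 𝓞 K)} = P * Q := by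
  obtain ⟨Q, hQ⟩ := dvd_span P p hP
  refine ⟨Q, ?_, hQ⟩
  have := congrArg absNorm hQ
  rw [norm_p h2, map_mul, hP, sq] at this
  exact (Nat.eq_of_mul_eq_mul_left hp.pos this).symm

theorem dvd_span_pow {k : ℕ} {I : Ideal (𝓞 K)} (hI : absNorm I = p ^ k) :
    I ∣ (span {(p : 𝓞 K)}) ^ k := by
  have := dvd_span I _ hI
  rw [Ideal.span_singleton_pow]
  exact_mod_cast this

theorem eq_pow_of_dvd {P I : Ideal (𝓞 K)} (hP : Prime P) {k : ℕ} (h : I ∣ P ^ k) :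
    ∃ i, I = P ^ i := by
  obtain ⟨i, _, hi⟩ := (dvd_prime_pow hP k).1 h
  exact ⟨i, associated_iff_eq.1 hi⟩

include h2 hp in
theorem cnt_inert (h0 : cnt K p = 0) (k : ℕ) : cnt K (p ^ k) = if Even k then 1 else 0 := by
  have hno : ∀ I : Ideal (𝓞 K), absNorm I ≠ p := by
    intro I hI
    have hfin := finite_setOfPred_absNorm_eq (S := 𝓞 K) p
    rw [cnt_eq, Set.ncard_eq_zero hfin] at h0
    have : I ∈ (∅ : Set (Ideal (𝓞 K))) := h0 ▸ hI
    exact this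
  have hprime : Prime (span {(p : 𝓞 K)}) := by
    have hne : span {(p : 𝓞 K)} ≠ ⊤ := by
      intro h
      have := norm_p (p := p) h2
      rw [h, absNorm_top] at this
      have := hp.one_lt
      nlinarith
    obtain ⟨M, hM, hle⟩ := Ideal.exists_le_maximal _ hne
    have hd : M ∣ span {(p : 𝓞 K)} := Ideal.dvd_iff_le.2 hle
    have h3 := map_dvd absNorm hd
    rw [norm_p h2, Nat.dvd_prime_pow hp] at h3
    obtain ⟨i, hi, hMi⟩ := h3
    have : i = 2 := by
      interval_cases i
      · exfalso; rw [pow_zero, absNorm_eq_one_iff] at hMi; exact hM.ne_top hMi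
      · exact absurd (by simpa using hMi) (hno M)
      · rfl
    subst this
    have : M = span {(p : 𝓞 K)} := eq_of_dvd hd (by rw [hMi, norm_p h2])
      (by rw [hMi]; exact pow_ne_zero _ hp.ne_zero)
    rw [← this]
    refine Ideal.prime_of_isPrime ?_ hM.isPrime
    rintro rfl
    rw [absNorm_bot] at hMi
    exact pow_ne_zero 2 hp.ne_zero hMi.symm
  have key : ∀ I : Ideal (𝓞 K), absNorm I = p ^ k → ∃ i, I = (span {(p : 𝓞 K)}) ^ i ∧ k = 2 * i := by
    intro I hI
    obtain ⟨i, rfl⟩ := eq_pow_of_dvd hprime (dvd_span_pow hI)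
    refine ⟨i, rfl, ?_⟩
    rw [map_pow, norm_p h2, ← pow_mul] at hI
    exact (Nat.pow_right_injective hp.two_le hI).symm
  rw [cnt_eq]
  split_ifs with hk
  · obtain ⟨j, hj⟩ := hk
    rw [Set.ncard_eq_one]
    refine ⟨(span {(p : 𝓞 K)}) ^ j, ?_⟩
    ext I
    simp only [Set.mem_ofPred_eq, Set.mem_singleton_iff]
    constructor
    · intro hI
      obtain ⟨i, hi, hki⟩ := key I hI
      rw [hi, show i = j by omega]
    · rintro rfl
      rw [map_pow, norm_p h2, ← pow_mul, hj, two_mul]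
  · rw [Set.ncard_eq_zero (finite_setOfPred_absNorm_eq (S := 𝓞 K) _)]
    ext I
    simp only [Set.mem_ofPred_eq, Set.mem_empty_iff_false, iff_false]
    intro hI
    obtain ⟨i, _, hki⟩ := key I hI
    exact hk ⟨i, by omega⟩

include h2 hp in
theorem cnt_ram (h1 : cnt K p = 1) (k : ℕ) : cnt K (p ^ k) = 1 := by
  rw [cnt_eq, Set.ncard_eq_one] at h1
  obtain ⟨P, hPs⟩ := h1
  have hP : absNorm P = p := by
    have : P ∈ ({P} : Set (Ideal (𝓞 K))) := rfl
    rw [← hPs] at this; exact this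
  have huniq : ∀ Q : Ideal (𝓞 K), absNorm Q = p → Q = P := by
    intro Q hQ
    have : Q ∈ {I : Ideal (𝓞 K) | absNorm I = p} := hQ
    rw [hPs] at this; exact this
  obtain ⟨Q, hQ, hPQ⟩ := cofactor h2 hp hP
  rw [huniq Q hQ] at hPQ
  rw [cnt_eq, Set.ncard_eq_one]
  refine ⟨P ^ k, ?_⟩
  ext I
  simp only [Set.mem_ofPred_eq, Set.mem_singleton_iff]
  constructor
  · intro hI
    have hd := dvd_span_pow hI
    rw [hPQ, ← sq, ← pow_mul] at hd
    obtain ⟨i, rfl⟩ := eq_pow_of_dvd (prime_of_norm hp hP) hd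
    rw [map_pow, hP] at hI
    rw [Nat.pow_right_injective hp.two_le hI]
  · rintro rfl
    rw [map_pow, hP]

include h2 hp in
theorem cnt_split (h1 : cnt K p = 2) (k : ℕ) : cnt K (p ^ k) = k + 1 := by
  rw [cnt_eq, Set.ncard_eq_two] at h1
  obtain ⟨P, Q, hne, hPs⟩ := h1
  have hP : absNorm P = p := by
    have : P ∈ ({P, Q} : Set (Ideal (𝓞 K))) := by simp
    rw [← hPs] at this; exact this
  have hQ : absNorm Q = p := by
    have : Q ∈ ({P, Q} : Set (Ideal (𝓞 K))) := by simp
    rw [← hPs] at this; exact this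
  have hPp := prime_of_norm hp hP
  have hQp := prime_of_norm hp hQ
  obtain ⟨J, hJ, hPJ⟩ := cofactor h2 hp hP
  have hQJ : Q = J := by
    have hd : Q ∣ P * J := hPJ ▸ dvd_span Q p hQ
    rcases hQp.dvd_or_dvd hd with h | h
    · exact absurd (eq_of_dvd h (by rw [hP, hQ]) (by rw [hQ]; exact hp.ne_zero)).symm hne
    · exact eq_of_dvd h (by rw [hJ, hQ]) (by rw [hQ]; exact hp.ne_zero)
  rw [← hQJ] at hPJ
  have hset : {I : Ideal (𝓞 K) | absNorm I = p ^ k} =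
      ((Finset.range (k + 1)).image (fun i => P ^ i * Q ^ (k - i)) : Set (Ideal (𝓞 K))) := by
    ext I
    simp only [Set.mem_ofPred_eq, Finset.coe_image, Finset.coe_range, Set.mem_image, Set.mem_Iio]
    constructor
    · intro hI
      have hd := dvd_span_pow hI
      rw [hPJ, mul_pow] at hd
      obtain ⟨A, B, hA, hB, rfl⟩ := exists_dvd_and_dvd_of_dvd_mul hd
      obtain ⟨i, rfl⟩ := eq_pow_of_dvd hPp hA
      obtain ⟨j, rfl⟩ := eq_pow_of_dvd hQp hB
      rw [map_mul, map_pow, map_pow, hP, hQ, ← pow_add] at hI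
      have := Nat.pow_right_injective hp.two_le hI
      exact ⟨i, by omega, by rw [show k - i = j by omega]⟩
    · rintro ⟨i, hi, rfl⟩
      rw [map_mul, map_pow, map_pow, hP, hQ, ← pow_add]
      congr 1; omega
  rw [cnt_eq, hset, Set.ncard_coe_finset, Finset.card_image_of_injOn,
    Finset.card_range]
  have hlt : ∀ i j : ℕ, i < j → j ≤ k → P ^ i * Q ^ (k - i) ≠ P ^ j * Q ^ (k - j) := by
    intro i j hij hj heq
    have : P ^ j = P ^ i * P ^ (j - i) := by rw [← pow_add]; congr 1; omega
    rw [this, mul_assoc] at heq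
    have h3 := mul_left_cancel₀ (pow_ne_zero i hPp.ne_zero) heq
    have h4 : P ∣ Q ^ (k - i) := by
      rw [h3]
      exact Dvd.dvd.mul_right (dvd_pow_self _ (by omega)) _
    have h5 := hPp.dvd_of_dvd_pow h4
    exact hne (eq_of_dvd h5 (by rw [hP, hQ]) (by rw [hP]; exact hp.ne_zero))
  intro i hi j hj heq
  simp only [Finset.coe_range, Set.mem_Iio] at hi hj
  rcases lt_trichotomy i j with h | h | h
  · exact absurd heq (hlt i j h (by omega))
  · exact h
  · exact absurd heq.symm (hlt j i h (by omega))

end IdCount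



open Complex Polynomial IntermediateField

theorem zmod2_aux : ∀ b : ZMod 2, ¬ (b ^ 2 = b - 1) := by decide

namespace QO
variable {O : Type*} [CommRing O] {D : ℕ} {w : O} (h : QO O D w)

theorem exists_hom {R : Type*} [CommRing R] (h : QO O D w) (b : R)
    (hb : b ^ 2 = b - (((D + 1) / 4 : ℕ) : R)) : ∃ φ : O →+* R, φ w = b := by
  let f : O →ₗ[ℤ] R := h.basis.constr ℤ ![1, b]
  have f0 : f 1 = 1 := by
    have := h.basis.constr_basis ℤ ![(1 : R), b] 0
    rwa [h.basis_0] at this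
  have f1 : f w = b := by
    have := h.basis.constr_basis ℤ ![(1 : R), b] 1
    rwa [h.basis_1] at this
  have fc : ∀ m n : ℤ, f (m + n * w) = m + n * b := by
    intro m n
    have : (m + n * w : O) = m • 1 + n • w := by simp [zsmul_eq_mul]
    rw [this, map_add, map_smul, map_smul, f0, f1]
    simp [zsmul_eq_mul]
  refine ⟨{ toFun := f, map_one' := f0, map_zero' := map_zero f, map_add' := map_add f, map_mul' := ?_ }, f1⟩
  intro x y
  obtain ⟨m, n, rfl⟩ := h.span x
  obtain ⟨m', n', rfl⟩ := h.span y
  have hsq := h.sq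
  generalize (D + 1) / 4 = c at hsq hb
  have e : ((m : O) + n * w) * (m' + n' * w) =
      ((m * m' - n * n' * c : ℤ) : O) + ((m * n' + m' * n + n * n' : ℤ) : O) * w := by
    push_cast
    linear_combination (n * n' : O) * hsq
  rw [e, fc, fc, fc]
  push_cast
  linear_combination (- n * n' : R) * hb

end QO

namespace QF
variable {K : Type*} [Field K] [NumberField K] {D : ℕ} {s : K} (h : QF K D s)
include h
open NumberField Ideal IdCount

theorem cnt_prime_roots {p : ℕ} (hp : p.Prime) :
    cnt K p = Set.ncard {b : ZMod p | b ^ 2 = b - (((D + 1) / 4 : ℕ) : ZMod p)} := by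
  have : Fact p.Prime := ⟨hp⟩
  obtain ⟨w, hw⟩ := h.exists_QO
  have hex := fun (b : {b : ZMod p | b ^ 2 = b - (((D + 1) / 4 : ℕ) : ZMod p)}) => hw.exists_hom b.1 b.2
  choose φ hφ using hex
  have hnorm : ∀ b, absNorm (RingHom.ker (φ b)) = p := by
    intro b
    have hsurj : Function.Surjective (φ b) := ZMod.ringHom_surjective _
    rw [absNorm_apply, Submodule.cardQuot_apply]
    rw [Nat.card_congr (RingHom.quotientKerEquivOfSurjective hsurj).toEquiv, Nat.card_zmod]
  rw [cnt, ← Nat.card_coe_set_eq]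
  symm
  refine Nat.card_eq_of_bijective (fun b => (⟨RingHom.ker (φ b), hnorm b⟩ : {I : Ideal (𝓞 K) // absNorm I = p})) ⟨?_, ?_⟩
  · intro b b' hbb
    simp only [Subtype.mk.injEq] at hbb
    obtain ⟨n, hn⟩ := ZMod.intCast_surjective b.1
    have h1 : w - (n : 𝓞 K) ∈ RingHom.ker (φ b) := by
      rw [RingHom.mem_ker, map_sub, hφ, map_intCast, hn, sub_self]
    rw [hbb, RingHom.mem_ker, map_sub, hφ, map_intCast, hn, sub_eq_zero] at h1
    exact Subtype.ext h1.symm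
  · rintro ⟨I, hI⟩
    have hcard : Nat.card (𝓞 K ⧸ I) = p := by
      rw [← hI, absNorm_apply, Submodule.cardQuot_apply]
    have : Finite (𝓞 K ⧸ I) := Nat.finite_of_card_ne_zero (by rw [hcard]; exact hp.ne_zero)
    have : Fintype (𝓞 K ⧸ I) := Fintype.ofFinite _
    let e := ZMod.ringEquivOfPrime (𝓞 K ⧸ I) hp (by rw [← Nat.card_eq_fintype_card, hcard])
    let ψ : 𝓞 K →+* ZMod p := (e.symm : (𝓞 K ⧸ I) →+* ZMod p).comp (Ideal.Quotient.mk I)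
    have hker : RingHom.ker ψ = I := by
      ext x
      rw [RingHom.mem_ker]
      simp only [ψ, RingHom.comp_apply, RingHom.coe_coe, map_eq_zero_iff e.symm e.symm.injective]
      exact Ideal.Quotient.eq_zero_iff_mem
    have hroot : (ψ w) ^ 2 = ψ w - (((D + 1) / 4 : ℕ) : ZMod p) := by
      rw [← map_pow, hw.sq, map_sub, map_natCast]
    refine ⟨⟨ψ w, hroot⟩, ?_⟩
    apply Subtype.ext
    change RingHom.ker _ = I
    rw [← hker]
    congr 1
    ext x
    obtain ⟨m, n, rfl⟩ := hw.span x
    simp [hφ]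

theorem cnt_prime {p : ℕ} (hp : p.Prime) : (cnt K p : ℤ) = 1 + jacobiSym p D := by
  have : Fact p.Prime := ⟨hp⟩
  rw [h.cnt_prime_roots hp]
  have hmd := h.md
  rcases hp.eq_two_or_odd' with rfl | hodd
  · have hJ : jacobiSym (2 : ℕ) D = ZMod.χ₈ D := by
      exact jacobiSym.at_two (Nat.odd_iff.2 (by omega))
    rw [hJ, ZMod.χ₈_nat_eq_if_mod_eight]
    have hD : D % 8 = 3 ∨ D % 8 = 7 := by omega
    rcases hD with hD | hD
    · have hc : ((((D + 1) / 4 : ℕ)) : ZMod 2) = 1 := by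
        have : ((D + 1) / 4) % 2 = 1 := by omega
        rw [← ZMod.natCast_mod, this]; rfl
      rw [hc]
      have : {b : ZMod 2 | b ^ 2 = b - 1} = ∅ := by
        exact Set.eq_empty_iff_forall_notMem.2 zmod2_aux
      rw [this]; simp [hD, show D % 2 = 1 by omega]
    · have hc : ((((D + 1) / 4 : ℕ)) : ZMod 2) = 0 := by
        have : ((D + 1) / 4) % 2 = 0 := by omega
        rw [← ZMod.natCast_mod, this]; rfl
      rw [hc]
      have : {b : ZMod 2 | b ^ 2 = b - 0} = Set.univ := by
        ext b; fin_cases b <;> simp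
      rw [this, Set.ncard_univ]; simp [hD, show D % 2 = 1 by omega]
  · have hp2 : p ≠ 2 := by rintro rfl; revert hodd; decide
    have hJ : jacobiSym (p : ℕ) D = legendreSym p (-(D : ℤ)) := by
      rw [jacobiSym.legendreSym.to_jacobiSym p (-(D : ℤ))]
      have hDodd : Odd D := Nat.odd_iff.2 (by omega)
      rw [neg_eq_neg_one_mul, jacobiSym.mul_left, jacobiSym.at_neg_one hodd]
      rcases (Nat.odd_mod_four_iff.1 (Nat.odd_iff.1 hodd)) with hp4 | hp4
      · rw [ZMod.χ₄_nat_one_mod_four hp4, one_mul]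
        exact jacobiSym.quadratic_reciprocity_one_mod_four hp4 hDodd
      · rw [ZMod.χ₄_nat_three_mod_four hp4]
        rw [jacobiSym.quadratic_reciprocity_three_mod_four hp4 hmd]; ring
    rw [hJ]
    have h2 : (2 : ZMod p) ≠ 0 := by
      have h1 := (ZMod.natCast_eq_zero_iff 2 p).not.2 (fun hd => hp2 ((Nat.prime_dvd_prime_iff_eq hp Nat.prime_two).1 hd))
      exact_mod_cast h1
    have hcnt := legendreSym.card_sqrts p hp2 (-(D : ℤ))
    rw [add_comm (1 : ℤ) (legendreSym p _), ← hcnt]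
    rw [← Set.ncard_eq_toFinset_card']
    congr 1
    have hc : (4 : ZMod p) * (((D + 1) / 4 : ℕ) : ZMod p) = D + 1 := by
      have : 4 * ((D + 1) / 4) = D + 1 := by omega
      exact_mod_cast congrArg (Nat.cast (R := ZMod p)) this
    refine Set.ncard_congr (fun b _ => 2 * b - 1) ?_ ?_ ?_
    · intro b hb
      simp only [Set.mem_ofPred_eq] at hb ⊢
      push_cast
      linear_combination 4 * hb - hc
    · intro a b _ _ hab
      have : 2 * (a - b) = 0 := by linear_combination hab
      rcases mul_eq_zero.1 this with h' | h'
      · exact absurd h' h2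
      · exact sub_eq_zero.1 h'
    · intro x hx
      simp only [Set.mem_ofPred_eq] at hx
      refine ⟨(x + 1) / 2, ?_, ?_⟩
      · simp only [Set.mem_ofPred_eq]
        push_cast at hx
        have h4 : (4 : ZMod p) ≠ 0 := by
          rw [show (4 : ZMod p) = 2 * 2 by norm_num]; exact mul_ne_zero h2 h2
        apply mul_left_cancel₀ h4
        rw [div_pow, mul_sub, hc]
        field_simp
        linear_combination 4 * hx
      · field_simp; ring

theorem cnt_eq_sum {n : ℕ} (hn : n ≠ 0) :
    (cnt K n : ℤ) = ∑ d ∈ n.divisors, jacobiSym d D := by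
  induction n using Nat.recOnPosPrimePosCoprime with
  | zero => exact absurd rfl hn
  | one => simp [cnt_one]
  | prime_pow p k hp hk =>
    rw [Nat.sum_divisors_prime_pow hp]
    simp only [Nat.cast_pow, jacobiSym.pow_left]
    have hc := h.cnt_prime hp
    have htri : jacobiSym p D = 0 ∨ jacobiSym p D = 1 ∨ jacobiSym p D = -1 := jacobiSym.trichotomy _ _
    rcases htri with hj | hj | hj
    · rw [hj] at hc ⊢
      rw [cnt_ram h.finrank_eq hp (by omega), Finset.sum_range_succ']
      simp
    · rw [hj] at hc ⊢
      rw [cnt_split h.finrank_eq hp (by omega)]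
      simp
    · rw [hj] at hc ⊢
      rw [cnt_inert h.finrank_eq hp (by omega), neg_one_geom_sum]
      by_cases hk2 : Even k
      · simp [hk2, Nat.even_add_one]
      · simp [hk2, Nat.even_add_one]
  | coprime a b ha hb hab iha ihb =>
    rw [cnt_mul hab (by omega) (by omega)]
    push_cast
    rw [iha (by omega), ihb (by omega), Nat.divisors_mul, Finset.mul_def,
      Finset.sum_image (Nat.Coprime.mul_injOn_divisors hab)]
    rw [Finset.sum_mul_sum, ← Finset.sum_product']
    refine Finset.sum_congr rfl fun x _ => ?_
    push_cast
    rw [jacobiSym.mul_left]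

end QF



open Complex Polynomial IntermediateField

theorem rpow_diff_bound {c u v s : ℝ} (hs : 1 < s) (hs2 : s < 2) (hc : 0 < c)
    (hcu : c ≤ u) (huv : u ≤ v) (hvu : v - u ≤ 1) :
    |u ^ (-s) - v ^ (-s)| ≤ 2 * c ^ (-s - 1) := by
  have hu : 0 < u := by linarith
  have hv : 0 < v := by linarith
  have h1 : v ^ (-s) ≤ u ^ (-s) := Real.rpow_le_rpow_of_nonpos hu huv (by linarith)
  rw [abs_of_nonneg (by linarith)]
  have hb := one_add_mul_self_le_rpow_one_add (s := u / v - 1) (by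
    have : 0 ≤ u / v := by positivity
    linarith) hs.le
  rw [add_sub_cancel, Real.div_rpow hu.le hv.le] at hb
  have e : u ^ (-s) - v ^ (-s) = u ^ (-s) * (1 - u ^ s / v ^ s) := by
    have hus : u ^ s ≠ 0 := (Real.rpow_pos_of_pos hu s).ne'
    have hvs : v ^ s ≠ 0 := (Real.rpow_pos_of_pos hv s).ne'
    rw [Real.rpow_neg hu.le, Real.rpow_neg hv.le]
    field_simp
  have h2 : 1 - u / v ≤ u⁻¹ := by
    rw [one_sub_div hv.ne', div_le_iff₀ hv, ← div_eq_inv_mul, le_div_iff₀ hu]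
    nlinarith
  have hpos : 0 < u ^ (-s) := Real.rpow_pos_of_pos hu _
  have huv1 : 0 ≤ 1 - u / v := by
    rw [sub_nonneg, div_le_one hv]; exact huv
  have h3 : u ^ (-s) - v ^ (-s) ≤ u ^ (-s) * (2 * u⁻¹) := by
    rw [e]
    apply mul_le_mul_of_nonneg_left _ hpos.le
    nlinarith
  have h4 : u ^ (-s) * (2 * u⁻¹) = 2 * u ^ (-s - 1) := by
    rw [Real.rpow_sub hu, Real.rpow_one]; ring
  have h5 : u ^ (-s - 1) ≤ c ^ (-s - 1) := Real.rpow_le_rpow_of_nonpos hc hcu (by linarith)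
  linarith

theorem rpow_diff_bound' {c u v s : ℝ} (hs : 1 < s) (hs2 : s < 2) (hc : 0 < c)
    (hcu : c ≤ u) (hcv : c ≤ v) (huv : |u - v| ≤ 1) :
    |u ^ (-s) - v ^ (-s)| ≤ 2 * c ^ (-s - 1) := by
  have := abs_le.1 huv
  rcases le_total u v with h | h
  · exact rpow_diff_bound hs hs2 hc hcu h (by linarith)
  · rw [abs_sub_comm]
    exact rpow_diff_bound hs hs2 hc hcv h (by linarith)

open Filter Topology HurwitzZeta in
theorem hurwitzOdd_one {x : ℝ} (hx0 : 0 < x) (hx1 : x < 1) :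
    hurwitzZetaOdd x 1 = (Real.pi / 2 : ℂ) * Complex.cot (Real.pi * x) := by
  set c := min x (1 - x) with hcdef
  have hc : 0 < c := lt_min hx0 (by linarith)
  have hc1 : c ≤ 1 := (min_le_left _ _).trans hx1.le
  have hcx : c ≤ x := min_le_left _ _
  have hcx' : c ≤ 1 - x := min_le_right _ _
  let T : ℝ → ℕ → ℝ := fun s m => ((m + x) ^ (-s) - (m + 1 - x) ^ (-s)) / 2
  have hbound : ∀ s : ℝ, 1 < s → s < 2 → ∀ m : ℕ, |T s m| ≤ c ^ (-3 : ℝ) * (1 / ((m + 1 : ℕ) : ℝ) ^ 2) := by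
    intro s hs hs2 m
    have hm : (0 : ℝ) ≤ m := Nat.cast_nonneg m
    have hcm : 0 < c * (m + 1) := by positivity
    have h := rpow_diff_bound' (c := c * (m + 1)) (u := m + x) (v := m + 1 - x) hs hs2 hcm
      (by nlinarith) (by nlinarith) (by rw [abs_le]; constructor <;> linarith)
    have h1 : |T s m| ≤ (c * (m + 1)) ^ (-s - 1) := by
      simp only [T]
      rw [abs_div, abs_two]; linarith
    refine h1.trans ?_
    rw [Real.mul_rpow hc.le (by positivity)]
    apply mul_le_mul
    · exact Real.rpow_le_rpow_of_exponent_ge hc hc1 (by linarith)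
    · have : ((m : ℝ) + 1) ^ (-s - 1) ≤ ((m : ℝ) + 1) ^ (-2 : ℝ) :=
        Real.rpow_le_rpow_of_exponent_le (by linarith) (by linarith)
      refine this.trans (le_of_eq ?_)
      rw [Real.rpow_neg (by positivity)]
      push_cast
      norm_num
    · positivity
    · positivity
  have hsum : Summable (fun m : ℕ => c ^ (-3 : ℝ) * (1 / ((m + 1 : ℕ) : ℝ) ^ 2)) := by
    apply Summable.mul_left
    exact (summable_nat_add_iff (f := fun n : ℕ => 1 / (n : ℝ) ^ 2) 1).2 (Real.summable_one_div_nat_pow.2 (by norm_num))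
  have hcontT : ∀ m : ℕ, Tendsto (fun s => T s m) (𝓝[>] 1) (𝓝 (T 1 m)) := by
    intro m
    have hm : (0 : ℝ) ≤ m := Nat.cast_nonneg m
    have : ContinuousAt (fun s => T s m) 1 := by
      simp only [T]
      have h1 : (m + x : ℝ) ≠ 0 := by linarith
      have h2 : (m + 1 - x : ℝ) ≠ 0 := by linarith
      refine ContinuousAt.div_const (ContinuousAt.sub ?_ ?_) 2
      · exact (Real.continuousAt_const_rpow h1).comp continuous_neg.continuousAt
      · exact (Real.continuousAt_const_rpow h2).comp continuous_neg.continuousAt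
    exact this.tendsto.mono_left nhdsWithin_le_nhds
  have hev : ∀ᶠ s : ℝ in 𝓝[>] 1, 1 < s ∧ s < 2 := by
    refine Filter.Eventually.and self_mem_nhdsWithin ?_
    exact nhdsWithin_le_nhds (Iio_mem_nhds (by norm_num))
  have hlim : Tendsto (fun s => ∑' m, T s m) (𝓝[>] 1) (𝓝 (∑' m, T 1 m)) := by
    refine tendsto_tsum_of_dominated_convergence hsum hcontT ?_
    filter_upwards [hev] with s hs m
    exact hbound s hs.1 hs.2 m
  have hsum1 : Summable (T 1) := by
    refine Summable.of_norm_bounded hsum fun m => ?_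
    refine le_of_tendsto (hcontT m).norm ?_
    filter_upwards [hev] with s hs
    exact hbound s hs.1 hs.2 m
  -- left limit
  have hL : Tendsto (fun s : ℝ => hurwitzZetaOdd x (s : ℂ)) (𝓝[>] 1) (𝓝 (hurwitzZetaOdd x 1)) := by
    have h1 : ContinuousAt (fun s : ℝ => hurwitzZetaOdd (x : UnitAddCircle) (s : ℂ)) 1 :=
      ((differentiable_hurwitzZetaOdd (x : UnitAddCircle)).continuous.comp continuous_ofReal).continuousAt
    have := h1.tendsto
    simp only [ofReal_one] at this
    exact this.mono_left nhdsWithin_le_nhds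
  have heq : ∀ᶠ s : ℝ in 𝓝[>] 1, ((∑' m, T s m : ℝ) : ℂ) = hurwitzZetaOdd x (s : ℂ) := by
    filter_upwards [hev] with s hs
    rw [← (hasSum_nat_hurwitzZetaOdd_of_mem_Icc (a := x) ⟨hx0.le, hx1.le⟩ (s := s) (by simpa using hs.1)).tsum_eq,
      Complex.ofReal_tsum]
    congr 1
    ext m
    have hm : (0 : ℝ) ≤ m := Nat.cast_nonneg m
    simp only [T]
    push_cast
    rw [Complex.ofReal_cpow (by linarith), Complex.ofReal_cpow (by linarith)]
    push_cast
    rw [Complex.cpow_neg, Complex.cpow_neg]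
    simp
  have hlim2 : Tendsto (fun s => ((∑' m, T s m : ℝ) : ℂ)) (𝓝[>] 1) (𝓝 ((∑' m, T 1 m : ℝ) : ℂ)) :=
    (continuous_ofReal.tendsto _).comp hlim
  have huniq := tendsto_nhds_unique (hlim2.congr' heq) hL
  rw [← huniq]
  -- cot
  have hxc : (x : ℂ) ∈ Complex.integerComplement := by
    rw [Complex.mem_integerComplement_iff]
    rintro ⟨n, hn⟩
    have hn' : (n : ℝ) = x := by exact_mod_cast hn
    rw [← hn'] at hx0 hx1
    have h1 : (0 : ℤ) < n := by exact_mod_cast hx0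
    have h2 : n < (1 : ℤ) := by exact_mod_cast hx1
    omega
  have hcot := tendsto_logDeriv_euler_cot_sub hxc
  have hpart : ∀ M : ℕ, ((∑ m ∈ Finset.range M, T 1 m : ℝ) : ℂ) =
      (1 / x + ∑ j ∈ Finset.range M, cotTerm x j - 1 / (x + M)) / 2 := by
    intro M
    induction M with
    | zero => simp
    | succ M ih =>
      rw [Finset.sum_range_succ, Finset.sum_range_succ, Complex.ofReal_add, ih]
      simp only [T, cotTerm]
      have hM : (0 : ℝ) ≤ M := Nat.cast_nonneg M
      rw [Real.rpow_neg_one, Real.rpow_neg_one]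
      have e : ((x : ℂ) - (M + 1)) = - ((M : ℂ) + 1 - x) := by ring
      rw [e]
      push_cast
      rw [one_div_neg_eq_neg_one_div]
      simp only [one_div]
      ring
  have h0 : Tendsto (fun M : ℕ => 1 / ((x : ℂ) + M)) atTop (𝓝 0) := by
    have : Tendsto (fun M : ℕ => 1 / (x + M : ℝ)) atTop (𝓝 0) := by
      simp only [one_div]
      exact (tendsto_atTop_add_const_left _ x tendsto_natCast_atTop_atTop).inv_tendsto_atTop
    have h2 := (continuous_ofReal.tendsto _).comp this
    simpa [Function.comp_def] using h2
  have hA : Tendsto (fun M : ℕ => ((∑ m ∈ Finset.range M, T 1 m : ℝ) : ℂ)) atTop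
      (𝓝 ((1 / x + (Real.pi * Complex.cot (Real.pi * x) - 1 / x) - 0) / 2)) := by
    simp only [hpart]
    exact ((hcot.const_add _).sub h0).div_const 2
  have hB : Tendsto (fun M : ℕ => ((∑ m ∈ Finset.range M, T 1 m : ℝ) : ℂ)) atTop
      (𝓝 ((∑' m, T 1 m : ℝ) : ℂ)) := (continuous_ofReal.tendsto _).comp hsum1.hasSum.tendsto_sum_nat
  rw [tendsto_nhds_unique hB hA]
  ring



open Complex Polynomial IntermediateField

noncomputable def psiC (D : ℕ) [NeZero D] : DirichletCharacter ℂ D :=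
  { toFun := fun a => ((jacobiSym a.cast D : ℤ) : ℂ)
    map_one' := by
      have h : ((1 : ZMod D).cast : ℤ) ≡ 1 [ZMOD D] := by
        rw [← ZMod.intCast_eq_intCast_iff]; simp
      rw [jacobiSym.mod_left, h, ← jacobiSym.mod_left]; simp
    map_mul' := by
      intro x y
      have h : ((x * y : ZMod D).cast : ℤ) ≡ x.cast * y.cast [ZMOD D] := by
        rw [← ZMod.intCast_eq_intCast_iff]; simp
      rw [jacobiSym.mod_left, h, ← jacobiSym.mod_left, jacobiSym.mul_left]; push_cast; rfl
    map_nonunit' := by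
      intro a ha
      have : jacobiSym a.cast D = 0 := by
        rw [jacobiSym.eq_zero_iff_not_coprime]
        intro hc
        apply ha
        rw [← Int.isCoprime_iff_gcd_eq_one] at hc
        obtain ⟨u, v, huv⟩ := hc
        have := congrArg (Int.cast (R := ZMod D)) huv
        push_cast at this
        simp at this
        exact IsUnit.of_mul_eq_one u (by rw [mul_comm]; exact this)
      simp [this] }

theorem psiC_int (D : ℕ) [NeZero D] (n : ℤ) : psiC D (n : ZMod D) = ((jacobiSym n D : ℤ) : ℂ) := by
  change ((jacobiSym ((n : ZMod D).cast) D : ℤ) : ℂ) = _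
  have h : ((n : ZMod D).cast : ℤ) ≡ n [ZMOD D] := by
    rw [← ZMod.intCast_eq_intCast_iff]; simp
  rw [jacobiSym.mod_left, h, ← jacobiSym.mod_left]

theorem psiC_nat (D : ℕ) [NeZero D] (n : ℕ) : psiC D (n : ZMod D) = ((jacobiSym n D : ℤ) : ℂ) := by
  have := psiC_int D n
  simpa using this

theorem psiC_inv (D : ℕ) [NeZero D] : (psiC D)⁻¹ = psiC D := by
  rw [inv_eq_iff_mul_eq_one]
  ext a
  rw [MulChar.mul_apply, MulChar.one_apply a.isUnit]
  obtain ⟨n, hn⟩ := ZMod.intCast_surjective (a : ZMod D)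
  rw [← hn, psiC_int]
  have h1 : jacobiSym n D ≠ 0 := by
    intro h0
    have h2 : psiC D a = 0 := by rw [← hn, psiC_int, h0]; simp
    exact (a.isUnit.map (psiC D)).ne_zero h2
  have h3 : jacobiSym n D = 1 ∨ jacobiSym n D = -1 := (jacobiSym.trichotomy n D).resolve_left h1
  rcases h3 with h | h <;> simp [h]

theorem exists_jacobi_neg {l : ℕ} (hl : l.Prime) (hodd : Odd l) {m : ℕ} (hlm : Nat.Coprime l m) :
    ∃ n : ℕ, n ≡ 1 [MOD m] ∧ jacobiSym n (l * m) = -1 ∧ jacobiSym n l = -1 ∧ jacobiSym n m = 1 := by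
  have : Fact l.Prime := ⟨hl⟩
  have hc : ringChar (ZMod l) ≠ 2 := by
    rw [ZMod.ringChar_zmod_n]; rintro rfl; exact absurd hodd (by decide)
  obtain ⟨a, ha⟩ := FiniteField.exists_nonsquare hc
  obtain ⟨k, hk1, hk2⟩ := Nat.chineseRemainder hlm a.val 1
  have h1 : jacobiSym k l = -1 := by
    rw [← jacobiSym.legendreSym.to_jacobiSym, legendreSym.eq_neg_one_iff]
    have : ((k : ℤ) : ZMod l) = a := by
      have := (ZMod.natCast_eq_natCast_iff _ _ _).2 hk1
      simpa using this
    rwa [this]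
  have h2 : jacobiSym k m = 1 := by
    have : (k : ℤ) ≡ 1 [ZMOD m] := by exact_mod_cast Int.natCast_modEq_iff.2 hk2
    rw [jacobiSym.mod_left, this, ← jacobiSym.mod_left]; simp
  refine ⟨k, hk2, ?_, h1, h2⟩
  by_cases hm : m = 0
  · subst hm; simp at hlm; exact absurd hlm hl.one_lt.ne'
  rw [jacobiSym.mul_right' _ hl.ne_zero hm, h1, h2]; simp

theorem psiC_isPrimitive (D : ℕ) [NeZero D] (hD : Squarefree D) (hodd : Odd D) :
    (psiC D).IsPrimitive := by
  rw [DirichletCharacter.isPrimitive_def]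
  by_contra hne
  obtain ⟨e, he⟩ := (psiC D).conductor_dvd_level
  have he1 : e ≠ 1 := by rintro rfl; apply hne; omega
  obtain ⟨l, hl, c, hc⟩ := Nat.exists_prime_and_dvd he1
  set m := (psiC D).conductor * c with hm
  have hDm : D = l * m := by rw [he, hc, hm]; ring
  have hlm : Nat.Coprime l m := by
    rw [hDm, Nat.squarefree_mul_iff] at hD
    exact hD.1
  have hlo : Odd l := hodd.of_dvd_nat ⟨m, hDm⟩
  obtain ⟨n, hn1, hn2, -, -⟩ := exists_jacobi_neg hl hlo hlm
  rw [← hDm] at hn2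
  have hpsi : psiC D (n : ZMod D) = -1 := by rw [psiC_nat, hn2]; simp
  have hunit : IsUnit (n : ZMod D) := by
    by_contra hu
    rw [MulChar.map_nonunit _ hu] at hpsi
    norm_num at hpsi
  have hft := (psiC D).factorsThrough_conductor
  rw [DirichletCharacter.factorsThrough_iff_ker_unitsMap (psiC D).conductor_dvd_level] at hft
  have hmem : hunit.unit ∈ (ZMod.unitsMap (psiC D).conductor_dvd_level).ker := by
    rw [MonoidHom.mem_ker]
    ext
    rw [ZMod.unitsMap_val]
    simp only [IsUnit.unit_spec, Units.val_one]
    rw [ZMod.cast_natCast (psiC D).conductor_dvd_level]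
    have h3 : n ≡ 1 [MOD (psiC D).conductor] := hn1.of_dvd (Dvd.intro _ rfl)
    have := (ZMod.natCast_eq_natCast_iff _ _ _).2 h3
    simpa using this
  have := hft hmem
  rw [MonoidHom.mem_ker] at this
  have h4 : psiC D (n : ZMod D) = 1 := by
    have h5 := congrArg Units.val this
    rw [MulChar.coe_toUnitHom] at h5
    simpa using h5
  rw [h4] at hpsi
  norm_num at hpsi

theorem psiC_neg (D : ℕ) [NeZero D] (hD : D % 4 = 3) (a : ZMod D) : psiC D (-a) = - psiC D a := by
  obtain ⟨n, rfl⟩ := ZMod.intCast_surjective a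
  rw [← Int.cast_neg, psiC_int, psiC_int, jacobiSym.neg _ (Nat.odd_iff.2 (by omega)),
    ZMod.χ₄_nat_three_mod_four hD]
  push_cast; ring

theorem psiC_ne_one (D : ℕ) [NeZero D] (hD : D % 4 = 3) : psiC D ≠ 1 := by
  intro h
  have h1 := psiC_neg D hD 1
  rw [h, MulChar.one_apply (isUnit_one.neg), MulChar.one_apply isUnit_one] at h1
  norm_num at h1

theorem psiC_gauss (D : ℕ) [NeZero D] (hsq : Squarefree D) (hD : D % 4 = 3) (a : ZMod D) :
    ∑ b : ZMod D, psiC D b * ZMod.stdAddChar (a * b) = psiC D a * gaussSum (psiC D) ZMod.stdAddChar := by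
  have h := gaussSum_mulShift_of_isPrimitive (e := ZMod.stdAddChar)
    (psiC_isPrimitive D hsq (Nat.odd_iff.2 (by omega))) a
  rw [psiC_inv] at h
  rw [← h]
  rfl

theorem psiC_gauss_sq (D : ℕ) [NeZero D] (hsq : Squarefree D) (hD : D % 4 = 3) :
    gaussSum (psiC D) ZMod.stdAddChar ^ 2 = -(D : ℂ) := by
  have hF : ∀ k, ZMod.dft (psiC D) k = - gaussSum (psiC D) ZMod.stdAddChar * psiC D k := by
    intro k
    rw [(psiC_isPrimitive D hsq (Nat.odd_iff.2 (by omega))).fourierTransform_eq_inv_mul_gaussSum,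
      psiC_inv, psiC_neg D hD]; ring
  have h2 := congrFun (ZMod.dft_dft (psiC D)) 1
  have h3 : ZMod.dft (psiC D) = (- gaussSum (psiC D) ZMod.stdAddChar) • (psiC D : ZMod D → ℂ) := by
    ext k; rw [hF]; rfl
  rw [h3, map_smul, h3, psiC_neg D hD] at h2
  simp at h2
  rw [sq, h2]

theorem sum_mul_pow (z : ℂ) (n : ℕ) : (z - 1) * ∑ k ∈ Finset.range n, (k : ℂ) * z ^ k =
    n * z ^ n - z * ∑ k ∈ Finset.range n, z ^ k := by
  induction n with
  | zero => simp
  | succ n ih =>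
    rw [Finset.sum_range_succ, Finset.sum_range_succ, mul_add, ih]
    push_cast
    ring

theorem zmod_sum_eq (D : ℕ) [NeZero D] (f : ZMod D → ℂ) :
    ∑ a : ZMod D, f a = ∑ k ∈ Finset.range D, f (k : ZMod D) := by
  symm
  refine Finset.sum_bij (fun k _ => (k : ZMod D)) (fun _ _ => Finset.mem_univ _) ?_ ?_ (fun _ _ => rfl)
  · intro a ha b hb hab
    have := (ZMod.natCast_eq_natCast_iff _ _ _).1 hab
    exact Nat.ModEq.eq_of_lt_of_lt this (Finset.mem_range.1 ha) (Finset.mem_range.1 hb)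
  · intro b _
    exact ⟨b.val, Finset.mem_range.2 (ZMod.val_lt b), ZMod.natCast_zmod_val b⟩

theorem sum_val_stdAddChar (D : ℕ) [NeZero D] (b : ZMod D) (hb : b ≠ 0) :
    ∑ a : ZMod D, (a.val : ℂ) * ZMod.stdAddChar (a * b) =
      (D / 2 : ℂ) * (-1 - I * Complex.cot (Real.pi * (b.val / D : ℝ))) := by
  set z : ℂ := ZMod.stdAddChar b with hz
  have hz1 : z ≠ 1 := by
    rw [hz, ← AddChar.map_zero_eq_one (ZMod.stdAddChar (N := D))]
    exact fun h => hb (ZMod.injective_stdAddChar h)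
  have hpow : ∀ k : ℕ, ZMod.stdAddChar ((k : ZMod D) * b) = z ^ k := by
    intro k
    rw [hz, ← AddChar.map_nsmul_eq_pow, nsmul_eq_mul]
  have hzD : z ^ D = 1 := by rw [← hpow]; simp
  rw [zmod_sum_eq]
  have e1 : ∑ k ∈ Finset.range D, (((k : ZMod D)).val : ℂ) * ZMod.stdAddChar ((k : ZMod D) * b) =
      ∑ k ∈ Finset.range D, (k : ℂ) * z ^ k := by
    refine Finset.sum_congr rfl fun k hk => ?_
    rw [hpow, ZMod.val_natCast_of_lt (Finset.mem_range.1 hk)]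
  rw [e1]
  have h := sum_mul_pow z D
  have hg : ∑ k ∈ Finset.range D, z ^ k = 0 := by
    have := geom_sum_mul z D
    rw [hzD, sub_self] at this
    exact (mul_eq_zero.1 this).resolve_right (sub_ne_zero.2 hz1)
  rw [hg, hzD] at h
  have hsub : z - 1 ≠ 0 := sub_ne_zero.2 hz1
  have hsub' : 1 - z ≠ 0 := sub_ne_zero.2 hz1.symm
  apply mul_left_cancel₀ hsub
  rw [h, Complex.cot_pi_eq_exp_ratio]
  have hze : Complex.exp (2 * Real.pi * I * ((b.val / D : ℝ) : ℂ)) = z := by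
    have := ZMod.stdAddChar_coe (N := D) (b.val : ℤ)
    rw [hz]
    have hb' : ((b.val : ℤ) : ZMod D) = b := by simp
    rw [hb'] at this
    rw [this]
    congr 1
    push_cast
    ring
  rw [hze]
  field_simp
  ring

open HurwitzZeta in
theorem LFunction_psiC_one (D : ℕ) [NeZero D] (hsq : Squarefree D) (hD : D % 4 = 3) :
    DirichletCharacter.LFunction (psiC D) 1 =
      (Real.pi * I / D ^ 2 : ℂ) * gaussSum (psiC D) ZMod.stdAddChar *
        ∑ a : ZMod D, (a.val : ℂ) * psiC D a := by
  have hD0 : (D : ℂ) ≠ 0 := by exact_mod_cast NeZero.ne D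
  have hodd : Function.Odd (psiC D : ZMod D → ℂ) := psiC_neg D hD
  have hp0 : psiC D 0 = 0 := by
    have := psiC_neg D hD 0
    rw [neg_zero] at this
    linear_combination this / 2
  have h1 : DirichletCharacter.LFunction (psiC D) 1 =
      (D : ℂ)⁻¹ * ∑ j : ZMod D, psiC D j * ((Real.pi / 2 : ℂ) * Complex.cot (Real.pi * (j.val / D : ℝ))) := by
    change ZMod.LFunction _ 1 = _
    rw [ZMod.LFunction_def_odd hodd, Complex.cpow_neg_one]
    congr 1
    refine Finset.sum_congr rfl fun j _ => ?_
    by_cases hj : j = 0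
    · rw [hj, hp0]; simp
    · rw [ZMod.toAddCircle_apply, hurwitzOdd_one]
      · have : 0 < j.val := Nat.pos_of_ne_zero (by simpa using hj)
        have : 0 < D := NeZero.pos D
        positivity
      · have : (0 : ℝ) < D := by exact_mod_cast NeZero.pos D
        rw [div_lt_one this]
        exact_mod_cast ZMod.val_lt j
  have h2 : ∑ b : ZMod D, psiC D b * ∑ a : ZMod D, (a.val : ℂ) * ZMod.stdAddChar (a * b) =
      gaussSum (psiC D) ZMod.stdAddChar * ∑ a : ZMod D, (a.val : ℂ) * psiC D a := by
    simp only [Finset.mul_sum]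
    rw [Finset.sum_comm]
    refine Finset.sum_congr rfl fun a _ => ?_
    rw [show gaussSum (psiC D) ZMod.stdAddChar * ((a.val : ℂ) * psiC D a) = (a.val : ℂ) * (psiC D a * gaussSum (psiC D) ZMod.stdAddChar) by ring,
      ← psiC_gauss D hsq hD, Finset.mul_sum]
    refine Finset.sum_congr rfl fun b _ => ?_
    ring
  have h3 : ∑ b : ZMod D, psiC D b * ∑ a : ZMod D, (a.val : ℂ) * ZMod.stdAddChar (a * b) =
      ∑ b : ZMod D, (-(D / 2 : ℂ) * psiC D b + (-(D : ℂ) * I / Real.pi) *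
        (psiC D b * ((Real.pi / 2 : ℂ) * Complex.cot (Real.pi * (b.val / D : ℝ))))) := by
    refine Finset.sum_congr rfl fun b _ => ?_
    by_cases hb : b = 0
    · rw [hb, hp0]; simp
    · rw [sum_val_stdAddChar D b hb]
      have : (Real.pi : ℂ) ≠ 0 := by exact_mod_cast Real.pi_ne_zero
      field_simp
      ring
  rw [Finset.sum_add_distrib, ← Finset.mul_sum, ← Finset.mul_sum,
    MulChar.sum_eq_zero_of_ne_one (psiC_ne_one D hD), mul_zero, zero_add, h2] at h3
  rw [h1, mul_assoc, h3]
  have : (Real.pi : ℂ) ≠ 0 := by exact_mod_cast Real.pi_ne_zero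
  generalize ∑ i : ZMod D, psiC D i * ((Real.pi / 2 : ℂ) * Complex.cot (Real.pi * (i.val / D : ℝ))) = S
  field_simp
  rw [I_sq]
  ring



open Complex Polynomial IntermediateField

namespace QF
variable {K : Type*} [Field K] [NumberField K] {D : ℕ} [NeZero D] {s : K} (h : QF K D s)
include h
open NumberField Ideal IdCount Filter Topology

theorem dedekindZeta_eq {z : ℂ} (hz : 1 < z.re) :
    dedekindZeta K z = riemannZeta z * DirichletCharacter.LFunction (psiC D) z := by
  rw [DirichletCharacter.LFunction_eq_LSeries _ hz, ← LSeries_one_eq_riemannZeta hz]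
  rw [← LSeries_convolution' (LSeriesSummable_one_iff.2 hz)
    (DirichletCharacter.LSeriesSummable_of_one_lt_re (psiC D) hz)]
  unfold dedekindZeta
  apply LSeries_congr
  intro n hn
  have h1 := h.cnt_eq_sum hn
  have h2 : ((cnt K n : ℤ) : ℂ) = ((∑ d ∈ n.divisors, jacobiSym d D : ℤ) : ℂ) := by rw [h1]
  change ((cnt K n : ℕ) : ℂ) = _
  rw [LSeries.convolution_def]
  push_cast at h2
  rw [h2]
  simp only [Pi.one_apply, one_mul]
  rw [Nat.sum_divisorsAntidiagonal' (f := fun _ j => psiC D (j : ZMod D))]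
  refine Finset.sum_congr rfl fun d _ => ?_
  rw [psiC_nat]

theorem LFunction_one_eq :
    DirichletCharacter.LFunction (psiC D) 1 = ((Real.pi * classNumber K / Real.sqrt D : ℝ) : ℂ) := by
  have h1 := tendsto_sub_one_mul_dedekindZeta_nhdsGT K
  rw [h.residue_eq] at h1
  have hcoe : Tendsto (fun x : ℝ => (x : ℂ)) (𝓝[>] 1) (𝓝[≠] 1) := by
    apply tendsto_nhdsWithin_of_tendsto_nhds_of_eventually_within
    · have : Tendsto (fun x : ℝ => (x : ℂ)) (𝓝 1) (𝓝 ((1 : ℝ) : ℂ)) := continuous_ofReal.tendsto 1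
      rw [ofReal_one] at this
      exact this.mono_left nhdsWithin_le_nhds
    · filter_upwards [self_mem_nhdsWithin] with x hx
      simp only [Set.mem_compl_iff, Set.mem_singleton_iff]
      intro h
      have : x = 1 := by exact_mod_cast h
      exact absurd hx (by simp [this])
  have h2 := riemannZeta_residue_one.comp hcoe
  have hcont := (DirichletCharacter.differentiable_LFunction (psiC_ne_one D h.md)).continuous
  have h3 : Tendsto (fun x : ℝ => DirichletCharacter.LFunction (psiC D) (x : ℂ)) (𝓝[>] 1)
      (𝓝 (DirichletCharacter.LFunction (psiC D) 1)) :=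
    ((hcont.tendsto 1).mono_left nhdsWithin_le_nhds).comp hcoe
  have h4 := h2.mul h3
  rw [one_mul] at h4
  refine tendsto_nhds_unique (h4.congr' ?_) h1
  filter_upwards [self_mem_nhdsWithin] with x hx
  simp only [Function.comp_apply]
  rw [h.dedekindZeta_eq (by simpa using hx)]
  ring

theorem classNumber_formula :
    (D : ℤ) * classNumber K = |∑ k ∈ Finset.range D, (k : ℤ) * jacobiSym k D| := by
  have h1 := h.LFunction_one_eq
  rw [LFunction_psiC_one D h.sqf h.md] at h1
  have hM : ∑ a : ZMod D, (a.val : ℂ) * psiC D a =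
      ((∑ k ∈ Finset.range D, (k : ℤ) * jacobiSym k D : ℤ) : ℂ) := by
    rw [zmod_sum_eq]
    push_cast
    refine Finset.sum_congr rfl fun k hk => ?_
    rw [psiC_nat, ZMod.val_natCast_of_lt (Finset.mem_range.1 hk)]
  rw [hM] at h1
  generalize ∑ k ∈ Finset.range D, (k : ℤ) * jacobiSym k D = M at h1 ⊢
  have hg := psiC_gauss_sq D h.sqf h.md
  have hDpos : (0 : ℝ) < D := by exact_mod_cast NeZero.pos D
  have hsq := congrArg (fun z => ‖z‖ ^ 2) h1
  simp only [norm_mul, mul_pow] at hsq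
  have hgn : ‖gaussSum (psiC D) ZMod.stdAddChar‖ ^ 2 = D := by
    rw [← norm_pow, hg]; simp
  rw [hgn] at hsq
  rw [← norm_pow, ← norm_pow, ← norm_pow] at hsq
  have hM2 : ‖((M : ℂ)) ^ 2‖ = (M : ℝ) ^ 2 := by
    rw [norm_pow, Complex.norm_intCast, sq_abs]
  have hs2 : Real.sqrt D ^ 2 = D := Real.sq_sqrt hDpos.le
  have hR : ‖(((Real.pi * classNumber K / Real.sqrt D : ℝ)) : ℂ) ^ 2‖ = Real.pi ^ 2 * (classNumber K : ℝ) ^ 2 / D := by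
    rw [norm_pow, Complex.norm_real, Real.norm_eq_abs, sq_abs, div_pow, mul_pow, hs2]
  have hL : ‖(Real.pi * I / (D : ℂ) ^ 2) ^ 2‖ = Real.pi ^ 2 / (D : ℝ) ^ 4 := by
    rw [div_pow, mul_pow, I_sq]
    simp only [norm_div, norm_mul, norm_pow, norm_neg, norm_one, Complex.norm_natCast, Complex.norm_real, Real.norm_eq_abs, sq_abs]
    ring
  rw [hM2, hR, hL] at hsq
  have hpi : Real.pi ≠ 0 := Real.pi_ne_zero
  field_simp at hsq
  have hZ : (M : ℤ) ^ 2 = ((D : ℤ) * classNumber K) ^ 2 := by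
    have : (M : ℝ) ^ 2 = ((D : ℝ) * classNumber K) ^ 2 := by linarith
    exact_mod_cast this
  have h5 := (sq_eq_sq_iff_abs_eq_abs _ _).1 hZ
  rw [h5, abs_of_nonneg (by positivity)]

end QF

theorem QF_adjoin (D : ℕ) (hD : D % 4 = 3) (hsq : Squarefree D) (h3 : 3 < D) 
    [NumberField ℚ⟮sqrtNeg D⟯] :
    QF ℚ⟮sqrtNeg D⟯ D (AdjoinSimple.gen ℚ (sqrtNeg D)) := by
  have hg : (AdjoinSimple.gen ℚ (sqrtNeg D)) ^ 2 = -(D : ℚ⟮sqrtNeg D⟯) := by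
    apply Subtype.ext
    have := sqrtNeg_sq D
    simpa using this
  refine ⟨hD, hsq, h3, hg, ?_⟩
  intro x
  have hint := isIntegral_sqrtNeg D
  have hx : (x : ℂ) ∈ Algebra.adjoin ℚ {sqrtNeg D} := by
    rw [← adjoin_simple_toSubalgebra_of_isAlgebraic hint.isAlgebraic]; exact x.2
  have key : ∃ u v : ℚ, (x : ℂ) = u + v * sqrtNeg D := by
    generalize (x : ℂ) = y at hx ⊢
    induction hx using Algebra.adjoin_induction with
    | mem y hy => rw [Set.mem_singleton_iff] at hy; exact ⟨0, 1, by simp [hy]⟩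
    | algebraMap r => exact ⟨r, 0, by simp⟩
    | add a b _ _ ha hb =>
      obtain ⟨u, v, h1⟩ := ha
      obtain ⟨u', v', h2⟩ := hb
      exact ⟨u + u', v + v', by rw [h1, h2]; push_cast; ring⟩
    | mul a b _ _ ha hb =>
      obtain ⟨u, v, h1⟩ := ha
      obtain ⟨u', v', h2⟩ := hb
      refine ⟨u * u' - D * v * v', u * v' + v * u', ?_⟩
      rw [h1, h2]; push_cast
      linear_combination (v * v' : ℂ) * sqrtNeg_sq D
  obtain ⟨u, v, h⟩ := key
  refine ⟨u, v, ?_⟩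
  apply Subtype.ext
  rw [h]
  simp

theorem classNumSqrtNeg_formula (D : ℕ) (hD : D % 4 = 3) (hsq : Squarefree D) (h3 : 3 < D) :
    (D : ℤ) * classNumSqrtNeg D = |∑ k ∈ Finset.range D, (k : ℤ) * jacobiSym k D| := by
  have : NeZero D := ⟨by omega⟩
  have : FiniteDimensional ℚ ℚ⟮sqrtNeg D⟯ :=
    IntermediateField.adjoin.finiteDimensional (isIntegral_sqrtNeg D)
  have : CharZero ℚ⟮sqrtNeg D⟯ :=
    charZero_of_injective_algebraMap (algebraMap ℚ ℚ⟮sqrtNeg D⟯).injective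
  have : NumberField ℚ⟮sqrtNeg D⟯ := ⟨⟩
  exact (QF_adjoin D hD hsq h3).classNumber_formula


open Complex Polynomial IntermediateField
set_option linter.unusedSectionVars false

theorem zetaP_prim (p : ℕ) (hp : p ≠ 0) : IsPrimitiveRoot (zetaP p) p := by
  have := Complex.isPrimitiveRoot_exp p hp
  simpa [zetaP] using this

noncomputable def psiF (p : ℕ) [Fact p.Prime] (F : Type) [Field F] [Algebra (ZMod p) F] :
    AddChar F ℂ :=
  (AddChar.zmodChar p (ζ := zetaP p) (zetaP_prim p (Fact.out : p.Prime).ne_zero).pow_eq_one).compAddMonoidHom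
    (Algebra.trace (ZMod p) F).toAddMonoidHom

section
variable {p : ℕ} [Fact p.Prime] {F : Type} [Field F] [Fintype F] [Algebra (ZMod p) F]

theorem psiF_apply (x : F) : psiF p F x = zetaP p ^ (Algebra.trace (ZMod p) F x).val := by
  simp [psiF, AddChar.zmodChar_apply]

theorem gaussSumN_eq (χ : MulChar F ℂ) (m : ℕ) :
    gaussSumN p χ m = gaussSum (χ ^ m) (psiF p F) := by
  classical
  unfold gaussSumN gaussSum
  rw [Finset.sum_filter]
  refine Finset.sum_congr rfl fun x _ => ?_
  rw [psiF_apply]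
  by_cases hx : x = 0
  · subst hx
    rw [MulChar.map_zero]; simp
  · simp [hx]

theorem psiF_ne_one : psiF p F ≠ 1 := by
  have hp : p.Prime := Fact.out
  obtain ⟨x, hx⟩ := Algebra.trace_surjective (ZMod p) F 1
  rw [AddChar.ne_one_iff]
  refine ⟨x, ?_⟩
  have h1 : (1 : ZMod p).val = 1 := by
    have : Fact (1 < p) := ⟨hp.one_lt⟩
    exact ZMod.val_one p
  rw [psiF_apply, hx, h1, pow_one]
  exact (zetaP_prim p hp.ne_zero).ne_one hp.one_lt

theorem psiF_isPrimitive : (psiF p F).IsPrimitive := AddChar.IsPrimitive.of_ne_one psiF_ne_one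

theorem gauss_one : gaussSum (1 : MulChar F ℂ) (psiF p F) = -1 := by
  rw [gaussSum_one_left psiF_ne_one]

theorem trace_frob (x : F) : Algebra.trace (ZMod p) F (x ^ p) = Algebra.trace (ZMod p) F x := by
  have e := Algebra.trace_eq_of_algEquiv (FiniteField.frobeniusAlgEquivOfAlgebraic (ZMod p) F) x
  rw [← e]
  simp [ZMod.card]

theorem gauss_frob (χ : MulChar F ℂ) :
    gaussSum (χ ^ p) (psiF p F) = gaussSum χ (psiF p F) := by
  have hp : p.Prime := Fact.out
  unfold gaussSum
  let e := (FiniteField.frobeniusAlgEquivOfAlgebraic (ZMod p) F)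
  rw [← e.toEquiv.sum_comp (fun x => χ x * psiF p F x)]
  refine Finset.sum_congr rfl fun x _ => ?_
  have : e.toEquiv x = x ^ p := by simp [e, ZMod.card]
  rw [this, psiF_apply, psiF_apply, trace_frob, MulChar.pow_apply' _ hp.ne_zero, map_pow]

theorem gauss_frob_pow (χ : MulChar F ℂ) (i : ℕ) :
    gaussSum (χ ^ p ^ i) (psiF p F) = gaussSum χ (psiF p F) := by
  induction i with
  | zero => simp
  | succ n ih => rw [pow_succ, pow_mul, gauss_frob, ih]

theorem gauss_mul_inv (χ : MulChar F ℂ) (hχ : χ ≠ 1) (h1 : χ (-1) = 1) :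
    gaussSum χ (psiF p F) * gaussSum χ⁻¹ (psiF p F) = Fintype.card F := by
  rw [← gaussSum_mul_gaussSum_eq_card hχ (psiF_isPrimitive (p := p))]
  rw [← mul_gaussSum_inv_eq_gaussSum χ⁻¹ (psiF p F)]
  rw [MulChar.inv_apply' , inv_neg, inv_one, h1, one_mul]

theorem gauss_conj (χ : MulChar F ℂ) (h1 : χ (-1) = 1) :
    (starRingEnd ℂ) (gaussSum χ (psiF p F)) = gaussSum χ⁻¹ (psiF p F) := by
  have := star_gaussSum_eq χ (psiF p F)
  rw [← mul_gaussSum_inv_eq_gaussSum χ⁻¹ (psiF p F), MulChar.inv_apply' , inv_neg, inv_one, h1,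
    one_mul, ← this]
  rfl

theorem isIntegral_psiF (x : F) : IsIntegral ℤ (psiF p F x) := by
  have hp : p.Prime := Fact.out
  rw [psiF_apply]
  exact ((zetaP_prim p hp.ne_zero).isIntegral hp.pos).pow _

theorem isIntegral_mulChar (χ : MulChar F ℂ) (x : F) : IsIntegral ℤ (χ x) := by
  classical
  by_cases hx : x = 0
  · subst hx; rw [MulChar.map_zero]; exact isIntegral_zero
  · have h : χ x ^ (Fintype.card F - 1) = 1 := by
      rw [← map_pow, FiniteField.pow_card_sub_one_eq_one x hx, map_one]
    exact IsIntegral.of_pow (n := Fintype.card F - 1)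
      (Nat.sub_pos_of_lt (Fintype.one_lt_card)) (h ▸ isIntegral_one)

theorem isIntegral_gauss (χ : MulChar F ℂ) : IsIntegral ℤ (gaussSum χ (psiF p F)) :=
  IsIntegral.sum _ fun x _ => (isIntegral_mulChar χ x).mul (isIntegral_psiF x)

end

namespace VS
variable (V : ValuationSubring ℂ)

theorem mem_of_isIntegral {z : ℂ} (hz : IsIntegral ℤ z) : z ∈ V := by
  have h : IsIntegral V z := hz.tower_top
  obtain ⟨y, hy⟩ := IsIntegrallyClosed.isIntegral_iff.1 h
  rw [← hy]; exact y.2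

theorem mem_nonunits_iff' {z : ℂ} : z ∈ V.nonunits ↔ ∃ h : z ∈ V, (⟨z, h⟩ : V) ∈ IsLocalRing.maximalIdeal V :=
  V.mem_nonunits_iff_exists_mem_maximalIdeal

theorem nu_add {a b : ℂ} (ha : a ∈ V.nonunits) (hb : b ∈ V.nonunits) : a + b ∈ V.nonunits := by
  rw [mem_nonunits_iff'] at *
  obtain ⟨h1, h2⟩ := ha
  obtain ⟨h3, h4⟩ := hb
  exact ⟨V.add_mem _ _ h1 h3, Ideal.add_mem _ h2 h4⟩

theorem nu_mul {a b : ℂ} (ha : a ∈ V.nonunits) (hb : b ∈ V) : a * b ∈ V.nonunits := by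
  rw [mem_nonunits_iff'] at *
  obtain ⟨h1, h2⟩ := ha
  exact ⟨V.mul_mem _ _ h1 hb, Ideal.mul_mem_right ⟨b, hb⟩ _ h2⟩

theorem nu_neg {a : ℂ} (ha : a ∈ V.nonunits) : -a ∈ V.nonunits := by
  have := nu_mul V ha (V.neg_mem _ V.one_mem)
  simpa using this

theorem nu_mem {a : ℂ} (ha : a ∈ V.nonunits) : a ∈ V := ((mem_nonunits_iff' V).1 ha).1

theorem one_nu : (1 : ℂ) ∉ V.nonunits := by
  rw [mem_nonunits_iff']
  rintro ⟨h, h2⟩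
  exact (Ideal.ne_top_iff_one _).1 (IsLocalRing.maximalIdeal.isMaximal V).ne_top h2

theorem nu_of_mul {a b : ℂ} (ha : a ∈ V) (hb : b ∈ V) (h : a * b ∈ V.nonunits) :
    a ∈ V.nonunits ∨ b ∈ V.nonunits := by
  rw [mem_nonunits_iff'] at h
  obtain ⟨h1, h2⟩ := h
  have : (⟨a, ha⟩ : V) * ⟨b, hb⟩ ∈ IsLocalRing.maximalIdeal V := h2
  rcases (IsLocalRing.maximalIdeal.isMaximal V).isPrime.mem_or_mem this with h | h
  · exact Or.inl ((mem_nonunits_iff' V).2 ⟨ha, h⟩)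
  · exact Or.inr ((mem_nonunits_iff' V).2 ⟨hb, h⟩)

theorem nu_of_pow {a : ℂ} (ha : a ∈ V) (n : ℕ) (h : a ^ n ∈ V.nonunits) : a ∈ V.nonunits := by
  induction n with
  | zero => exact absurd (by simpa using h) (one_nu V)
  | succ n ih =>
    rw [pow_succ] at h
    rcases nu_of_mul V (pow_mem ha n) ha h with h | h
    · exact ih h
    · exact h

theorem inv_mem {a : ℂ} (ha : a ∈ V) (h : a ∉ V.nonunits) : a⁻¹ ∈ V := by
  rcases V.mem_or_inv_mem a with h1 | h1
  · have hu : IsUnit (⟨a, ha⟩ : V) := by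
      by_contra hc
      exact h ((mem_nonunits_iff' V).2 ⟨ha, (IsLocalRing.mem_maximalIdeal _).2 hc⟩)
    obtain ⟨u, hu⟩ := hu
    have e : (u : V).1 * (u⁻¹ : Vˣ).1.1 = 1 := by
      have := u.mul_inv
      exact congrArg Subtype.val this
    rw [hu] at e
    rw [inv_eq_of_mul_eq_one_right e]
    exact Subtype.prop _
  · exact h1

theorem int_mem (n : ℤ) : (n : ℂ) ∈ V := mem_of_isIntegral V (by simpa using isIntegral_algebraMap (R := ℤ) (A := ℂ) (x := n))

theorem int_nu {l : ℕ} (hl : l.Prime) (h : (l : ℂ) ∈ V.nonunits) (n : ℤ) :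
    (n : ℂ) ∈ V.nonunits ↔ (l : ℤ) ∣ n := by
  constructor
  · intro hn
    by_contra hd
    have hc : IsCoprime (l : ℤ) n := (Nat.prime_iff_prime_int.1 hl).irreducible.coprime_iff_not_dvd.2 hd
    obtain ⟨a, b, hab⟩ := hc
    apply one_nu V
    have : (1 : ℂ) = l * a + n * b := by
      have := congrArg (fun z : ℤ => (z : ℂ)) hab
      push_cast at this
      rw [← this]; ring
    rw [this]
    exact nu_add V (nu_mul V h (int_mem V a)) (nu_mul V hn (int_mem V b))
  · rintro ⟨c, rfl⟩
    push_cast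
    exact nu_mul V h (int_mem V c)

theorem frob_sum {l : ℕ} (hl : l.Prime) (h : (l : ℂ) ∈ V.nonunits) {ι : Type*} (s : Finset ι) (a : ι → ℂ)
    (ha : ∀ i ∈ s, a i ∈ V) : (∑ i ∈ s, a i) ^ l - ∑ i ∈ s, a i ^ l ∈ V.nonunits := by
  classical
  have : Fact l.Prime := ⟨hl⟩
  obtain ⟨hlV, hlm⟩ := (mem_nonunits_iff' V).1 h
  let k := IsLocalRing.ResidueField V
  have hchar : CharP k l := by
    have h0 : (l : k) = 0 := by
      have : IsLocalRing.residue V ⟨(l : ℂ), hlV⟩ = 0 := (IsLocalRing.residue_eq_zero_iff _).2 hlm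
      rw [← this, ← map_natCast (IsLocalRing.residue V)]
      congr 1
    exact (CharP.charP_iff_prime_eq_zero hl).2 h0
  let b : ι → V := fun i => if hi : i ∈ s then ⟨a i, ha i hi⟩ else 0
  have hb : ∀ i ∈ s, (b i : ℂ) = a i := fun i hi => by simp [b, hi]
  have key : IsLocalRing.residue V ((∑ i ∈ s, b i) ^ l - ∑ i ∈ s, b i ^ l) = 0 := by
    simp only [map_sub, map_pow, map_sum]
    rw [sum_pow_char l, sub_self]
  rw [mem_nonunits_iff']
  have e : (((∑ i ∈ s, b i) ^ l - ∑ i ∈ s, b i ^ l : V) : ℂ) = (∑ i ∈ s, a i) ^ l - ∑ i ∈ s, a i ^ l := by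
    push_cast
    have e2 : ∑ i ∈ s, (b i : ℂ) ^ l = ∑ i ∈ s, a i ^ l :=
      Finset.sum_congr rfl (fun i hi => by rw [hb i hi])
    rw [Finset.sum_congr rfl hb, e2]
  rw [← e]
  exact ⟨Subtype.prop _, (IsLocalRing.residue_eq_zero_iff _).1 key⟩

end VS

/-- existence of a valuation ring over a prime -/
theorem exists_V (l : ℕ) (hl : l.Prime) : ∃ V : ValuationSubring ℂ, (l : ℂ) ∈ V.nonunits := by
  let A : Subring ℂ := (Int.castRingHom ℂ).range
  let I : Ideal A := Ideal.span {(l : A)}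
  have hI : I ≠ ⊤ := by
    rw [Ne, Ideal.eq_top_iff_one, Ideal.mem_span_singleton]
    rintro ⟨⟨_, ⟨n, rfl⟩⟩, h⟩
    have h1 := congrArg Subtype.val h
    simp only [Int.coe_castRingHom, Subring.coe_mul, Subring.coe_natCast, Subring.coe_one] at h1
    have h2 : (1 : ℤ) = l * n := by exact_mod_cast h1
    have := Int.eq_one_or_neg_one_of_mul_eq_one h2.symm
    have := hl.two_le
    omega
  obtain ⟨B, h1, h2⟩ := Ideal.image_subset_nonunits_valuationSubring I hI
  exact ⟨B, h2 ⟨(l : A), Ideal.subset_span rfl, by simp⟩⟩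


open Complex Polynomial IntermediateField

theorem sum_eq_sum_units {F : Type} [Field F] [Fintype F] [DecidableEq F] {R : Type*}
    [AddCommMonoid R] (f : F → R) (hf : f 0 = 0) : ∑ x, f x = ∑ u : Fˣ, f u := by
  symm
  apply Finset.sum_of_injOn (fun u : Fˣ => (u : F)) Units.val_injective.injOn (by simp) _ (by simp)
  intro x _ hx
  by_cases h : x = 0
  · rw [h, hf]
  · exact absurd ⟨Units.mk0 x h, by simp, rfl⟩ hx

theorem exists_teich (F : Type) [Field F] [Fintype F] :
    ∃ (V : ValuationSubring ℂ) (ω : MulChar F ℂ),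
      (∀ c : F → ℤ, ∑ x, (c x : F) * x = 0 → ∑ x, (c x : ℂ) * ω x ∈ V.nonunits) ∧
      (∀ χ : MulChar F ℂ, ∃ a : ℕ, χ = ω ^ a) ∧ orderOf ω = Fintype.card F - 1 := by
  classical
  obtain ⟨g, hg⟩ := IsCyclic.exists_generator (α := Fˣ)
  set n := Fintype.card F - 1 with hn
  have hn0 : n ≠ 0 := by have := Fintype.one_lt_card (α := F); omega
  have hcu : Fintype.card Fˣ = n := by rw [Fintype.card_units]
  have hog : orderOf g = n := by
    rw [orderOf_eq_card_of_forall_mem_zpowers hg, Nat.card_eq_fintype_card, hcu]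
  set ζ : ℂ := exp (2 * Real.pi * I / n) with hζdef
  have hζ : IsPrimitiveRoot ζ n := Complex.isPrimitiveRoot_exp n hn0
  obtain ⟨z, hz⟩ := hζ.isUnit hn0
  have hzm : z ∈ rootsOfUnity (Fintype.card Fˣ) ℂ := by
    rw [_root_.mem_rootsOfUnity, hcu]
    apply Units.ext
    push_cast
    rw [hz, hζ.pow_eq_one]
  let ω : MulChar F ℂ := MulChar.ofRootOfUnity hzm hg
  have hωg : ω g = ζ := by rw [MulChar.ofRootOfUnity_spec, hz]
  have hgF : IsPrimitiveRoot (g : F) n := by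
    rw [← hog]
    have := IsPrimitiveRoot.orderOf g
    exact this.map_of_injective (f := Units.coeHom F) Units.val_injective
  let φ : ℤ[X] →ₐ[ℤ] F := aeval (g : F)
  let θ : ℤ[X] →ₐ[ℤ] ℂ := aeval ζ
  have hker : ∀ P, θ P = 0 → φ P = 0 := by
    intro P hP
    have h1 : minpoly ℤ ζ ∣ P :=
      minpoly.isIntegrallyClosed_dvd (hζ.isIntegral (Nat.pos_of_ne_zero hn0)) hP
    rw [← cyclotomic_eq_minpoly hζ (Nat.pos_of_ne_zero hn0)] at h1
    obtain ⟨Q, rfl⟩ := h1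
    have : φ (cyclotomic n ℤ) = 0 := by
      have h2 := hgF.isRoot_cyclotomic (Nat.pos_of_ne_zero hn0)
      rw [IsRoot, ← map_cyclotomic_int, eval_map] at h2
      simpa [φ, aeval_def] using h2
    rw [map_mul, this, zero_mul]
  let A : Subring ℂ := θ.toRingHom.range
  let θ' : ℤ[X] →+* A := θ.toRingHom.rangeRestrict
  have hsurj : Function.Surjective θ' := θ.toRingHom.rangeRestrict_surjective
  have hθ' : ∀ P, (θ' P : ℂ) = θ P := fun P => rfl
  let I' : Ideal A := Ideal.map θ' (RingHom.ker φ.toRingHom)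
  have hmem : ∀ y, y ∈ I' ↔ ∃ P, φ P = 0 ∧ θ' P = y := by
    intro y
    rw [Ideal.mem_map_iff_of_surjective _ hsurj]
    rfl
  have hI : I' ≠ ⊤ := by
    rw [Ne, Ideal.eq_top_iff_one, hmem]
    rintro ⟨P, h1, h2⟩
    have h3 : θ (P - 1) = 0 := by
      rw [map_sub, map_one, ← hθ', h2]; simp
    have h4 := hker _ h3
    rw [map_sub, h1, map_one] at h4
    simp at h4
  obtain ⟨V, hV1, hV2⟩ := Ideal.image_subset_nonunits_valuationSubring I' hI
  refine ⟨V, ω, ?_, ?_, ?_⟩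
  · intro c hc
    have hj : ∀ u : Fˣ, ∃ j : ℕ, g ^ j = u := fun u =>
      (Submonoid.mem_powers_iff _ _).1 (mem_powers_iff_mem_zpowers.2 (hg u))
    choose j hj using hj
    let P : ℤ[X] := ∑ u : Fˣ, C (c u) * X ^ j u
    have h1 : φ P = 0 := by
      rw [← hc, sum_eq_sum_units (fun x => (c x : F) * x) (by simp), map_sum]
      refine Finset.sum_congr rfl fun u _ => ?_
      simp only [φ, map_mul, map_pow, aeval_X, aeval_C]
      rw [← Units.val_pow_eq_pow_val, hj]
      simp
    have h2 : θ P = ∑ x, (c x : ℂ) * ω x := by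
      rw [sum_eq_sum_units (fun x => (c x : ℂ) * ω x) (by rw [MulChar.map_zero, mul_zero]), map_sum]
      refine Finset.sum_congr rfl fun u _ => ?_
      simp only [θ, map_mul, map_pow, aeval_X, aeval_C]
      have : ω u = ζ ^ j u := by
        conv_lhs => rw [← hj u]
        rw [Units.val_pow_eq_pow_val, map_pow, hωg]
      rw [this]
      simp
    rw [← h2]
    exact hV2 ⟨θ' P, (hmem _).2 ⟨P, h1, rfl⟩, rfl⟩
  · intro χ
    have h1 : χ g ^ n = 1 := by
      rw [← map_pow, hgF.pow_eq_one, map_one]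
    have : NeZero n := ⟨hn0⟩
    obtain ⟨i, _, hi⟩ := hζ.eq_pow_of_pow_eq_one h1
    refine ⟨i, ?_⟩
    rw [MulChar.eq_iff hg, MulChar.pow_apply_coe, hωg, hi]
  · apply Nat.dvd_antisymm
    · rw [orderOf_dvd_iff_pow_eq_one, MulChar.eq_iff hg, MulChar.pow_apply_coe, hωg, hζ.pow_eq_one,
        MulChar.one_apply_coe]
    · apply hζ.dvd_of_pow_eq_one
      have := pow_orderOf_eq_one ω
      have h2 : (ω ^ orderOf ω) g = 1 := by rw [this, MulChar.one_apply_coe]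
      rw [MulChar.pow_apply_coe, hωg] at h2
      exact h2


open Complex Polynomial IntermediateField
set_option linter.unusedSectionVars false

theorem pi_nu (p : ℕ) (hp : p.Prime) (V : ValuationSubring ℂ) (h : (p : ℂ) ∈ V.nonunits) :
    zetaP p - 1 ∈ V.nonunits := by
  have hz := zetaP_prim p hp.ne_zero
  have hzi : IsIntegral ℤ (zetaP p) := hz.isIntegral hp.pos
  have hπ : zetaP p - 1 ∈ V := VS.mem_of_isIntegral V (hzi.sub isIntegral_one)
  have := VS.frob_sum V hp h (Finset.univ : Finset (Fin 2)) ![1, zetaP p - 1] (by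
    intro i _
    fin_cases i
    · exact V.one_mem
    · exact hπ)
  simp only [Fin.sum_univ_two, Matrix.cons_val_zero, Matrix.cons_val_one, add_sub_cancel,
    hz.pow_eq_one, one_pow] at this
  apply VS.nu_of_pow V hπ p
  have h2 := VS.nu_neg V this
  simpa using h2

theorem zeta_pow_expand (p : ℕ) (hp : p.Prime) (V : ValuationSubring ℂ) (n : ℕ) :
    ∃ c ∈ V, zetaP p ^ n = 1 + n * (zetaP p - 1) + (zetaP p - 1) ^ 2 * c := by
  have hz := zetaP_prim p hp.ne_zero
  have hzi : IsIntegral ℤ (zetaP p) := hz.isIntegral hp.pos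
  have hπ : zetaP p - 1 ∈ V := VS.mem_of_isIntegral V (hzi.sub isIntegral_one)
  induction n with
  | zero => exact ⟨0, V.zero_mem, by simp⟩
  | succ n ih =>
    obtain ⟨c, hc, e⟩ := ih
    refine ⟨c + n + (zetaP p - 1) * c, ?_, ?_⟩
    · exact V.add_mem _ _ (V.add_mem _ _ hc (by simpa using VS.int_mem V n)) (V.mul_mem _ _ hπ hc)
    · rw [pow_succ, e]; push_cast; ring

theorem p_eq_pi_pow (p : ℕ) (hp : p.Prime) (V : ValuationSubring ℂ) :
    ∃ c ∈ V, (p : ℂ) = c * (zetaP p - 1) ^ (p - 1) := by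
  have : Fact p.Prime := ⟨hp⟩
  have hz := zetaP_prim p hp.ne_zero
  have hzi : IsIntegral ℤ (zetaP p) := hz.isIntegral hp.pos
  have h1 : (p : ℂ) = ∏ μ ∈ primitiveRoots p ℂ, (1 - μ) := by
    rw [← eval_one_cyclotomic_prime (R := ℂ) (p := p), cyclotomic_eq_prod_X_sub_primitiveRoots hz,
      eval_prod]
    simp
  have h2 : ∀ μ ∈ primitiveRoots p ℂ, ∃ c ∈ V, 1 - μ = c * (zetaP p - 1) := by
    intro μ hμ
    have hμ' := (mem_primitiveRoots hp.pos).1 hμ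
    have : NeZero p := ⟨hp.ne_zero⟩
    obtain ⟨i, _, hi⟩ := hz.eq_pow_of_pow_eq_one hμ'.pow_eq_one
    refine ⟨-∑ j ∈ Finset.range i, zetaP p ^ j, ?_, ?_⟩
    · exact VS.mem_of_isIntegral V (IsIntegral.sum _ fun j _ => hzi.pow j).neg
    · have := geom_sum_mul (zetaP p) i
      rw [neg_mul, this, hi]; ring
  choose! c hc hc' using h2
  refine ⟨∏ μ ∈ primitiveRoots p ℂ, c μ, prod_mem hc, ?_⟩
  rw [h1, Finset.prod_congr rfl hc', Finset.prod_mul_distrib, Finset.prod_const,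
    Complex.card_primitiveRoots, Nat.totient_prime hp]

section
variable {p : ℕ} [Fact p.Prime] {F : Type} [Field F] [Fintype F] [Algebra (ZMod p) F]

theorem sum_trace_inv {f : ℕ} (hf : Fintype.card F = p ^ f) (hf2 : 1 ≤ f) :
    ∑ x : F, algebraMap (ZMod p) F (Algebra.trace (ZMod p) F x) * x⁻¹ = -1 := by
  classical
  have hp : p.Prime := Fact.out
  have hfr : Module.finrank (ZMod p) F = f := by
    have := Module.card_eq_pow_finrank (K := ZMod p) (V := F)
    rw [hf, ZMod.card] at this
    exact (Nat.pow_right_injective hp.two_le this).symm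
  rw [sum_eq_sum_units _ (by simp)]
  have h1 : ∀ u : Fˣ, algebraMap (ZMod p) F (Algebra.trace (ZMod p) F u) * (u : F)⁻¹ =
      ∑ i ∈ Finset.range f, ((u : F) ^ (p ^ i - 1)) := by
    intro u
    rw [FiniteField.algebraMap_trace_eq_sum_pow, hfr, Finset.sum_mul]
    refine Finset.sum_congr rfl fun i _ => ?_
    rw [Nat.card_eq_fintype_card, ZMod.card]
    have : p ^ i = (p ^ i - 1) + 1 := (Nat.sub_add_cancel (Nat.one_le_pow _ _ hp.pos)).symm
    conv_lhs => rw [this, pow_succ]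
    rw [mul_assoc, mul_inv_cancel₀ u.ne_zero, mul_one]
  rw [Finset.sum_congr rfl (fun u _ => h1 u), Finset.sum_comm]
  simp only [FiniteField.sum_pow_units]
  rw [Finset.sum_eq_single_of_mem 0 (by simp; omega)]
  · simp
  · intro i hi hi0
    rw [if_neg]
    rw [hf]
    intro hd
    rw [Finset.mem_range] at hi
    have h3 : p ^ i < p ^ f := Nat.pow_lt_pow_right hp.one_lt hi
    have h4 : 1 < p ^ i := Nat.one_lt_pow hi0 hp.one_lt
    have := Nat.le_of_dvd (by omega) hd
    omega

theorem gauss_teich {f : ℕ} (hf : Fintype.card F = p ^ f) (hf2 : 2 ≤ f)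
    (V : ValuationSubring ℂ) (hV : (p : ℂ) ∈ V.nonunits) (ω : MulChar F ℂ)
    (hred : ∀ c : F → ℤ, ∑ x, (c x : F) * x = 0 → ∑ x, (c x : ℂ) * ω x ∈ V.nonunits)
    (hω : ω⁻¹ ≠ 1) :
    ∃ c ∈ V, zetaP p - 1 = c * gaussSum ω⁻¹ (psiF p F) := by
  classical
  have hp : p.Prime := Fact.out
  set π := zetaP p - 1 with hπdef
  have hπ := pi_nu p hp V hV
  choose b hb hb' using zeta_pow_expand p hp V
  let n : F → ℕ := fun x => (Algebra.trace (ZMod p) F x).val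
  have hG : gaussSum ω⁻¹ (psiF p F) =
      π * (∑ x, ω⁻¹ x * n x + π * ∑ x, ω⁻¹ x * b (n x)) := by
    have h0 : ∑ x, ω⁻¹ x = 0 := MulChar.sum_eq_zero_of_ne_one hω
    have : ∀ x, ω⁻¹ x * psiF p F x = ω⁻¹ x + π * (ω⁻¹ x * n x) + π * (π * (ω⁻¹ x * b (n x))) := by
      intro x
      rw [psiF_apply, hb']
      simp only [n, π]
      ring
    rw [gaussSum, Finset.sum_congr rfl (fun x _ => this x), Finset.sum_add_distrib,
      Finset.sum_add_distrib, h0, ← Finset.mul_sum, ← Finset.mul_sum, ← Finset.mul_sum]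
    ring
  have hm1 : ∑ x, ω⁻¹ x * n x + 1 ∈ V.nonunits := by
    have := hred (fun x => (n x⁻¹ : ℤ) + if x = 1 then 1 else 0) ?_
    · convert this using 1
      simp only [Int.cast_add, add_mul, Finset.sum_add_distrib]
      congr 1
      · rw [← Equiv.sum_comp (Equiv.inv F)]
        refine Finset.sum_congr rfl fun x _ => ?_
        rw [MulChar.inv_apply']
        simp
        ring
      · simp
    · simp only [Int.cast_add, add_mul, Finset.sum_add_distrib]
      have h2 : ∑ x : F, (((n x⁻¹ : ℕ) : ℤ) : F) * x = -1 := by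
        rw [← sum_trace_inv (p := p) (F := F) hf (by omega), ← Equiv.sum_comp (Equiv.inv F)]
        refine Finset.sum_congr rfl fun x _ => ?_
        simp only [Equiv.inv_apply, inv_inv, n]
        congr 1
        rw [Int.cast_natCast, ← map_natCast (algebraMap (ZMod p) F), ZMod.natCast_zmod_val]
      rw [h2]
      simp
  have hm2 : π * ∑ x, ω⁻¹ x * b (n x) ∈ V.nonunits :=
    VS.nu_mul V hπ (sum_mem fun x _ => V.mul_mem _ _
      (VS.mem_of_isIntegral V (isIntegral_mulChar _ _)) (hb _))
  set w := ∑ x, ω⁻¹ x * n x + π * ∑ x, ω⁻¹ x * b (n x) with hw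
  have hw1 : w + 1 ∈ V.nonunits := by
    have := VS.nu_add V hm1 hm2
    convert this using 1
    rw [hw]; ring
  have hwV : w ∈ V := by
    have := V.add_mem _ _ (VS.nu_mem V hw1) (V.neg_mem _ V.one_mem)
    simpa using this
  have hwn : w ∉ V.nonunits := by
    intro h
    apply VS.one_nu V
    have := VS.nu_add V hw1 (VS.nu_neg V h)
    simpa using this
  have hw0 : w ≠ 0 := by
    rintro h
    rw [h] at hw1
    exact VS.one_nu V (by simpa using hw1)
  refine ⟨w⁻¹, VS.inv_mem V hwV hwn, ?_⟩
  rw [hG]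
  field_simp

end


open Complex Polynomial IntermediateField
set_option linter.unusedSectionVars false

section
variable {p : ℕ} [Fact p.Prime] {F : Type} [Field F] [Fintype F] [Algebra (ZMod p) F]

theorem isIntegral_jacobiSum (χ φ : MulChar F ℂ) : IsIntegral ℤ (jacobiSum χ φ) :=
  IsIntegral.sum _ fun x _ => (isIntegral_mulChar χ x).mul (isIntegral_mulChar φ _)

theorem stick_step (V : ValuationSubring ℂ) (ω : MulChar F ℂ) (π : ℂ)
    (h1 : ∃ c ∈ V, π = c * gaussSum ω (psiF p F)) (E A : ℕ)
    (hA : ω ^ (A + 1) ≠ 1) (hE : ∃ c ∈ V, π ^ E = c * gaussSum (ω ^ A) (psiF p F)) :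
    ∃ c ∈ V, π ^ (E + 1) = c * gaussSum (ω ^ (A + 1)) (psiF p F) := by
  obtain ⟨c, hc, e⟩ := h1
  obtain ⟨d, hd, e'⟩ := hE
  have hJ := jacobiSum_mul_nontrivial (χ := ω ^ A) (φ := ω) (by rwa [← pow_succ]) (psiF p F)
  refine ⟨d * c * jacobiSum (ω ^ A) ω, ?_, ?_⟩
  · exact V.mul_mem _ _ (V.mul_mem _ _ hd hc) (VS.mem_of_isIntegral V (isIntegral_jacobiSum _ _))
  · rw [pow_succ, e', pow_succ ω]
    conv_lhs => rw [e]
    linear_combination (-d * c) * hJ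

theorem stick_digits (V : ValuationSubring ℂ) (ω : MulChar F ℂ) (π : ℂ)
    (h1 : ∃ c ∈ V, π = c * gaussSum ω (psiF p F)) (Q : ℕ) (hQ : orderOf ω = Q)
    (e : ℕ → ℕ) (A : ℕ → ℕ) (hA0 : A 0 = 0) (hA : ∀ n, A (n + 1) = p * A n + e n) (n : ℕ)
    (hn : A n < Q) :
    ∃ c ∈ V, π ^ (∑ i ∈ Finset.range n, e i) = c * gaussSum (ω ^ A n) (psiF p F) := by
  have hp : p.Prime := Fact.out
  induction n with
  | zero =>
    refine ⟨-1, V.neg_mem _ V.one_mem, ?_⟩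
    rw [hA0, pow_zero, gauss_one]
    simp
  | succ n ih =>
    have hle : A n ≤ A (n + 1) := by
      rw [hA]
      have := Nat.le_mul_of_pos_left (A n) hp.pos
      omega
    obtain ⟨c, hc, ec⟩ := ih (lt_of_le_of_lt hle hn)
    have key : ∀ d, p * A n + d < Q → ∃ c ∈ V, π ^ (∑ i ∈ Finset.range n, e i + d) =
        c * gaussSum (ω ^ (p * A n + d)) (psiF p F) := by
      intro d
      induction d with
      | zero =>
        intro _
        refine ⟨c, hc, ?_⟩
        rw [add_zero, add_zero, ec, mul_comm p, pow_mul, gauss_frob]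
      | succ d ihd =>
        intro hd
        have := stick_step V ω π h1 (∑ i ∈ Finset.range n, e i + d) (p * A n + d) ?_ (ihd (by omega))
        · simpa [add_assoc] using this
        · intro h0
          have h2 := orderOf_dvd_of_pow_eq_one h0
          rw [hQ] at h2
          have := Nat.le_of_dvd (by omega) h2
          omega
    rw [Finset.sum_range_succ, hA]
    exact key _ (by rw [← hA]; exact hn)

theorem stick {f N : ℕ} (hf : Fintype.card F = p ^ f) (hf2 : 2 ≤ f) (hN0 : 0 < N)
    (hN : N ∣ p ^ f - 1) (χ : MulChar F ℂ) (hχ : orderOf χ = N) :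
    ∃ V : ValuationSubring ℂ, (p : ℂ) ∈ V.nonunits ∧ ∃ k : ℕ, k.Coprime N ∧
      ∀ m e : ℕ, ∑ i ∈ Finset.range f, (p ^ i * (k * m)) % N = N * e →
        ∃ c ∈ V, (p : ℂ) ^ e = c * gaussSum (χ ^ m) (psiF p F) := by
  have hp : p.Prime := Fact.out
  obtain ⟨V, ω, hred, hall, hord⟩ := exists_teich F
  have hq4 : 4 ≤ p ^ f := by
    calc 4 = 2 ^ 2 := by norm_num
      _ ≤ p ^ 2 := Nat.pow_le_pow_left hp.two_le 2
      _ ≤ p ^ f := Nat.pow_le_pow_right hp.pos hf2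
  rw [hf] at hord
  have hordi : orderOf ω⁻¹ = p ^ f - 1 := by rw [orderOf_inv, hord]
  have hV : (p : ℂ) ∈ V.nonunits := by
    classical
    have := hred (fun x => if x = 1 then p else 0) ?_
    · convert this using 1
      simp
    · have hc : CharP F p := charP_of_injective_algebraMap (algebraMap (ZMod p) F).injective p
      simp
  have hω1 : ω⁻¹ ≠ 1 := by
    intro h
    rw [h, orderOf_one] at hordi
    omega
  have h1 := gauss_teich hf hf2 V hV ω hred hω1
  set Q := p ^ f - 1 with hQ
  obtain ⟨M, hM⟩ := hN
  obtain ⟨a, ha⟩ := hall χ⁻¹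
  have ha' : χ = ω⁻¹ ^ a := by rw [inv_pow, ← ha, inv_inv]
  have hM0 : 0 < M := by
    rcases Nat.eq_zero_or_pos M with h | h
    · rw [h] at hM; omega
    · exact h
  have hMa : M ∣ a := by
    have h2 : ω⁻¹ ^ (a * N) = 1 := by rw [pow_mul, ← ha', ← hχ, pow_orderOf_eq_one]
    have h3 := orderOf_dvd_of_pow_eq_one h2
    rw [hordi, hM, mul_comm N] at h3
    exact Nat.dvd_of_mul_dvd_mul_right hN0 h3
  obtain ⟨k, rfl⟩ := hMa
  have hk : k.Coprime N := by
    have h2 := orderOf_pow (n := M * k) ω⁻¹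
    rw [← ha', hχ, hordi, hM, mul_comm N M, Nat.gcd_mul_left, Nat.mul_div_mul_left _ _ hM0] at h2
    have h4 := Nat.div_mul_cancel (Nat.gcd_dvd_left N k)
    rw [← h2] at h4
    have : N.gcd k = 1 := Nat.eq_of_mul_eq_mul_left hN0 (by rw [h4, mul_one])
    rwa [Nat.gcd_comm] at this
  refine ⟨V, hV, k, hk, ?_⟩
  intro m E hE
  let y : ℕ → ℕ := fun i => (p ^ i * (k * m)) % N
  have hy : ∀ i, y (i + 1) = (p * y i) % N := by
    intro i
    simp only [y]
    rw [Nat.mul_mod_mod, pow_succ]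
    congr 1; ring
  let e : ℕ → ℕ := fun i => (p * y i) / N
  have hye : ∀ i, p * y i = N * e i + y (i + 1) := by
    intro i
    rw [hy]
    exact (Nat.div_add_mod _ _).symm
  have hyf : y f = y 0 := by
    have h2 : p ^ f = N * M + 1 := by omega
    simp only [y, h2, pow_zero, one_mul, add_mul]
    rw [mul_assoc, Nat.mul_add_mod]
  let A : ℕ → ℕ := fun n => Nat.rec 0 (fun n a => p * a + e n) n
  have hA0 : A 0 = 0 := rfl
  have hA : ∀ n, A (n + 1) = p * A n + e n := fun n => rfl
  have hpA : ∀ n, p ^ n * y 0 = y n + N * A n := by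
    intro n
    induction n with
    | zero => simp [hA0]
    | succ n ih =>
      rw [pow_succ, mul_comm _ p, mul_assoc, ih, hA, mul_add, hye]; ring
  have hAf : A f = M * y 0 := by
    have h2 := hpA f
    have h3 : p ^ f = N * M + 1 := by omega
    rw [hyf, h3] at h2
    have h4 : N * (M * y 0) = N * A f := by nlinarith
    exact (Nat.eq_of_mul_eq_mul_left hN0 h4).symm
  have hlt : A f < Q := by
    rw [hAf, hM, mul_comm N]
    exact Nat.mul_lt_mul_of_pos_left (Nat.mod_lt _ hN0) hM0
  have hsum : ∑ i ∈ Finset.range f, e i = (p - 1) * E := by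
    have h2 : ∑ i ∈ Finset.range f, p * y i =
      ∑ i ∈ Finset.range f, N * e i + ∑ i ∈ Finset.range f, y (i + 1) := by
      rw [← Finset.sum_add_distrib]
      exact Finset.sum_congr rfl fun i _ => hye i
    have h3 : ∑ i ∈ Finset.range f, y (i + 1) = ∑ i ∈ Finset.range f, y i := by
      have h4 := Finset.sum_range_succ y f
      have h5 := Finset.sum_range_succ' y f
      omega
    rw [h3, ← Finset.mul_sum, ← Finset.mul_sum] at h2
    have hE' : ∑ i ∈ Finset.range f, y i = N * E := hE
    rw [hE'] at h2
    apply Nat.eq_of_mul_eq_mul_left hN0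
    obtain ⟨p', hp'⟩ : ∃ p', p = p' + 1 := ⟨p - 1, by have := hp.pos; omega⟩
    rw [hp'] at h2
    rw [hp', Nat.add_sub_cancel]
    nlinarith
  obtain ⟨c, hc, ec⟩ := stick_digits V ω⁻¹ _ h1 Q hordi e A hA0 hA f hlt
  have hχm : ω⁻¹ ^ A f = χ ^ m := by
    rw [hAf, ha', ← pow_mul, pow_eq_pow_iff_modEq, hordi, hM, mul_comm N M, mul_assoc]
    apply Nat.ModEq.mul_left'
    simp only [y, pow_zero, one_mul]
    exact Nat.mod_modEq _ _
  rw [hsum, hχm, pow_mul] at ec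
  obtain ⟨d, hd, ed⟩ := p_eq_pi_pow p hp V
  refine ⟨d ^ E * c, V.mul_mem _ _ (pow_mem hd E) hc, ?_⟩
  rw [ed, mul_pow, ec, mul_assoc]

end


open Complex Polynomial IntermediateField
set_option linter.unusedSectionVars false

theorem half_pow (p l r : ℕ) (hl : l.Prime) (hl2 : l ≠ 2) (hr : 1 ≤ r)
    (ho : orderOf (p : ZMod (l ^ r)) = Nat.totient (l ^ r)) :
    ((l ^ r : ℕ) : ℤ) ∣ (p : ℤ) ^ (Nat.totient (l ^ r) / 2) + 1 := by
  have hlr : 2 < l ^ r := lt_of_lt_of_le (lt_of_le_of_ne hl.two_le (Ne.symm hl2)) (Nat.le_self_pow (by omega) l)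
  have hev : Even (Nat.totient (l ^ r)) := Nat.totient_even hlr
  have hpos : 0 < Nat.totient (l ^ r) := Nat.totient_pos.2 (by omega)
  set n := Nat.totient (l ^ r) / 2 with hn
  have h2n : Nat.totient (l ^ r) = n * 2 := by rw [hn]; exact (Nat.div_mul_cancel hev.two_dvd).symm
  have h1 : ((l ^ r : ℕ) : ℤ) ∣ ((p : ℤ) ^ n + 1) * ((p : ℤ) ^ n - 1) := by
    rw [← ZMod.intCast_zmod_eq_zero_iff_dvd]
    have := pow_orderOf_eq_one (p : ZMod (l ^ r))
    rw [ho, h2n, pow_mul] at this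
    push_cast
    linear_combination this
  have hlp : Prime (l : ℤ) := Nat.prime_iff_prime_int.1 hl
  by_cases hd : (l : ℤ) ∣ (p : ℤ) ^ n - 1
  · exfalso
    have hnd : ¬ (l : ℤ) ∣ (p : ℤ) ^ n + 1 := by
      intro h
      have h2 : (l : ℤ) ∣ 2 := by
        have := dvd_sub h hd
        ring_nf at this; exact this
      have := (Nat.prime_dvd_prime_iff_eq hl Nat.prime_two).1 (by exact_mod_cast h2)
      exact hl2 this
    have hc : IsCoprime ((l ^ r : ℕ) : ℤ) ((p : ℤ) ^ n + 1) := by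
      push_cast
      exact ((Prime.coprime_iff_not_dvd hlp).2 hnd).pow_left
    have h3 := hc.dvd_of_dvd_mul_left h1
    rw [← ZMod.intCast_zmod_eq_zero_iff_dvd] at h3
    have h4 : (p : ZMod (l ^ r)) ^ n = 1 := by
      push_cast at h3 ⊢
      linear_combination h3
    have := orderOf_dvd_of_pow_eq_one h4
    rw [ho, h2n] at this
    have := Nat.le_of_dvd (by omega) this
    omega
  · have hc : IsCoprime ((l ^ r : ℕ) : ℤ) ((p : ℤ) ^ n - 1) := by
      push_cast
      exact ((Prime.coprime_iff_not_dvd hlp).2 hd).pow_left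
    exact hc.dvd_of_dvd_mul_right h1

theorem half_tot (l r : ℕ) (hl : l.Prime) (hl2 : l ≠ 2) (hr : 1 ≤ r) :
    Nat.totient (l ^ r) / 2 = l ^ (r - 1) * (l / 2) := by
  rw [Nat.totient_prime_pow hl (by omega)]
  have : l % 2 = 1 := hl.eq_two_or_odd.resolve_left hl2
  rw [show l - 1 = (l / 2) * 2 by omega, ← mul_assoc, Nat.mul_div_cancel _ (by norm_num)]

theorem jacobi_neg_one (p l r : ℕ) (hl : l.Prime) (hl2 : l ≠ 2) (hr : 1 ≤ r)
    (ho : orderOf (p : ZMod (l ^ r)) = Nat.totient (l ^ r)) : jacobiSym p l = -1 := by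
  have : Fact l.Prime := ⟨hl⟩
  have h1 := half_pow p l r hl hl2 hr ho
  have h2 : (l : ℤ) ∣ (p : ℤ) ^ (Nat.totient (l ^ r) / 2) + 1 := by
    refine dvd_trans ?_ h1
    exact_mod_cast dvd_pow_self l (by omega)
  rw [half_tot l r hl hl2 hr, mul_comm, pow_mul, ← ZMod.intCast_zmod_eq_zero_iff_dvd] at h2
  push_cast at h2
  rw [ZMod.pow_card_pow] at h2
  rw [← jacobiSym.legendreSym.to_jacobiSym]
  have h3 := legendreSym.eq_pow l p
  have h4 : ((p : ℤ) : ZMod l) ≠ 0 := by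
    intro h0
    push_cast at h0
    rw [h0, zero_pow (by have := hl.two_le; omega)] at h2
    simp at h2
  rcases legendreSym.eq_one_or_neg_one l h4 with h | h
  · exfalso
    rw [h] at h3
    push_cast at h3
    rw [← h3] at h2
    have : ((2 : ℕ) : ZMod l) = 0 := by push_cast; linear_combination h2
    rw [ZMod.natCast_eq_zero_iff] at this
    exact hl2 ((Nat.prime_dvd_prime_iff_eq hl Nat.prime_two).1 this)
  · exact h

structure Cfg (p l1 l2 r1 r2 N f : ℕ) : Prop where
  hp : p.Prime
  hl1 : l1.Prime
  hl2 : l2.Prime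
  hne : l1 ≠ l2
  hl1m : l1 % 4 = 3
  hl2m : l2 % 4 = 1
  hr1 : 1 ≤ r1
  hr2 : 1 ≤ r2
  hN : N = l1 ^ r1 * l2 ^ r2
  hNp : Nat.gcd N p = 1
  hord1 : orderOf (p : ZMod (l1 ^ r1)) = Nat.totient (l1 ^ r1)
  hord2 : orderOf (p : ZMod (l2 ^ r2)) = Nat.totient (l2 ^ r2)
  hf : orderOf (p : ZMod N) = f
  hind : f = Nat.totient N / 2

namespace Cfg
variable {p l1 l2 r1 r2 N f : ℕ} (c : Cfg p l1 l2 r1 r2 N f)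
include c

theorem l1_ne : l1 ≠ 2 := by have := c.hl1m; omega
theorem l2_ne : l2 ≠ 2 := by have := c.hl2m; omega
theorem l1_ge : 3 ≤ l1 := by have := c.hl1m; omega
theorem l2_ge : 5 ≤ l2 := by have := c.hl2m; have := c.hl2.two_le; omega
theorem D_ge : 15 ≤ l1 * l2 := Nat.mul_le_mul c.l1_ge c.l2_ge
theorem cop : l1.Coprime l2 := (Nat.coprime_primes c.hl1 c.hl2).2 c.hne
theorem D_mod : (l1 * l2) % 4 = 3 := by rw [Nat.mul_mod, c.hl1m, c.hl2m]
theorem D_sq : Squarefree (l1 * l2) :=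
  (Nat.squarefree_mul c.cop).2 ⟨c.hl1.prime.squarefree, c.hl2.prime.squarefree⟩
theorem D_dvd : l1 * l2 ∣ N := by
  rw [c.hN]
  have := c.hr1; have := c.hr2
  exact mul_dvd_mul (dvd_pow_self _ (by omega)) (dvd_pow_self _ (by omega))
theorem N_pos : 0 < N := by
  rw [c.hN]; have := c.hl1.pos; have := c.hl2.pos; positivity
theorem N_ge : 15 ≤ N := c.D_ge.trans (Nat.le_of_dvd c.N_pos c.D_dvd)
theorem jp1 : jacobiSym p l1 = -1 := jacobi_neg_one p l1 r1 c.hl1 c.l1_ne c.hr1 c.hord1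
theorem jp2 : jacobiSym p l2 = -1 := jacobi_neg_one p l2 r2 c.hl2 c.l2_ne c.hr2 c.hord2
theorem jpD : jacobiSym p (l1 * l2) = 1 := by
  have := NeZero.mk c.hl1.ne_zero; have := NeZero.mk c.hl2.ne_zero
  rw [jacobiSym.mul_right, c.jp1, c.jp2]; rfl
theorem cop_pr : (l1 ^ r1).Coprime (l2 ^ r2) := Nat.Coprime.pow _ _ c.cop
theorem jneg : jacobiSym (-1) (l1 * l2) = -1 := by
  have h := c.D_mod
  rw [jacobiSym.at_neg_one (Nat.odd_iff.2 (by omega)), ZMod.χ₄_nat_three_mod_four h]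

theorem Np1 : IsCoprime ((p : ℤ) - 1) (N : ℤ) := by
  have key : ∀ l : ℕ, l.Prime → jacobiSym p l = -1 → ¬ (l : ℤ) ∣ (p : ℤ) - 1 := by
    intro l hl hj hd
    have : jacobiSym p l = jacobiSym 1 l := by
      apply jacobiSym.mod_left'
      exact (Int.modEq_iff_dvd.2 hd).symm
    rw [hj, jacobiSym.one_left] at this
    omega
  rw [c.hN]
  push_cast
  refine IsCoprime.mul_right (IsCoprime.pow_right ?_) (IsCoprime.pow_right ?_)
  · exact ((Prime.coprime_iff_not_dvd (Nat.prime_iff_prime_int.1 c.hl1)).2 (key _ c.hl1 c.jp1)).symm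
  · exact ((Prime.coprime_iff_not_dvd (Nat.prime_iff_prime_int.1 c.hl2)).2 (key _ c.hl2 c.jp2)).symm

theorem tot1 : ∃ a, Nat.totient (l1 ^ r1) = 2 * (2 * a + 1) := by
  have h := half_tot l1 r1 c.hl1 c.l1_ne c.hr1
  have hev : Even (Nat.totient (l1 ^ r1)) := Nat.totient_even
    (lt_of_lt_of_le (by have := c.l1_ge; omega) (Nat.le_self_pow (by have := c.hr1; omega) l1))
  have hodd : Odd (l1 ^ (r1 - 1) * (l1 / 2)) := by
    have := c.hl1m
    exact (Odd.pow (Nat.odd_iff.2 (by omega))).mul (Nat.odd_iff.2 (by omega))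
  obtain ⟨a, ha⟩ := hodd
  refine ⟨a, ?_⟩
  rw [← ha, ← h, Nat.mul_div_cancel' hev.two_dvd]

theorem tot2 : ∃ a, Nat.totient (l2 ^ r2) = 4 * (a + 1) := by
  have h : 4 ∣ Nat.totient (l2 ^ r2) := by
    rw [Nat.totient_prime_pow c.hl2 (by have := c.hr2; omega)]
    have := c.hl2m
    exact Dvd.dvd.mul_left (by omega) _
  obtain ⟨a, ha⟩ := h
  have : 0 < Nat.totient (l2 ^ r2) := Nat.totient_pos.2 (by have := c.hl2.pos; positivity)
  exact ⟨a - 1, by omega⟩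

theorem totN : Nat.totient N = Nat.totient (l1 ^ r1) * Nat.totient (l2 ^ r2) := by
  rw [c.hN, Nat.totient_mul c.cop_pr]

theorem f_half : ∃ a b, Nat.totient (l1 ^ r1) = 2 * (2 * a + 1) ∧ Nat.totient (l2 ^ r2) = 4 * (b + 1)
    ∧ f / 2 = (2 * a + 1) * (2 * (b + 1)) ∧ f = 2 * (f / 2) ∧ Nat.totient N = 2 * f := by
  obtain ⟨a, ha⟩ := c.tot1
  obtain ⟨b, hb⟩ := c.tot2
  have h1 : Nat.totient N = 2 * (2 * ((2 * a + 1) * (2 * (b + 1)))) := by rw [c.totN, ha, hb]; ring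
  have h2 := c.hind
  refine ⟨a, b, ha, hb, ?_, ?_, ?_⟩ <;> omega

theorem f_ge : 4 ≤ f := by
  obtain ⟨a, b, h1, h2, h3, h4, h5⟩ := c.f_half
  have : 1 * 2 ≤ (2 * a + 1) * (2 * (b + 1)) := Nat.mul_le_mul (by omega) (by omega)
  omega

theorem pf_mod1 : (l1 : ℤ) ∣ (p : ℤ) ^ (f / 2) - 1 := by
  obtain ⟨a, b, h1, h2, h3, h4, h5⟩ := c.f_half
  have h := half_pow p l1 r1 c.hl1 c.l1_ne c.hr1 c.hord1
  have h' : (l1 : ℤ) ∣ (p : ℤ) ^ (Nat.totient (l1 ^ r1) / 2) + 1 :=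
    dvd_trans (by exact_mod_cast dvd_pow_self l1 (by have := c.hr1; omega)) h
  rw [show Nat.totient (l1 ^ r1) / 2 = 2 * a + 1 by omega] at h'
  rw [h3, pow_mul, pow_mul ((p : ℤ) ^ (2 * a + 1)) 2]
  refine dvd_trans h' ?_
  refine dvd_trans ?_ (sub_one_dvd_pow_sub_one _ _)
  exact ⟨(p : ℤ) ^ (2 * a + 1) - 1, by ring⟩

theorem pf_mod2 : (l2 : ℤ) ∣ (p : ℤ) ^ (f / 2) + 1 := by
  obtain ⟨a, b, h1, h2, h3, h4, h5⟩ := c.f_half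
  have h := half_pow p l2 r2 c.hl2 c.l2_ne c.hr2 c.hord2
  have h' : (l2 : ℤ) ∣ (p : ℤ) ^ (Nat.totient (l2 ^ r2) / 2) + 1 :=
    dvd_trans (by exact_mod_cast dvd_pow_self l2 (by have := c.hr2; omega)) h
  rw [show Nat.totient (l2 ^ r2) / 2 = 2 * (b + 1) by omega] at h'
  rw [h3, mul_comm, pow_mul]
  refine dvd_trans h' ?_
  have := Odd.add_dvd_pow_add_pow ((p : ℤ) ^ (2 * (b + 1))) 1 (n := 2 * a + 1) ⟨a, rfl⟩
  simpa using this

end Cfg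


open Complex Polynomial IntermediateField
set_option linter.unusedSectionVars false

noncomputable def jc (D N : ℕ) (x : ZMod N) : ℤ := jacobiSym x.val D

theorem jc_nat (D N : ℕ) (h : D ∣ N) (n : ℕ) : jc D N (n : ZMod N) = jacobiSym n D := by
  unfold jc
  rw [ZMod.val_natCast]
  apply jacobiSym.mod_left'
  have : n % N ≡ n [MOD D] := (Nat.mod_modEq n N).of_dvd h
  exact_mod_cast this

theorem jc_mul (D N : ℕ) [NeZero N] (h : D ∣ N) (x y : ZMod N) : jc D N (x * y) = jc D N x * jc D N y := by
  obtain ⟨a, rfl⟩ := ZMod.natCast_zmod_surjective x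
  obtain ⟨b, rfl⟩ := ZMod.natCast_zmod_surjective y
  rw [← Nat.cast_mul, jc_nat _ _ h, jc_nat _ _ h, jc_nat _ _ h]
  push_cast
  rw [jacobiSym.mul_left]

theorem sum_range_mul' {M : Type*} [AddCommMonoid M] (g : ℕ → M) (a b : ℕ) :
    ∑ x ∈ Finset.range (a * b), g x = ∑ q ∈ Finset.range b, ∑ y ∈ Finset.range a, g (a * q + y) := by
  induction b with
  | zero => simp
  | succ b ih => rw [mul_add, mul_one, Finset.sum_range_add, ih, Finset.sum_range_succ]

theorem jac_period (D a y : ℕ) (h : D ∣ a) (q : ℕ) : jacobiSym ((a * q + y : ℕ) : ℤ) D = jacobiSym y D := by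
  apply jacobiSym.mod_left'
  obtain ⟨s, rfl⟩ := h
  push_cast
  rw [mul_assoc, Int.mul_add_emod_self_left]

theorem sum_jac_zero (D : ℕ) (hD : D % 4 = 3) : ∑ y ∈ Finset.range D, jacobiSym y D = 0 := by
  have : NeZero D := ⟨by omega⟩
  have h := MulChar.sum_eq_zero_of_ne_one (psiC_ne_one D hD)
  rw [zmod_sum_eq] at h
  simp only [psiC_nat] at h
  exact_mod_cast h

theorem sum_jac_big (D s lam : ℕ) (hD : D % 4 = 3) :
    ∑ x ∈ Finset.range (lam * (D * s)), jacobiSym x D * ((lam * x % (lam * (D * s)) : ℕ) : ℤ) =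
      lam * lam * s * ∑ k ∈ Finset.range D, (k : ℤ) * jacobiSym k D := by
  rw [mul_comm lam (D * s), sum_range_mul']
  have e : ∀ q ∈ Finset.range lam, ∑ y ∈ Finset.range (D * s), jacobiSym ((D * s * q + y : ℕ) : ℤ) D *
      ((lam * (D * s * q + y) % (D * s * lam) : ℕ) : ℤ) =
      lam * (s * ∑ k ∈ Finset.range D, (k : ℤ) * jacobiSym k D) := by
    intro q _
    have : ∀ y ∈ Finset.range (D * s), jacobiSym ((D * s * q + y : ℕ) : ℤ) D *
      ((lam * (D * s * q + y) % (D * s * lam) : ℕ) : ℤ) = lam * (jacobiSym y D * y) := by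
      intro y hy
      rw [jac_period D (D * s) y (dvd_mul_right _ _), mul_comm (D * s) lam, Nat.mul_mod_mul_left,
        Nat.mul_add_mod, Nat.mod_eq_of_lt (Finset.mem_range.1 hy)]
      push_cast; ring
    rw [Finset.sum_congr rfl this, ← Finset.mul_sum, sum_range_mul']
    congr 1
    have : ∀ q ∈ Finset.range s, ∑ y ∈ Finset.range D, jacobiSym ((D * q + y : ℕ) : ℤ) D * ((D * q + y : ℕ) : ℤ)
        = ∑ k ∈ Finset.range D, (k : ℤ) * jacobiSym k D := by
      intro q _
      have h0 : ∀ y ∈ Finset.range D, jacobiSym ((D * q + y : ℕ) : ℤ) D * ((D * q + y : ℕ) : ℤ) =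
          (D * q) * jacobiSym y D + (y : ℤ) * jacobiSym y D := by
        intro y _
        rw [jac_period D D y dvd_rfl]; push_cast; ring
      rw [Finset.sum_congr rfl h0, Finset.sum_add_distrib, ← Finset.mul_sum, sum_jac_zero D hD, mul_zero, zero_add]
    rw [Finset.sum_congr rfl this, Finset.sum_const, Finset.card_range, nsmul_eq_mul]
  rw [Finset.sum_congr rfl e, Finset.sum_const, Finset.card_range, nsmul_eq_mul]
  ring

namespace Cfg
variable {p l1 l2 r1 r2 N f : ℕ} (c : Cfg p l1 l2 r1 r2 N f)
include c

theorem neN : NeZero N := ⟨c.N_pos.ne'⟩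

theorem pcop : p.Coprime N := (Nat.coprime_comm.1 c.hNp)

theorem jc_p (i : ℕ) : jc (l1 * l2) N ((p : ZMod N) ^ i) = 1 := by
  rw [← Nat.cast_pow, jc_nat _ _ c.D_dvd]
  push_cast
  rw [jacobiSym.pow_left, c.jpD, one_pow]

theorem jc_neg1 : jc (l1 * l2) N (-1) = -1 := by
  have e : (-1 : ZMod N) = ((N - 1 : ℕ) : ZMod N) := by
    rw [Nat.cast_sub c.N_pos]; simp
  rw [e, jc_nat _ _ c.D_dvd, ← c.jneg]
  apply jacobiSym.mod_left'
  obtain ⟨s, hs⟩ := c.D_dvd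
  have := c.N_pos
  have h2 : ((N - 1 : ℕ) : ℤ) = -1 + ((l1 * l2 : ℕ) : ℤ) * s := by
    rw [Nat.cast_sub c.N_pos]
    conv_lhs => rw [hs]
    push_cast; ring
  rw [h2, Int.add_mul_emod_self_left]

noncomputable def P : (ZMod N)ˣ := ZMod.unitOfCoprime p c.pcop

theorem P_val : ((c.P : (ZMod N)ˣ) : ZMod N) = p := ZMod.coe_unitOfCoprime _ _

theorem P_ord : orderOf c.P = f := by
  rw [← orderOf_units, c.P_val, c.hf]

theorem neg_not_mem : (-1 : (ZMod N)ˣ) ∉ Subgroup.zpowers c.P := by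
  have := c.neN
  intro h
  rw [← mem_powers_iff_mem_zpowers] at h
  obtain ⟨i, hi⟩ := h
  have h1 := c.jc_p i
  have h2 : (p : ZMod N) ^ i = -1 := by
    rw [← c.P_val, ← Units.val_pow_eq_pow_val]
    have : c.P ^ i = -1 := hi
    rw [this]; simp
  rw [h2, c.jc_neg1] at h1
  omega

theorem index_two : (Subgroup.zpowers c.P).index = 2 := by
  have := c.neN
  have h := Subgroup.card_mul_index (Subgroup.zpowers c.P)
  rw [Nat.card_zpowers, c.P_ord, Nat.card_eq_fintype_card, ZMod.card_units_eq_totient] at h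
  obtain ⟨_, _, _, _, _, _, h5⟩ := c.f_half
  rw [h5, mul_comm 2 f] at h
  exact Nat.eq_of_mul_eq_mul_left (by have := c.f_ge; omega) h

theorem neg_mem_iff (u : (ZMod N)ˣ) : -u ∈ Subgroup.zpowers c.P ↔ u ∉ Subgroup.zpowers c.P := by
  rw [neg_eq_neg_one_mul u, Subgroup.mul_mem_iff_of_index_two c.index_two]
  have := c.neg_not_mem
  tauto

theorem mem_iff (u : (ZMod N)ˣ) : u ∈ Subgroup.zpowers c.P ↔ ∃ i < f, c.P ^ i = u := by
  have := c.neN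
  rw [mem_zpowers_iff_mem_range_orderOf, c.P_ord]
  simp

theorem sum_units {M : Type*} [AddCommMonoid M] (G : ZMod N → M) :
    haveI := c.neN
    ∑ u : (ZMod N)ˣ, G u = ∑ i ∈ Finset.range f, G ((p : ZMod N) ^ i) +
      ∑ i ∈ Finset.range f, G (-(p : ZMod N) ^ i) := by
  classical
  have := c.neN
  have key : ∀ G : ZMod N → M, ∑ u : (ZMod N)ˣ with u ∈ Subgroup.zpowers c.P, G u =
      ∑ i ∈ Finset.range f, G ((p : ZMod N) ^ i) := by
    intro G
    symm
    refine Finset.sum_bij (fun i _ => c.P ^ i) ?_ ?_ ?_ ?_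
    · intro i _
      simp only [Finset.mem_filter, Finset.mem_univ, true_and]
      exact Subgroup.npow_mem_zpowers _ _
    · intro i hi j hj h
      refine pow_injOn_Iio_orderOf ?_ ?_ h
      · rw [c.P_ord]; simpa using hi
      · rw [c.P_ord]; simpa using hj
    · intro u hu
      simp only [Finset.mem_filter, Finset.mem_univ, true_and] at hu
      obtain ⟨i, hi, h⟩ := (c.mem_iff u).1 hu
      exact ⟨i, Finset.mem_range.2 hi, h⟩
    · intro i _
      rw [Units.val_pow_eq_pow_val, c.P_val]
  rw [← Finset.sum_filter_add_sum_filter_not Finset.univ (fun u => u ∈ Subgroup.zpowers c.P), key G,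
    ← key (fun x => G (-x))]
  congr 1
  refine Finset.sum_bij (fun u _ => -u) ?_ ?_ ?_ ?_
  · intro u hu
    simp only [Finset.mem_filter, Finset.mem_univ, true_and] at hu ⊢
    rwa [c.neg_mem_iff]
  · intro u _ v _ h
    exact neg_injective h
  · intro u hu
    simp only [Finset.mem_filter, Finset.mem_univ, true_and] at hu
    refine ⟨-u, ?_, neg_neg u⟩
    simp only [Finset.mem_filter, Finset.mem_univ, true_and]
    rw [c.neg_mem_iff]; exact not_not.2 hu
  · intro u _; simp

/-- every residue coprime to `N` is plus or minus a power of `p`. -/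
theorem dich (a : ℕ) (ha : a.Coprime N) :
    (jacobiSym a (l1 * l2) = 1 ∧ ∃ i < f, (a : ZMod N) = (p : ZMod N) ^ i) ∨
    (jacobiSym a (l1 * l2) = -1 ∧ ∃ i < f, (a : ZMod N) = -(p : ZMod N) ^ i) := by
  have := c.neN
  rw [← jc_nat _ _ c.D_dvd]
  set u := ZMod.unitOfCoprime a ha
  have hu : (u : ZMod N) = a := ZMod.coe_unitOfCoprime _ _
  by_cases h : u ∈ Subgroup.zpowers c.P
  · left
    obtain ⟨i, hi, h⟩ := (c.mem_iff u).1 h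
    have e : (a : ZMod N) = (p : ZMod N) ^ i := by
      rw [← hu, ← h, Units.val_pow_eq_pow_val, c.P_val]
    exact ⟨by rw [e, c.jc_p], i, hi, e⟩
  · right
    rw [← c.neg_mem_iff] at h
    obtain ⟨i, hi, h⟩ := (c.mem_iff _).1 h
    have e : (a : ZMod N) = -(p : ZMod N) ^ i := by
      rw [← hu, ← c.P_val, ← Units.val_pow_eq_pow_val, h]; simp
    exact ⟨by rw [e, neg_eq_neg_one_mul, jc_mul _ _ c.D_dvd, c.jc_p, c.jc_neg1]; rfl, i, hi, e⟩

end Cfg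


open Complex Polynomial IntermediateField
set_option linter.unusedSectionVars false

namespace Cfg
variable {p l1 l2 r1 r2 N f : ℕ} (c : Cfg p l1 l2 r1 r2 N f)
include c

theorem S_dvd (k m : ℕ) : N ∣ ∑ i ∈ Finset.range f, (p ^ i * (k * m)) % N := by
  rw [← ZMod.natCast_eq_zero_iff]
  push_cast
  have e : ∀ i ∈ Finset.range f, ((p ^ i * (k * m) % N : ℕ) : ZMod N) = (p : ZMod N) ^ i * (k * m) := by
    intro i _
    rw [ZMod.natCast_mod]; push_cast; ring
  rw [Finset.sum_congr rfl e, ← Finset.sum_mul]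
  have h := mul_geom_sum (p : ZMod N) f
  have h1 : (p : ZMod N) ^ f = 1 := by
    have := pow_orderOf_eq_one (p : ZMod N)
    rwa [c.hf] at this
  obtain ⟨a, b, hab⟩ := c.Np1
  have hab' := congrArg (Int.cast : ℤ → ZMod N) hab
  push_cast at hab'
  rw [ZMod.natCast_self] at hab'
  rw [h1] at h
  have : ∑ i ∈ Finset.range f, (p : ZMod N) ^ i = 0 := by
    linear_combination (-(∑ i ∈ Finset.range f, (p : ZMod N) ^ i)) * hab' + a * h
  rw [this, zero_mul]

theorem S_add (k lam : ℕ) (hk : k.Coprime N) (hl : ¬ N ∣ lam) :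
    ∑ i ∈ Finset.range f, (p ^ i * (k * lam)) % N + ∑ i ∈ Finset.range f, (p ^ i * (k * ((N - 1) * lam))) % N
      = N * f := by
  have hN := c.N_pos
  rw [← Finset.sum_add_distrib]
  have e : ∀ i ∈ Finset.range f, (p ^ i * (k * lam)) % N + (p ^ i * (k * ((N - 1) * lam))) % N = N := by
    intro i _
    have h1 : (p ^ i * (k * lam)) % N ≠ 0 := by
      intro h0
      have h0 := Nat.dvd_of_mod_eq_zero h0
      have h2 := (Nat.Coprime.pow_right i c.pcop.symm).dvd_of_dvd_mul_left h0
      exact hl (hk.symm.dvd_of_dvd_mul_left h2)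
    have h2 : N ∣ p ^ i * (k * lam) + p ^ i * (k * ((N - 1) * lam)) := by
      refine ⟨p ^ i * (k * lam), ?_⟩
      obtain ⟨n, rfl⟩ : ∃ n, N = n + 1 := ⟨N - 1, by omega⟩
      simp only [Nat.add_sub_cancel]
      ring
    have h3 := Nat.mod_eq_zero_of_dvd h2
    rw [Nat.add_mod] at h3
    have h4 := Nat.mod_lt (p ^ i * (k * lam)) hN
    have h5 := Nat.mod_lt (p ^ i * (k * ((N - 1) * lam))) hN
    obtain ⟨d, hd⟩ := Nat.dvd_of_mod_eq_zero h3
    have hd1 : 0 < d := by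
      rcases Nat.eq_zero_or_pos d with h | h
      · subst h; omega
      · exact h
    have hd2 : d < 2 := by
      by_contra h
      have : N * 2 ≤ N * d := Nat.mul_le_mul le_rfl (by omega)
      omega
    have : d = 1 := by omega
    subst this; omega
  rw [Finset.sum_congr rfl e, Finset.sum_const, Finset.card_range, smul_eq_mul, mul_comm]

theorem S_sub (k lam : ℕ) (hk : k.Coprime N) :
    ((∑ i ∈ Finset.range f, (p ^ i * (k * lam)) % N : ℕ) : ℤ) -
      ((∑ i ∈ Finset.range f, (p ^ i * (k * ((N - 1) * lam))) % N : ℕ) : ℤ)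
      = jacobiSym k (l1 * l2) * ∑ x ∈ Finset.range N, jacobiSym x (l1 * l2) * ((lam * x % N : ℕ) : ℤ) := by
  have := c.neN
  set D := l1 * l2 with hD
  have hDN : D ∣ N := c.D_dvd
  -- left side
  have hL : ∑ u : (ZMod N)ˣ, jc D N u * (((lam : ZMod N) * k * u).val : ℤ) =
      ((∑ i ∈ Finset.range f, (p ^ i * (k * lam)) % N : ℕ) : ℤ) -
      ((∑ i ∈ Finset.range f, (p ^ i * (k * ((N - 1) * lam))) % N : ℕ) : ℤ) := by
    have h := c.sum_units (fun x => jc D N x * (((lam : ZMod N) * k * x).val : ℤ))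
    rw [h, sub_eq_add_neg, Nat.cast_sum, Nat.cast_sum, ← Finset.sum_neg_distrib]
    congr 1
    · refine Finset.sum_congr rfl fun i _ => ?_
      rw [c.jc_p, one_mul, ← ZMod.val_natCast]
      congr 2
      push_cast; ring
    · refine Finset.sum_congr rfl fun i _ => ?_
      rw [neg_eq_neg_one_mul ((p : ZMod N) ^ i), jc_mul _ _ hDN, c.jc_p, c.jc_neg1, ← ZMod.val_natCast,
        mul_one, neg_one_mul]
      congr 3
      push_cast [Nat.cast_sub c.N_pos]
      rw [ZMod.natCast_self]; ring
  have hR : ∑ u : (ZMod N)ˣ, jc D N u * (((lam : ZMod N) * u).val : ℤ) =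
      ∑ x ∈ Finset.range N, jacobiSym x D * ((lam * x % N : ℕ) : ℤ) := by
    refine Finset.sum_of_injOn (fun u => (u : ZMod N).val) ?_ ?_ ?_ ?_
    · intro u _ v _ h
      exact Units.ext (ZMod.val_injective N h)
    · intro u _
      simpa using ZMod.val_lt (u : ZMod N)
    · intro x hx hn
      have : ¬ x.Coprime N := by
        intro h
        apply hn
        refine ⟨ZMod.unitOfCoprime x h, by simp, ?_⟩
        simp only [ZMod.coe_unitOfCoprime]
        exact ZMod.val_cast_of_lt (Finset.mem_range.1 hx)
      rw [jacobiSym.eq_zero_iff.2, zero_mul]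
      refine ⟨Nat.mul_ne_zero c.hl1.ne_zero c.hl2.ne_zero, fun h => this ?_⟩
      have h' : Nat.Coprime x (l1 * l2) := by simpa [Int.gcd_natCast_natCast] using h
      rw [c.hN]
      rw [Nat.coprime_mul_iff_right] at h' ⊢
      exact ⟨h'.1.pow_right _, h'.2.pow_right _⟩
    · intro u _
      change jc D N u * _ = jacobiSym _ D * _
      unfold jc
      congr 2
      rw [ZMod.val_mul, ZMod.val_natCast, Nat.mod_mul_mod]
  have hT : jc D N k * ∑ u : (ZMod N)ˣ, jc D N u * (((lam : ZMod N) * k * u).val : ℤ) =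
      ∑ u : (ZMod N)ˣ, jc D N u * (((lam : ZMod N) * u).val : ℤ) := by
    conv_rhs => rw [← Equiv.sum_comp (Equiv.mulLeft (ZMod.unitOfCoprime k hk))]
    rw [Finset.mul_sum]
    refine Finset.sum_congr rfl fun u _ => ?_
    simp only [Equiv.coe_mulLeft, Units.val_mul, ZMod.coe_unitOfCoprime]
    rw [jc_mul _ _ hDN]
    ring_nf
  rw [← hL, ← hR, ← hT, ← mul_assoc, jc_nat _ _ hDN]
  rcases c.dich k hk with ⟨h, _⟩ | ⟨h, _⟩ <;> rw [h] <;> ring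

theorem S_main (k : ℕ) (hk : k.Coprime N) : ∃ ε : ℤ, (ε = 1 ∨ ε = -1) ∧ ∀ t1 t2, t1 < r1 → t2 < r2 →
    ∃ e e' : ℕ, ∑ i ∈ Finset.range f, (p ^ i * (k * (l1 ^ t1 * l2 ^ t2))) % N = N * e ∧
      ∑ i ∈ Finset.range f, (p ^ i * (k * ((N - 1) * (l1 ^ t1 * l2 ^ t2)))) % N = N * e' ∧ e + e' = f ∧
      (e : ℤ) - e' = ε * ((l1 ^ t1 * l2 ^ t2 : ℕ) : ℤ) * classNumSqrtNeg (l1 * l2) := by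
  have hcl := classNumSqrtNeg_formula (l1 * l2) c.D_mod c.D_sq (by have := c.D_ge; omega)
  obtain ⟨δ, hδ, hsum⟩ : ∃ δ : ℤ, (δ = 1 ∨ δ = -1) ∧ ∑ k ∈ Finset.range (l1 * l2), (k : ℤ) * jacobiSym k (l1 * l2)
      = δ * (((l1 * l2 : ℕ) : ℤ) * classNumSqrtNeg (l1 * l2)) := by
    rw [hcl]
    rcases abs_choice (∑ k ∈ Finset.range (l1 * l2), (k : ℤ) * jacobiSym k (l1 * l2)) with h | h
    · exact ⟨1, Or.inl rfl, by rw [h, one_mul]⟩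
    · exact ⟨-1, Or.inr rfl, by rw [h]; ring⟩
  refine ⟨jacobiSym k (l1 * l2) * δ, ?_, ?_⟩
  · rcases c.dich k hk with ⟨h, _⟩ | ⟨h, _⟩ <;> rcases hδ with h' | h' <;> rw [h, h'] <;> simp
  intro t1 t2 ht1 ht2
  set lam := l1 ^ t1 * l2 ^ t2 with hlam
  have hlam0 : 0 < lam := by have := c.hl1.pos; have := c.hl2.pos; positivity
  obtain ⟨s, hs⟩ : ∃ s, N = lam * (l1 * l2 * s) := by
    refine ⟨l1 ^ (r1 - t1 - 1) * l2 ^ (r2 - t2 - 1), ?_⟩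
    rw [c.hN]
    conv_lhs => rw [show r1 = t1 + 1 + (r1 - t1 - 1) by omega, show r2 = t2 + 1 + (r2 - t2 - 1) by omega]
    rw [hlam]; ring
  have hnd : ¬ N ∣ lam := by
    intro h
    have h1 := Nat.le_of_dvd hlam0 h
    have hs0 : 0 < s := by
      rcases Nat.eq_zero_or_pos s with h | h
      · subst h; have := c.N_pos; simp at hs; omega
      · exact h
    have h15 := c.D_ge
    have : lam * 15 ≤ N := by
      rw [hs]; exact Nat.mul_le_mul le_rfl (h15.trans (Nat.le_mul_of_pos_right _ hs0))
    omega
  obtain ⟨e, he⟩ := c.S_dvd k lam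
  obtain ⟨e', he'⟩ := c.S_dvd k ((N - 1) * lam)
  have hadd := c.S_add k lam hk hnd
  have hsub := c.S_sub k lam hk
  rw [he, he'] at hadd hsub
  refine ⟨e, e', he, he', ?_, ?_⟩
  · rw [← mul_add] at hadd
    exact Nat.eq_of_mul_eq_mul_left c.N_pos hadd
  · have hbig := sum_jac_big (l1 * l2) s lam c.D_mod
    rw [← hs, hsum] at hbig
    rw [hbig] at hsub
    have hN0 : (N : ℤ) ≠ 0 := by exact_mod_cast c.N_pos.ne'
    apply mul_left_cancel₀ hN0
    have hs' : (N : ℤ) = lam * ((l1 * l2 : ℕ) * s) := by exact_mod_cast hs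
    have : (N : ℤ) * (e - e') = jacobiSym k (l1 * l2) * (lam * lam * s * (δ * (((l1 * l2 : ℕ) : ℤ) * classNumSqrtNeg (l1 * l2)))) := by
      rw [← hsub]; push_cast; ring
    rw [this]
    conv_rhs => rw [hs']
    ring

end Cfg


open Complex Polynomial IntermediateField
set_option linter.unusedSectionVars false

theorem sum_roots_pow_rat (n j : ℕ) (hn : 0 < n) :
    ∃ q : ℚ, ∑ μ ∈ nthRootsFinset n (1 : ℂ), μ ^ j = q := by
  have hz := Complex.isPrimitiveRoot_exp n hn.ne'
  set z := Complex.exp (2 * Real.pi * I / n)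
  have e : ∑ μ ∈ nthRootsFinset n (1 : ℂ), μ ^ j = ∑ i ∈ Finset.range n, (z ^ j) ^ i := by
    symm
    refine Finset.sum_bij (fun i _ => z ^ i) ?_ ?_ ?_ ?_
    · intro i _
      rw [mem_nthRootsFinset hn, ← pow_mul, mul_comm, pow_mul, hz.pow_eq_one, one_pow]
    · intro i hi k hk h
      exact hz.pow_inj (Finset.mem_range.1 hi) (Finset.mem_range.1 hk) h
    · intro μ hμ
      rw [mem_nthRootsFinset hn] at hμ
      have : NeZero n := ⟨hn.ne'⟩
      obtain ⟨i, hi, h⟩ := hz.eq_pow_of_pow_eq_one hμ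
      exact ⟨i, Finset.mem_range.2 hi, h⟩
    · intro i _
      rw [← pow_mul, ← pow_mul, mul_comm]
  rw [e]
  by_cases h : z ^ j = 1
  · exact ⟨n, by rw [h]; simp⟩
  · refine ⟨0, ?_⟩
    have := geom_sum_mul (z ^ j) n
    rw [← pow_mul, mul_comm j n, pow_mul, hz.pow_eq_one, one_pow, sub_self] at this
    simpa using (mul_eq_zero.1 this).resolve_right (sub_ne_zero.2 h)

theorem sum_prim_pow_rat (n j : ℕ) (hn : 0 < n) :
    ∃ q : ℚ, ∑ μ ∈ primitiveRoots n ℂ, μ ^ j = q := by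
  classical
  induction n using Nat.strong_induction_on with
  | _ n ih =>
    obtain ⟨q, hq⟩ := sum_roots_pow_rat n j hn
    rw [IsPrimitiveRoot.nthRoots_one_eq_biUnion_primitiveRoots, Finset.sum_biUnion] at hq
    · rw [← Nat.cons_self_properDivisors hn.ne', Finset.sum_cons] at hq
      have : ∃ r : ℚ, ∑ i ∈ n.properDivisors, ∑ μ ∈ primitiveRoots i ℂ, μ ^ j = r := by
        choose! g hg using fun i (hi : i ∈ n.properDivisors) =>
          ih i (Nat.mem_properDivisors.1 hi).2 (Nat.pos_of_mem_properDivisors hi)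
        exact ⟨∑ i ∈ n.properDivisors, g i, by rw [Finset.sum_congr rfl hg]; push_cast; rfl⟩
      obtain ⟨r, hr⟩ := this
      refine ⟨q - r, ?_⟩
      push_cast
      rw [← hq, ← hr]; ring
    · intro a _ b _ hab
      exact IsPrimitiveRoot.disjoint hab

theorem rat_of_conj_inv (N : ℕ) (hN : 0 < N) (P : ℚ[X]) (z : ℂ)
    (h : ∀ μ ∈ primitiveRoots N ℂ, aeval μ P = z) : ∃ q : ℚ, z = q := by
  have h1 : ∑ μ ∈ primitiveRoots N ℂ, aeval μ P = (Nat.totient N : ℂ) * z := by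
    rw [Finset.sum_congr rfl h, Finset.sum_const, Complex.card_primitiveRoots, nsmul_eq_mul]
  have h2 : ∑ μ ∈ primitiveRoots N ℂ, aeval μ P =
      ∑ j ∈ Finset.range (P.natDegree + 1), (P.coeff j : ℂ) * ∑ μ ∈ primitiveRoots N ℂ, μ ^ j := by
    simp only [aeval_eq_sum_range]
    rw [Finset.sum_comm]
    refine Finset.sum_congr rfl fun j _ => ?_
    rw [Finset.mul_sum]
    refine Finset.sum_congr rfl fun μ _ => ?_
    rw [Algebra.smul_def]; rfl
  choose g hg using fun j => sum_prim_pow_rat N j hN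
  refine ⟨(∑ j ∈ Finset.range (P.natDegree + 1), P.coeff j * g j) / Nat.totient N, ?_⟩
  have h0 : (Nat.totient N : ℂ) ≠ 0 := by exact_mod_cast (Nat.totient_pos.2 hN).ne'
  push_cast
  rw [eq_div_iff h0, mul_comm, ← h1, h2]
  refine Finset.sum_congr rfl fun j _ => ?_
  rw [hg]

section
variable {p : ℕ} [Fact p.Prime] {F : Type} [Field F] [Fintype F] [Algebra (ZMod p) F]

theorem gauss_shift (χ : MulChar F ℂ) (a : ZMod p) (ha : a ≠ 0) (hχ : χ (algebraMap (ZMod p) F a) = 1) :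
    ∑ x : F, χ x * psiF p F (a • x) = gaussSum χ (psiF p F) := by
  have h0 : algebraMap (ZMod p) F a ≠ 0 := by simpa using ha
  unfold gaussSum
  conv_rhs => rw [← Equiv.sum_comp (Equiv.mulLeft₀ (algebraMap (ZMod p) F a) h0)]
  refine Finset.sum_congr rfl fun x _ => ?_
  rw [show Equiv.mulLeft₀ (algebraMap (ZMod p) F a) h0 x = algebraMap (ZMod p) F a * x from rfl, map_mul, hχ, one_mul, Algebra.smul_def]

theorem psiF_smul_sum (x : F) :
    ∑ a : ZMod p, psiF p F (a • x) = if Algebra.trace (ZMod p) F x = 0 then (p : ℂ) else 0 := by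
  classical
  have hp : p.Prime := Fact.out
  let η : AddChar (ZMod p) ℂ := (psiF p F).compAddMonoidHom ((LinearMap.toSpanSingleton (ZMod p) F x).toAddMonoidHom)
  have hη : ∀ a, η a = psiF p F (a • x) := fun a => by simp [η]
  have h := AddChar.sum_eq_ite η
  simp only [hη] at h
  rw [h, ZMod.card]
  refine if_congr ?_ rfl rfl
  constructor
  · intro h0
    by_contra ht
    have h1 := hη (Algebra.trace (ZMod p) F x)⁻¹
    rw [h0, psiF_apply, map_smul, smul_eq_mul, inv_mul_cancel₀ ht] at h1
    have h2 : (1 : ZMod p).val = 1 := by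
      have : Fact (1 < p) := ⟨hp.one_lt⟩
      exact ZMod.val_one p
    rw [h2, pow_one] at h1
    exact (zetaP_prim p hp.ne_zero).ne_one hp.one_lt h1.symm
  · intro h0
    ext a
    rw [hη, psiF_apply, map_smul, h0]
    simp

theorem gauss_trace_zero (χ : MulChar F ℂ) (h1 : χ ≠ 1)
    (hχ : ∀ a : ZMod p, a ≠ 0 → χ (algebraMap (ZMod p) F a) = 1) :
    ((p : ℂ) - 1) * gaussSum χ (psiF p F) =
      p * ∑ x : F, if Algebra.trace (ZMod p) F x = 0 then χ x else 0 := by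
  classical
  have hp : p.Prime := Fact.out
  have e1 : ∑ a : ZMod p, ∑ x : F, χ x * psiF p F (a • x) = ((p : ℂ) - 1) * gaussSum χ (psiF p F) := by
    rw [← Finset.sum_erase_add _ _ (Finset.mem_univ (0 : ZMod p))]
    have : ∑ x : F, χ x * psiF p F ((0 : ZMod p) • x) = 0 := by
      simp only [zero_smul, AddChar.map_zero_eq_one, mul_one]
      exact MulChar.sum_eq_zero_of_ne_one h1
    rw [this, add_zero, Finset.sum_congr rfl fun a ha => gauss_shift χ a (Finset.ne_of_mem_erase ha)
      (hχ a (Finset.ne_of_mem_erase ha)), Finset.sum_const, Finset.card_erase_of_mem (Finset.mem_univ _),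
      Finset.card_univ, ZMod.card, nsmul_eq_mul, Nat.cast_sub hp.one_le, Nat.cast_one]
  rw [← e1, Finset.sum_comm, Finset.mul_sum]
  refine Finset.sum_congr rfl fun x _ => ?_
  rw [← Finset.mul_sum, psiF_smul_sum]
  split_ifs <;> ring

end


open Complex Polynomial IntermediateField
set_option linter.unusedSectionVars false

theorem sqrtNeg_ne (D : ℕ) (hD : D ≠ 0) : sqrtNeg D ≠ 0 := by
  intro h
  have := sqrtNeg_sq D
  rw [h] at this
  apply hD
  have h2 : (D : ℂ) = 0 := by linear_combination this
  exact_mod_cast h2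

theorem stdAddChar_exp (D M : ℕ) [NeZero D] (hM : 0 < M) (a : ℕ) :
    Complex.exp (2 * Real.pi * I / ((D * M : ℕ) : ℂ)) ^ (M * a) = ZMod.stdAddChar (a : ZMod D) := by
  have h := ZMod.stdAddChar_coe (N := D) (a : ℤ)
  rw [Int.cast_natCast] at h
  rw [h, ← Complex.exp_nat_mul]
  congr 1
  have h1 : (D : ℂ) ≠ 0 := by exact_mod_cast NeZero.ne D
  have h2 : (M : ℂ) ≠ 0 := by exact_mod_cast hM.ne'
  push_cast
  field_simp

namespace Cfg
variable {p l1 l2 r1 r2 N f : ℕ} (c : Cfg p l1 l2 r1 r2 N f) [Fact p.Prime]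
  {F : Type} [Field F] [Fintype F] [Algebra (ZMod p) F] (hcard : Fintype.card F = p ^ f)
  (χ : MulChar F ℂ) (hχ : orderOf χ = N)
include c hχ

theorem chi_alg (a : ZMod p) (ha : a ≠ 0) : χ (algebraMap (ZMod p) F a) = 1 := by
  have hp := c.hp
  have hu : IsUnit (algebraMap (ZMod p) F a) := (ha.isUnit).map _
  set z := χ (algebraMap (ZMod p) F a) with hz
  have h1 : z ^ (p - 1) = 1 := by
    rw [hz, ← map_pow, ← map_pow, ZMod.pow_card_sub_one_eq_one ha, map_one, map_one]
  have h2 : z ^ N = 1 := by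
    have := pow_orderOf_eq_one χ
    rw [hχ] at this
    rw [hz, ← MulChar.pow_apply' _ c.N_pos.ne', this, MulChar.one_apply hu]
  have hc : Nat.Coprime (p - 1) N := by
    have := c.Np1
    rw [← Nat.isCoprime_iff_coprime, Nat.cast_sub hp.one_le]
    exact_mod_cast this
  have := Nat.dvd_gcd (orderOf_dvd_of_pow_eq_one h1) (orderOf_dvd_of_pow_eq_one h2)
  rw [hc] at this
  exact orderOf_eq_one_iff.1 (Nat.dvd_one.1 this)

theorem chi_alg_pow (m : ℕ) (a : ZMod p) (ha : a ≠ 0) : (χ ^ m) (algebraMap (ZMod p) F a) = 1 := by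
  have hu : IsUnit (algebraMap (ZMod p) F a) := (ha.isUnit).map _
  obtain ⟨u, hu⟩ := hu
  rw [← hu, MulChar.pow_apply_coe, hu, c.chi_alg χ hχ a ha, one_pow]

theorem chi_neg (m : ℕ) : (χ ^ m) (-1) = 1 := by
  have := c.chi_alg_pow χ hχ m (-1) (by simp)
  simpa using this

theorem chi_ne (m : ℕ) (hm : ¬ N ∣ m) : χ ^ m ≠ 1 := by
  intro h
  apply hm
  rw [← hχ]
  exact orderOf_dvd_of_pow_eq_one h

theorem chi_inv (m : ℕ) : χ ^ ((N - 1) * m) = (χ ^ m)⁻¹ := by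
  rw [eq_inv_iff_mul_eq_one, ← pow_add]
  have : (N - 1) * m + m = N * m := by
    have := c.N_pos
    obtain ⟨n, rfl⟩ : ∃ n, N = n + 1 := ⟨N - 1, by omega⟩
    simp only [Nat.add_sub_cancel]; ring
  rw [this, pow_mul, ← hχ, pow_orderOf_eq_one, one_pow]

theorem g_conj (m : ℕ) : starRingEnd ℂ (gaussSum (χ ^ m) (psiF p F)) = gaussSum (χ ^ ((N - 1) * m)) (psiF p F) := by
  rw [gauss_conj _ (c.chi_neg χ hχ m), c.chi_inv χ hχ]

include hcard in
theorem g_mul (m : ℕ) (hm : ¬ N ∣ m) :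
    gaussSum (χ ^ m) (psiF p F) * gaussSum (χ ^ ((N - 1) * m)) (psiF p F) = (p : ℂ) ^ f := by
  rw [c.chi_inv χ hχ, gauss_mul_inv _ (c.chi_ne χ hχ m hm) (c.chi_neg χ hχ m), hcard]
  push_cast; rfl

theorem chi_mod (a b : ℕ) (h : (a : ZMod N) = b) : χ ^ a = χ ^ b := by
  rw [pow_eq_pow_iff_modEq, hχ]
  exact (ZMod.natCast_eq_natCast_iff _ _ _).1 h

theorem g_p (a i m : ℕ) (h : (a : ZMod N) = (p : ZMod N) ^ i) :
    gaussSum (χ ^ (a * m)) (psiF p F) = gaussSum (χ ^ m) (psiF p F) := by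
  rw [c.chi_mod χ hχ (a * m) (m * p ^ i) (by push_cast; rw [h]; ring), pow_mul, gauss_frob_pow]

theorem g_np (a i m : ℕ) (h : (a : ZMod N) = -(p : ZMod N) ^ i) :
    gaussSum (χ ^ (a * m)) (psiF p F) = gaussSum (χ ^ ((N - 1) * m)) (psiF p F) := by
  rw [c.chi_mod χ hχ (a * m) ((N - 1) * m * p ^ i)
    (by push_cast [Nat.cast_sub c.N_pos]; rw [h, ZMod.natCast_self]; ring), pow_mul, gauss_frob_pow]

theorem exists_poly : ∃ P : ℕ → ℚ[X], ∀ a m : ℕ, ¬ N ∣ a * m →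
    aeval (Complex.exp (2 * Real.pi * I / N) ^ a) (P m) = gaussSum (χ ^ (a * m)) (psiF p F) := by
  classical
  have := c.neN
  have hp := c.hp
  have hz := Complex.isPrimitiveRoot_exp N c.N_pos.ne'
  set z := Complex.exp (2 * Real.pi * I / N)
  have hd : ∀ u : Fˣ, ∃ d : ℕ, χ u = z ^ d := by
    intro u
    have h2 : χ u ^ N = 1 := by
      have := pow_orderOf_eq_one χ
      rw [hχ] at this
      rw [← MulChar.pow_apply_coe, this, MulChar.one_apply_coe]
    obtain ⟨i, _, h⟩ := hz.eq_pow_of_pow_eq_one h2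
    exact ⟨i, h.symm⟩
  choose d hd using hd
  refine ⟨fun m => C ((p : ℚ) / (p - 1)) * ∑ u : Fˣ,
    if Algebra.trace (ZMod p) F u = 0 then X ^ (d u * m) else 0, ?_⟩
  intro a m ham
  have h1 := gauss_trace_zero (χ ^ (a * m)) (c.chi_ne χ hχ _ ham) (c.chi_alg_pow χ hχ (a * m))
  rw [sum_eq_sum_units _ (by simp only [MulChar.map_zero, ite_self])] at h1
  have hp1 : (p : ℂ) - 1 ≠ 0 := by
    rw [sub_ne_zero]
    exact_mod_cast hp.one_lt.ne'
  have e : aeval (z ^ a) (∑ u : Fˣ, if Algebra.trace (ZMod p) F u = 0 then (X : ℚ[X]) ^ (d u * m) else 0) =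
      ∑ u : Fˣ, if Algebra.trace (ZMod p) F (u : F) = 0 then (χ ^ (a * m)) u else 0 := by
    rw [map_sum]
    refine Finset.sum_congr rfl fun u _ => ?_
    split_ifs
    · rw [map_pow, aeval_X, MulChar.pow_apply_coe, hd, ← pow_mul, ← pow_mul]
      congr 1; ring
    · simp
  rw [map_mul, e, aeval_C]
  have : (algebraMap ℚ ℂ) ((p : ℚ) / (p - 1)) = (p : ℂ) / (p - 1) := by simp
  rw [this]
  field_simp
  linear_combination -h1

theorem g_quad (m : ℕ) (hm : ¬ N ∣ m) : ∃ u v : ℚ,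
    gaussSum (χ ^ m) (psiF p F) = u + v * sqrtNeg (l1 * l2) ∧
    gaussSum (χ ^ ((N - 1) * m)) (psiF p F) = u - v * sqrtNeg (l1 * l2) := by
  have := c.neN
  set D := l1 * l2 with hD
  have hD0 : D ≠ 0 := by have := c.D_ge; omega
  have : NeZero D := ⟨hD0⟩
  obtain ⟨P, hP⟩ := c.exists_poly (p := p) χ hχ
  have hz := Complex.isPrimitiveRoot_exp N c.N_pos.ne'
  set z := Complex.exp (2 * Real.pi * I / N) with hzdef
  obtain ⟨M, hM⟩ := c.D_dvd
  have hM0 : 0 < M := by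
    rcases Nat.eq_zero_or_pos M with h | h
    · subst h; have := c.N_pos; omega
    · exact h
  have hnd : ∀ a : ℕ, a.Coprime N → ¬ N ∣ a * m := fun a ha h => hm (ha.symm.dvd_of_dvd_mul_left h)
  have hN1 : (N - 1).Coprime N := by
    have := c.N_pos
    exact (Nat.coprime_self_sub_right this).2 (Nat.coprime_one_right N) |>.symm
  set g1 := gaussSum (χ ^ m) (psiF p F) with hg1
  set g2 := gaussSum (χ ^ ((N - 1) * m)) (psiF p F) with hg2
  have hNN : ∀ a, χ ^ (a * ((N - 1) * m)) = (χ ^ ((N - 1) * (a * m))) := fun a => by congr 1; ring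
  have hinv : χ ^ ((N - 1) * ((N - 1) * m)) = χ ^ m := by
    rw [c.chi_inv χ hχ, c.chi_inv χ hχ, inv_inv]
  -- evaluate
  have hev : ∀ a : ℕ, a.Coprime N → ∃ s : ℤ, (s = 1 ∨ s = -1) ∧ jacobiSym a D = s ∧
      aeval (z ^ a) (P m + P ((N - 1) * m)) = g1 + g2 ∧
      aeval (z ^ a) (P m - P ((N - 1) * m)) = s * (g1 - g2) := by
    intro a ha
    have h1 := hP a m (hnd a ha)
    have h2 := hP a ((N - 1) * m) (fun h => hnd a ha (hN1.symm.dvd_of_dvd_mul_left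
      (by rwa [← mul_assoc, mul_comm a, mul_assoc] at h)))
    rw [map_add, map_sub, h1, h2]
    rcases c.dich a ha with ⟨hj, i, _, hi⟩ | ⟨hj, i, _, hi⟩
    · refine ⟨1, Or.inl rfl, hj, ?_, ?_⟩ <;>
      rw [c.g_p χ hχ a i _ hi, c.g_p χ hχ a i _ hi]
      push_cast; ring
    · refine ⟨-1, Or.inr rfl, hj, ?_, ?_⟩ <;>
      rw [c.g_np χ hχ a i _ hi, c.g_np χ hχ a i _ hi, hinv] <;> push_cast <;> ring
  have hmu : ∀ μ ∈ primitiveRoots N ℂ, ∃ a : ℕ, a.Coprime N ∧ μ = z ^ a := by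
    intro μ hμ
    rw [mem_primitiveRoots c.N_pos] at hμ
    obtain ⟨i, _, hi, h⟩ := hz.isPrimitiveRoot_iff.1 hμ
    exact ⟨i, hi, h.symm⟩
  obtain ⟨q, hq⟩ := rat_of_conj_inv N c.N_pos (P m + P ((N - 1) * m)) (g1 + g2) (by
    intro μ hμ
    obtain ⟨a, ha, rfl⟩ := hmu μ hμ
    exact (hev a ha).choose_spec.2.2.1)
  set τ := gaussSum (psiC D) ZMod.stdAddChar with hτ
  let T : ℚ[X] := ∑ y ∈ Finset.range D, C (jacobiSym y D : ℚ) * X ^ (M * y)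
  have hT : ∀ a : ℕ, aeval (z ^ a) T = jacobiSym a D * τ := by
    intro a
    rw [← psiC_nat, ← psiC_gauss D c.D_sq c.D_mod, zmod_sum_eq, map_sum]
    refine Finset.sum_congr rfl fun y _ => ?_
    rw [map_mul, aeval_C, map_pow, aeval_X, psiC_nat, ← pow_mul, ← mul_assoc, mul_comm a M, mul_assoc,
      hzdef, hM, stdAddChar_exp D M hM0]
    simp
  obtain ⟨q', hq'⟩ := rat_of_conj_inv N c.N_pos ((P m - P ((N - 1) * m)) * T) ((g1 - g2) * τ) (by
    intro μ hμ
    obtain ⟨a, ha, rfl⟩ := hmu μ hμ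
    obtain ⟨s, hs, h1, _, h3⟩ := hev a ha
    rw [map_mul, h3, hT, h1]
    rcases hs with rfl | rfl <;> push_cast <;> ring)
  have hτ2 : τ ^ 2 = sqrtNeg D ^ 2 := by rw [sqrtNeg_sq, psiC_gauss_sq D c.D_sq c.D_mod]
  have hq'' : ∃ q : ℚ, (g1 - g2) * sqrtNeg D = q := by
    rcases sq_eq_sq_iff_eq_or_eq_neg.1 hτ2 with h | h
    · exact ⟨q', by rw [← h, hq']⟩
    · exact ⟨-q', by push_cast; rw [← hq', h]; ring⟩
  obtain ⟨q2, hq2⟩ := hq''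
  have hs := sqrtNeg_sq D
  have hDC : (D : ℂ) ≠ 0 := by exact_mod_cast hD0
  have hdiff : g1 - g2 = -(q2 / D) * sqrtNeg D := by
    apply mul_right_cancel₀ (sqrtNeg_ne D hD0)
    rw [hq2, mul_assoc, ← sq, hs]
    field_simp
  refine ⟨q / 2, -(q2 / D) / 2, ?_, ?_⟩ <;> push_cast
  · linear_combination hq / 2 + hdiff / 2
  · linear_combination hq / 2 - hdiff / 2

end Cfg


open Complex Polynomial IntermediateField
set_option linter.unusedSectionVars false

theorem VS.pow_sub (V : ValuationSubring ℂ) {a b : ℂ} (ha : a ∈ V) (hb : b ∈ V) (h : a - b ∈ V.nonunits) (n : ℕ) :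
    a ^ n - b ^ n ∈ V.nonunits := by
  induction n with
  | zero =>
    rw [pow_zero, pow_zero, sub_self]
    have := VS.nu_mul V h (zero_mem V)
    rwa [mul_zero] at this
  | succ n ih =>
    have e : a ^ (n + 1) - b ^ (n + 1) = (a ^ n - b ^ n) * a + (a - b) * b ^ n := by ring
    rw [e]
    exact VS.nu_add V (VS.nu_mul V ih ha) (VS.nu_mul V h (pow_mem hb n))

theorem VS.frob_inj (V : ValuationSubring ℂ) {l : ℕ} (hl : l.Prime) (hl2 : l ≠ 2) (h : (l : ℂ) ∈ V.nonunits)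
    {a b : ℂ} (ha : a ∈ V) (hb : b ∈ V) (hab : a ^ l - b ^ l ∈ V.nonunits) : a - b ∈ V.nonunits := by
  have h1 := VS.frob_sum V hl h Finset.univ ![a, -b] (by
    intro i _
    fin_cases i
    · exact ha
    · exact neg_mem hb)
  simp only [Fin.sum_univ_two, Matrix.cons_val_zero, Matrix.cons_val_one] at h1
  rw [(hl.odd_of_ne_two hl2).neg_pow] at h1
  refine VS.nu_of_pow V (sub_mem ha hb) l ?_
  have := VS.nu_add V h1 hab
  convert this using 1
  ring

theorem vint (V : ValuationSubring ℂ) {p : ℕ} (hp : p.Prime) (h : (p : ℂ) ∈ V.nonunits) (w : ℕ) :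
    ∀ (x : ℂ) (n : ℤ), x ∈ V → (p : ℂ) ^ w * x = n → ∃ m : ℤ, x = m := by
  induction w with
  | zero => intro x n _ h; exact ⟨n, by simpa using h⟩
  | succ w ih =>
    intro x n hx hn
    have h1 : (n : ℂ) ∈ V.nonunits := by
      rw [← hn, pow_succ', mul_assoc]
      exact VS.nu_mul V h (mul_mem (pow_mem (VS.nu_mem V h) w) hx)
    obtain ⟨n', rfl⟩ := (VS.int_nu V hp h n).1 h1
    refine ih x n' hx ?_
    apply mul_left_cancel₀ (show (p : ℂ) ≠ 0 by exact_mod_cast hp.ne_zero)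
    rw [← mul_assoc, ← pow_succ', hn]; push_cast; rfl

theorem quad_int (V : ValuationSubring ℂ) {p D : ℕ} (hp : p.Prime) (h : (p : ℂ) ∈ V.nonunits)
    (hD : D % 4 = 3) (hsq : Squarefree D) (z z' : ℂ) (u v : ℚ) (hz : z = u + v * sqrtNeg D)
    (hz' : z' = u - v * sqrtNeg D) (hV : z ∈ V) (hV' : z' ∈ V) (w : ℕ)
    (hint : IsIntegral ℤ ((p : ℂ) ^ w * (z + z'))) (n : ℤ) (hn : z * z' = n) :
    ∃ a b : ℤ, z = (a + b * sqrtNeg D) / 2 ∧ z' = (a - b * sqrtNeg D) / 2 ∧ a ^ 2 + D * b ^ 2 = 4 * n := by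
  have hs := sqrtNeg_sq D
  have e : z + z' = 2 * u := by rw [hz, hz']; ring
  have e2 : (p : ℂ) ^ w * (z + z') = (((p : ℚ) ^ w * (2 * u) : ℚ) : ℂ) := by rw [e]; push_cast; ring
  obtain ⟨m, hm⟩ := rat_int_of_isIntegral _ (e2 ▸ hint)
  obtain ⟨t, ht⟩ := vint V hp h w (z + z') m (add_mem hV hV') (by rw [e2, hm]; push_cast; rfl)
  have ht' : 2 * u = t := by
    have : ((2 * u : ℚ) : ℂ) = ((t : ℚ) : ℂ) := by push_cast; rw [← e, ht]
    exact_mod_cast this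
  have hn' : u ^ 2 + D * v ^ 2 = n := by
    have : ((u ^ 2 + D * v ^ 2 : ℚ) : ℂ) = ((n : ℚ) : ℂ) := by
      push_cast
      rw [← hn, hz, hz']
      linear_combination (-(v : ℂ) ^ 2) * (-hs)
    exact_mod_cast this
  obtain ⟨a, b, ha, hb, _⟩ := int_of_trace_norm D hD hsq u v t n ht' hn'
  have hac : (2 * u : ℂ) = a := by exact_mod_cast congrArg (Rat.cast : ℚ → ℂ) ha
  have hbc : (2 * v : ℂ) = b := by exact_mod_cast congrArg (Rat.cast : ℚ → ℂ) hb
  refine ⟨a, b, ?_, ?_, ?_⟩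
  · rw [hz, ← hac, ← hbc]; ring
  · rw [hz', ← hac, ← hbc]; ring
  · have : ((a ^ 2 + D * b ^ 2 : ℤ) : ℚ) = ((4 * n : ℤ) : ℚ) := by
      push_cast; rw [← ha, ← hb, ← hn']; ring
    exact_mod_cast this

namespace Cfg
variable {p l1 l2 r1 r2 N f : ℕ} (c : Cfg p l1 l2 r1 r2 N f) [Fact p.Prime]
  {F : Type} [Field F] [Fintype F] [Algebra (ZMod p) F] (hcard : Fintype.card F = p ^ f)
  (χ : MulChar F ℂ) (hχ : orderOf χ = N)

theorem gV (V : ValuationSubring ℂ) (χ : MulChar F ℂ) : gaussSum χ (psiF p F) ∈ V :=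
  VS.mem_of_isIntegral V (isIntegral_gauss χ)

include c hχ

theorem g_frob (V : ValuationSubring ℂ) {l : ℕ} (hl : l.Prime) (hlp : l ≠ p) (h : (l : ℂ) ∈ V.nonunits) (m : ℕ) :
    gaussSum (χ ^ m) (psiF p F) ^ l - gaussSum (χ ^ (l * m)) (psiF p F) ∈ V.nonunits := by
  have h1 := VS.frob_sum V hl h Finset.univ (fun x : F => (χ ^ m) x * psiF p F x)
    (fun x _ => VS.mem_of_isIntegral V ((isIntegral_mulChar _ x).mul (isIntegral_psiF x)))
  have hl0 : (l : ZMod p) ≠ 0 := by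
    rw [Ne, ZMod.natCast_eq_zero_iff]
    exact fun hd => hlp ((Nat.prime_dvd_prime_iff_eq c.hp hl).1 hd).symm
  have e : ∑ x : F, ((χ ^ m) x * psiF p F x) ^ l = gaussSum (χ ^ (l * m)) (psiF p F) := by
    rw [← gauss_shift (χ ^ (l * m)) (l : ZMod p) hl0 (c.chi_alg_pow χ hχ _ _ hl0)]
    refine Finset.sum_congr rfl fun x _ => ?_
    rw [mul_pow, ← AddChar.map_nsmul_eq_pow, mul_comm l m, pow_mul, MulChar.pow_apply' _ hl.ne_zero,
      Nat.cast_smul_eq_nsmul]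
  rw [e] at h1
  exact h1

theorem g_down (V : ValuationSubring ℂ) {l : ℕ} (hl : l.Prime) (hl2 : l ≠ 2) (hlp : l ≠ p)
    (h : (l : ℂ) ∈ V.nonunits) (b : ℂ) (hb : b = 1 ∨ b = -1) (n : ℕ) (m : ℕ)
    (hm : gaussSum (χ ^ (l ^ n * m)) (psiF p F) - b ∈ V.nonunits) :
    gaussSum (χ ^ m) (psiF p F) - b ∈ V.nonunits := by
  have hbl : b ^ l = b := by
    rcases hb with rfl | rfl
    · simp
    · exact (hl.odd_of_ne_two hl2).neg_one_pow
  have hbV : b ∈ V := by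
    rcases hb with rfl | rfl
    · exact one_mem V
    · exact neg_mem (one_mem V)
  induction n with
  | zero => simpa using hm
  | succ n ih =>
    apply ih
    refine VS.frob_inj V hl hl2 h (gV V _) hbV ?_
    have h1 := c.g_frob χ hχ V hl hlp h (l ^ n * m)
    rw [← mul_assoc, ← pow_succ'] at h1
    have := VS.nu_add V h1 hm
    rw [hbl]
    convert this using 1
    ring

theorem l1p : l1 ≠ p := by
  rintro rfl
  have h := c.hNp
  rw [c.hN] at h
  have := Nat.Coprime.coprime_mul_right h
  have h2 := Nat.Coprime.coprime_dvd_left (dvd_pow_self l1 (by have := c.hr1; omega)) this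
  exact c.hl1.one_lt.ne' ((Nat.coprime_self _).1 h2)

theorem l2p : l2 ≠ p := by
  rintro rfl
  have h := c.hNp
  rw [c.hN] at h
  have := Nat.Coprime.coprime_mul_left h
  have h2 := Nat.Coprime.coprime_dvd_left (dvd_pow_self l2 (by have := c.hr2; omega)) this
  exact c.hl2.one_lt.ne' ((Nat.coprime_self _).1 h2)

theorem g_N : gaussSum (χ ^ N) (psiF p F) = -1 := by
  rw [← hχ, pow_orderOf_eq_one, gauss_one]

include hcard

theorem g_sq (m L : ℕ) (hL : L * m = N ∨ N ∣ L * m) (hm : ¬ N ∣ m) (i : ℕ) (hi : (L : ℤ) ∣ (p : ℤ) ^ i + 1) :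
    gaussSum (χ ^ m) (psiF p F) = (p : ℂ) ^ (f / 2) ∨ gaussSum (χ ^ m) (psiF p F) = -(p : ℂ) ^ (f / 2) := by
  have hLm : N ∣ L * m := by rcases hL with h | h; exact dvd_of_eq h.symm; exact h
  have h1 : gaussSum (χ ^ ((N - 1) * m)) (psiF p F) = gaussSum (χ ^ m) (psiF p F) := by
    rw [← gauss_frob_pow (χ ^ m) i, ← pow_mul]
    congr 1
    apply c.chi_mod χ hχ
    obtain ⟨q, hq⟩ := hi
    have h3 := congrArg (Int.cast : ℤ → ZMod N) hq
    have h4 : ((L * m : ℕ) : ZMod N) = 0 := (ZMod.natCast_eq_zero_iff _ _).2 hLm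
    push_cast [Nat.cast_sub c.N_pos] at h3 h4 ⊢
    rw [ZMod.natCast_self]
    linear_combination (-m : ZMod N) * h3 - (q : ZMod N) * h4
  have h2 := c.g_mul hcard χ hχ m hm
  rw [h1, ← sq] at h2
  obtain ⟨_, _, _, _, _, h, _⟩ := c.f_half
  rw [← sq_eq_sq_iff_eq_or_eq_neg, h2, ← pow_mul]
  congr 1
  omega

theorem g_pure1 (t2 : ℕ) (ht : t2 < r2) :
    gaussSum (χ ^ (l1 ^ r1 * l2 ^ t2)) (psiF p F) = (p : ℂ) ^ (f / 2) := by
  have hN2 : l2 ^ (r2 - t2) * (l1 ^ r1 * l2 ^ t2) = N := by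
    rw [c.hN]; conv_rhs => rw [show r2 = (r2 - t2) + t2 by omega]
    ring
  have hnd : ¬ N ∣ l1 ^ r1 * l2 ^ t2 := by
    intro h
    have h1 := Nat.le_of_dvd (by have := c.hl1.pos; have := c.hl2.pos; positivity) h
    rw [c.hN] at h1
    have := Nat.le_of_mul_le_mul_left h1 (by have := c.hl1.pos; positivity)
    exact absurd this (not_le.2 (Nat.pow_lt_pow_right c.hl2.one_lt ht))
  rcases c.g_sq hcard χ hχ (l1 ^ r1 * l2 ^ t2) (l2 ^ r2) (Or.inr ⟨l2 ^ t2, by rw [c.hN]; ring⟩) hnd _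
    (half_pow p l2 r2 c.hl2 c.l2_ne c.hr2 c.hord2) with h | h
  · exact h
  · exfalso
    obtain ⟨V, hV⟩ := exists_V l2 c.hl2
    have h1 := c.g_down χ hχ V c.hl2 c.l2_ne (c.l2p χ hχ) hV (-1) (Or.inr rfl) (r2 - t2) (l1 ^ r1 * l2 ^ t2) (by
      rw [hN2, c.g_N χ hχ, sub_self]; simpa using (VS.int_nu V c.hl2 hV 0).2 (by simp))
    rw [h] at h1
    have h2 : ((-(p : ℤ) ^ (f / 2) - -1 : ℤ) : ℂ) ∈ V.nonunits := by push_cast; exact h1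
    rw [VS.int_nu V c.hl2 hV] at h2
    have h3 := dvd_add h2 c.pf_mod2
    have h4 : (l2 : ℤ) ∣ 2 := by ring_nf at h3; exact h3
    have := Int.le_of_dvd (by norm_num) h4
    have := c.l2_ge
    omega

theorem g_pure2 (t1 : ℕ) (ht : t1 < r1) :
    gaussSum (χ ^ (l1 ^ t1 * l2 ^ r2)) (psiF p F) = -(p : ℂ) ^ (f / 2) := by
  have hN2 : l1 ^ (r1 - t1) * (l1 ^ t1 * l2 ^ r2) = N := by
    rw [c.hN]; conv_rhs => rw [show r1 = (r1 - t1) + t1 by omega]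
    ring
  have hnd : ¬ N ∣ l1 ^ t1 * l2 ^ r2 := by
    intro h
    have h1 := Nat.le_of_dvd (by have := c.hl1.pos; have := c.hl2.pos; positivity) h
    rw [c.hN] at h1
    have := Nat.le_of_mul_le_mul_right h1 (by have := c.hl2.pos; positivity)
    exact absurd this (not_le.2 (Nat.pow_lt_pow_right c.hl1.one_lt ht))
  rcases c.g_sq hcard χ hχ (l1 ^ t1 * l2 ^ r2) (l1 ^ r1) (Or.inr ⟨l1 ^ t1, by rw [c.hN]; ring⟩) hnd _
    (half_pow p l1 r1 c.hl1 c.l1_ne c.hr1 c.hord1) with h | h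
  · exfalso
    obtain ⟨V, hV⟩ := exists_V l1 c.hl1
    have h1 := c.g_down χ hχ V c.hl1 c.l1_ne (c.l1p χ hχ) hV (-1) (Or.inr rfl) (r1 - t1) (l1 ^ t1 * l2 ^ r2) (by
      rw [hN2, c.g_N χ hχ, sub_self]; simpa using (VS.int_nu V c.hl1 hV 0).2 (by simp))
    rw [h] at h1
    have h2 : (((p : ℤ) ^ (f / 2) - -1 : ℤ) : ℂ) ∈ V.nonunits := by push_cast; exact h1
    rw [VS.int_nu V c.hl1 hV] at h2
    have h3 := dvd_sub h2 c.pf_mod1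
    have h4 : (l1 : ℤ) ∣ 2 := by ring_nf at h3; exact h3
    have := Int.le_of_dvd (by norm_num) h4
    have := c.l1_ge
    omega
  · exact h

theorem g_mod1 (V : ValuationSubring ℂ) (hV : (l1 : ℂ) ∈ V.nonunits) (t1 t2 : ℕ) (ht1 : t1 < r1) (ht : t2 < r2) :
    gaussSum (χ ^ (l1 ^ t1 * l2 ^ t2)) (psiF p F) - 1 ∈ V.nonunits := by
  refine c.g_down χ hχ V c.hl1 c.l1_ne (c.l1p χ hχ) hV 1 (Or.inl rfl) (r1 - t1) _ ?_
  have : l1 ^ (r1 - t1) * (l1 ^ t1 * l2 ^ t2) = l1 ^ r1 * l2 ^ t2 := by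
    conv_rhs => rw [show r1 = (r1 - t1) + t1 by omega]
    ring
  rw [this, c.g_pure1 hcard χ hχ t2 ht]
  have := (VS.int_nu V c.hl1 hV _).2 c.pf_mod1
  push_cast at this
  exact this

end Cfg


open Complex Polynomial IntermediateField
set_option linter.unusedSectionVars false

theorem int_small (A B : ℤ) (D : ℕ) (hD : 15 ≤ D) (h : A ^ 2 + (D : ℤ) * B ^ 2 = 4 * 1) :
    B = 0 ∧ (A = 2 ∨ A = -2) := by
  have h2 : (15 : ℤ) ≤ D := by exact_mod_cast hD
  have hB : B = 0 := by
    by_contra hB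
    have h1 : 0 < B ^ 2 := by positivity
    nlinarith [sq_nonneg A]
  refine ⟨hB, ?_⟩
  rw [hB] at h
  rw [← sq_eq_sq_iff_eq_or_eq_neg]
  linarith

theorem quad_mul {D : ℕ} {z z' y y' : ℂ} (hz : ∃ u v : ℚ, z = u + v * sqrtNeg D ∧ z' = u - v * sqrtNeg D)
    (hy : ∃ u v : ℚ, y = u + v * sqrtNeg D ∧ y' = u - v * sqrtNeg D) :
    ∃ u v : ℚ, z * y = u + v * sqrtNeg D ∧ z' * y' = u - v * sqrtNeg D := by
  obtain ⟨u, v, rfl, rfl⟩ := hz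
  obtain ⟨a, b, rfl, rfl⟩ := hy
  have hs := sqrtNeg_sq D
  refine ⟨u * a - D * v * b, u * b + v * a, ?_, ?_⟩ <;> push_cast <;> linear_combination (v : ℂ) * b * hs

theorem quad_pow {D : ℕ} {z z' : ℂ} (hz : ∃ u v : ℚ, z = u + v * sqrtNeg D ∧ z' = u - v * sqrtNeg D) (n : ℕ) :
    ∃ u v : ℚ, z ^ n = u + v * sqrtNeg D ∧ z' ^ n = u - v * sqrtNeg D := by
  induction n with
  | zero => exact ⟨1, 0, by simp, by simp⟩
  | succ n ih => rw [pow_succ, pow_succ]; exact quad_mul ih hz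

theorem quad_div {D : ℕ} {z z' : ℂ} (hz : ∃ u v : ℚ, z = u + v * sqrtNeg D ∧ z' = u - v * sqrtNeg D) (n : ℕ) :
    ∃ u v : ℚ, z / n = u + v * sqrtNeg D ∧ z' / n = u - v * sqrtNeg D := by
  obtain ⟨u, v, rfl, rfl⟩ := hz
  exact ⟨u / n, v / n, by push_cast; ring, by push_cast; ring⟩

namespace Cfg
variable {p l1 l2 r1 r2 N f : ℕ} (c : Cfg p l1 l2 r1 r2 N f) [Fact p.Prime]
  {F : Type} [Field F] [Fintype F] [Algebra (ZMod p) F] (hcard : Fintype.card F = p ^ f)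
  (χ : MulChar F ℂ) (hχ : orderOf χ = N)
include c hcard hχ

theorem nd (t1 t2 : ℕ) (h2 : t2 < r2) : ¬ N ∣ l1 ^ t1 * l2 ^ t2 := by
  intro h
  have h1 : l2 ^ r2 ∣ l1 ^ t1 * l2 ^ t2 := dvd_trans ⟨l1 ^ r1, by rw [c.hN]; ring⟩ h
  have h3 := (Nat.Coprime.pow r2 t1 c.cop.symm).dvd_of_dvd_mul_left h1
  exact absurd (Nat.le_of_dvd (by have := c.hl2.pos; positivity) h3)
    (not_le.2 (Nat.pow_lt_pow_right c.hl2.one_lt h2))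

/-- local information at the prime above `p`. -/
theorem local_info : ∃ V : ValuationSubring ℂ, (p : ℂ) ∈ V.nonunits ∧ ∃ ε : ℤ, (ε = 1 ∨ ε = -1) ∧
    ∀ t1 t2, t1 < r1 → t2 < r2 → ∃ e e' : ℕ, ∃ x ∈ V, ∃ y ∈ V, e + e' = f ∧
      (e : ℤ) - e' = ε * ((l1 ^ t1 * l2 ^ t2 : ℕ) : ℤ) * classNumSqrtNeg (l1 * l2) ∧ x * y = 1 ∧
      gaussSum (χ ^ (l1 ^ t1 * l2 ^ t2)) (psiF p F) = (p : ℂ) ^ e * x ∧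
      gaussSum (χ ^ ((N - 1) * (l1 ^ t1 * l2 ^ t2))) (psiF p F) = (p : ℂ) ^ e' * y := by
  have hdvd : N ∣ p ^ f - 1 := by
    have := pow_orderOf_eq_one (p : ZMod N)
    rw [c.hf] at this
    rw [← ZMod.natCast_eq_zero_iff, Nat.cast_sub (Nat.one_le_pow _ _ c.hp.pos)]
    push_cast
    rw [this, sub_self]
  obtain ⟨V, hV, k, hk, hst⟩ := stick hcard (by have := c.f_ge; omega) c.N_pos hdvd χ hχ
  obtain ⟨ε, hε, hS⟩ := c.S_main k hk
  refine ⟨V, hV, ε, hε, fun t1 t2 h1 h2 => ?_⟩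
  obtain ⟨e, e', he, he', hs, hd⟩ := hS t1 t2 h1 h2
  obtain ⟨y, hy, hy1⟩ := hst _ _ he
  obtain ⟨x, hx, hx1⟩ := hst _ _ he'
  have hm := c.g_mul hcard χ hχ _ (c.nd hcard χ hχ t1 t2 h2)
  set g := gaussSum (χ ^ (l1 ^ t1 * l2 ^ t2)) (psiF p F)
  set g' := gaussSum (χ ^ ((N - 1) * (l1 ^ t1 * l2 ^ t2))) (psiF p F)
  have hp0 : (p : ℂ) ≠ 0 := by exact_mod_cast c.hp.ne_zero
  have hpf : (p : ℂ) ^ f ≠ 0 := pow_ne_zero _ hp0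
  have hg : g ≠ 0 := by intro h; rw [h, zero_mul] at hm; exact hpf hm.symm
  have hg' : g' ≠ 0 := by intro h; rw [h, mul_zero] at hm; exact hpf hm.symm
  rw [← hs, pow_add] at hm
  refine ⟨e, e', x, hx, y, hy, hs, hd, ?_, ?_, ?_⟩
  · apply mul_right_cancel₀ (mul_ne_zero hg hg')
    rw [one_mul]
    rw [hx1, hy1] at hm
    linear_combination -hm
  · apply mul_right_cancel₀ hg'
    rw [hm, hx1]; ring
  · apply mul_left_cancel₀ hg
    rw [hm, hy1]; ring

set_option maxHeartbeats 4000000 in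
theorem main : ∃ a b : ℤ,
      4 * (p : ℤ) ^ classNumSqrtNeg (l1 * l2) = a ^ 2 + (l1 : ℤ) * (l2 : ℤ) * b ^ 2 ∧
      a ≡ 2 * (p : ℤ) ^ (classNumSqrtNeg (l1 * l2) / 2) [ZMOD (l1 : ℤ)] ∧
      ∀ t1 t2 : ℕ, t1 < r1 → t2 < r2 →
        gaussSum (χ ^ (l1 ^ t1 * l2 ^ t2)) (psiF p F) =
          (p : ℂ) ^
              (((f : ℤ) - (classNumSqrtNeg (l1 * l2) : ℤ) * ((l1 : ℤ) ^ t1 * (l2 : ℤ) ^ t2)) / 2) *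
            (((a : ℂ) + (b : ℂ) * sqrtNeg (l1 * l2)) / 2) ^ (l1 ^ t1 * l2 ^ t2) := by
  obtain ⟨V, hV, ε, hε, hloc⟩ := c.local_info hcard χ hχ
  obtain ⟨V1, hV1⟩ := exists_V l1 c.hl1
  have hp := c.hp
  have hp0 : (p : ℂ) ≠ 0 := by exact_mod_cast c.hp.ne_zero
  have hr1 := c.hr1
  have hr2 := c.hr2
  have hmod1 := fun t1 t2 => c.g_mod1 hcard χ hχ V1 hV1 t1 t2
  have hpf1 := (VS.int_nu V1 c.hl1 hV1 _).2 c.pf_mod1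
  obtain ⟨_, _, _, _, _, hf2, _⟩ := c.f_half
  set h := classNumSqrtNeg (l1 * l2) with hh
  set D := l1 * l2 with hD
  -- case lam = 1
  have hloc1 := hloc 0 0 (by omega) (by omega)
  have hnd1 := c.nd hcard χ hχ 0 0 (by omega)
  have hm11 := hmod1 0 0 (by omega) (by omega)
  simp only [pow_zero, mul_one, Nat.cast_one] at hloc1 hnd1 hm11
  obtain ⟨e1, e1', x1, hx1, y1, hy1, hs1, hd1, hxy1, hg1, hg1'⟩ := hloc1
  have hq1 := c.g_quad χ hχ 1 hnd1
  have hn1 := c.g_mul hcard χ hχ 1 hnd1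
  rw [mul_one] at hq1 hn1
  have hi1 := isIntegral_gauss (p := p) (χ ^ 1)
  have hi1' := isIntegral_gauss (p := p) (χ ^ (N - 1))
  have hV1g := gV (p := p) V1 (χ ^ 1)
  have hV1g' := gV (p := p) V1 (χ ^ (N - 1))
  set g := gaussSum (χ ^ 1) (psiF p F) with hgdef
  set g' := gaussSum (χ ^ (N - 1)) (psiF p F) with hg'def
  have hheven : h % 2 = 0 := by rcases hε with rfl | rfl <;> omega
  obtain ⟨w, hw⟩ : ∃ w : ℕ, f = 2 * w + h := by
    rcases hε with rfl | rfl
    · exact ⟨e1', by omega⟩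
    · exact ⟨e1, by omega⟩
  obtain ⟨i, j, hi, hj⟩ : ∃ i j : ℕ, e1 = w + i ∧ e1' = w + j := by
    rcases hε with rfl | rfl
    · exact ⟨e1 - w, e1' - w, by omega, by omega⟩
    · exact ⟨e1 - w, e1' - w, by omega, by omega⟩
  have hpw : (p : ℂ) ^ w ≠ 0 := pow_ne_zero _ hp0
  have hpV : (p : ℂ) ∈ V := VS.nu_mem V hV
  have hα : g / ((p ^ w : ℕ) : ℂ) = (p : ℂ) ^ i * x1 := by
    rw [hg1, hi, pow_add]; push_cast; field_simp
  have hα' : g' / ((p ^ w : ℕ) : ℂ) = (p : ℂ) ^ j * y1 := by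
    rw [hg1', hj, pow_add]; push_cast; field_simp
  obtain ⟨u, v, hu, hv⟩ := quad_div hq1 (p ^ w)
  obtain ⟨a, b, ha, hb, hab⟩ := quad_int V hp hV c.D_mod c.D_sq _ _ u v hu hv
    (by rw [hα]; exact mul_mem (pow_mem hpV _) hx1) (by rw [hα']; exact mul_mem (pow_mem hpV _) hy1) w
    (by
      have : (p : ℂ) ^ w * (g / ((p ^ w : ℕ) : ℂ) + g' / ((p ^ w : ℕ) : ℂ)) = g + g' := by
        push_cast; field_simp
      rw [this]; exact hi1.add hi1')
    ((p : ℤ) ^ h) (by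
      have : (p : ℂ) ^ f = (p : ℂ) ^ w * (p : ℂ) ^ w * (p : ℂ) ^ h := by
        rw [hw, two_mul, pow_add, pow_add]
      rw [this] at hn1
      push_cast
      field_simp
      linear_combination hn1)
  refine ⟨a, b, ?_, ?_, ?_⟩
  · rw [← hab]; push_cast; ring
  · -- congruence mod l1
    have hg1m : g' - 1 ∈ V1.nonunits := by
      have h1 : (p : ℂ) ^ f - 1 ∈ V1.nonunits := by
        have := VS.pow_sub V1 (VS.int_mem V1 ((p : ℤ) ^ (f / 2))) (one_mem V1)
          (by push_cast at hpf1 ⊢; exact hpf1) 2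
        push_cast at this
        rw [← pow_mul, one_pow, mul_comm, ← hf2] at this
        exact this
      have h2 := VS.nu_add V1 h1 (VS.nu_neg V1 (VS.nu_mul V1 hm11 hV1g'))
      convert h2 using 1
      rw [← hn1]; ring
    have hsum : g + g' = a * (p : ℂ) ^ w := by
      have h1 : g / ((p ^ w : ℕ) : ℂ) + g' / ((p ^ w : ℕ) : ℂ) = a := by rw [ha, hb]; ring
      rw [← h1]; push_cast; field_simp
    have h2 : ((a * (p : ℤ) ^ w - 2 : ℤ) : ℂ) ∈ V1.nonunits := by
      push_cast
      rw [← hsum]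
      convert VS.nu_add V1 hm11 hg1m using 1
      ring
    rw [VS.int_nu V1 c.hl1 hV1] at h2
    have h3 := c.pf_mod1
    rw [show f / 2 = w + h / 2 by omega, pow_add] at h3
    apply Int.ModEq.symm
    rw [Int.modEq_iff_dvd]
    have h4 := dvd_sub (h2.mul_right ((p : ℤ) ^ (h / 2))) (h3.mul_left a)
    have e5 : a - 2 * (p : ℤ) ^ (h / 2) = (a * (p : ℤ) ^ w - 2) * (p : ℤ) ^ (h / 2) - a * ((p : ℤ) ^ w * (p : ℤ) ^ (h / 2) - 1) := by ring
    rw [e5]; exact h4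
  · intro t1 t2 ht1 ht2
    obtain ⟨e2, e2', x2, hx2, y2, hy2, hs2, hd2, hxy2, hg2, hg2'⟩ := hloc t1 t2 ht1 ht2
    have hnd2 := c.nd hcard χ hχ t1 t2 ht2
    have hm12 := hmod1 t1 t2 ht1 ht2
    have hcast : (l1 : ℤ) ^ t1 * (l2 : ℤ) ^ t2 = ((l1 ^ t1 * l2 ^ t2 : ℕ) : ℤ) := by push_cast; rfl
    rw [hcast]
    set lam := l1 ^ t1 * l2 ^ t2 with hlam
    have hq2 := c.g_quad χ hχ lam hnd2
    have hn2 := c.g_mul hcard χ hχ lam hnd2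
    have hi2 := isIntegral_gauss (p := p) (χ ^ lam)
    have hi2' := isIntegral_gauss (p := p) (χ ^ ((N - 1) * lam))
    have hV2g := gV (p := p) V1 (χ ^ lam)
    set G := gaussSum (χ ^ lam) (psiF p F) with hGdef
    set G' := gaussSum (χ ^ ((N - 1) * lam)) (psiF p F) with hG'def
    have hq2' : ∃ u v : ℚ, G' = u + v * sqrtNeg D ∧ G = u - v * sqrtNeg D := by
      obtain ⟨u, v, h1, h2⟩ := hq2
      exact ⟨u, -v, by rw [h2]; push_cast; ring, by rw [h1]; push_cast; ring⟩
    obtain ⟨W, hW, hW'⟩ : ∃ W : ℕ, W = e1 * lam + e2' ∧ W = e1' * lam + e2 := by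
      refine ⟨_, rfl, ?_⟩
      have k1 : (e1 : ℤ) * lam - e1' * lam = (ε * h) * lam := by rw [← sub_mul, hd1]
      have k2 : (e1 : ℤ) * lam + e2' = e1' * lam + e2 := by
        linear_combination k1 - hd2
      exact_mod_cast k2
    have h2W : 2 * W = f * (lam + 1) := by
      have : 2 * W = (e1 + e1') * lam + (e2 + e2') := by
        rw [two_mul]; nth_rewrite 1 [hW]; rw [hW']; ring
      rw [this, hs1, hs2]; ring
    have hWf : W = f / 2 * (lam + 1) := by
      have : 2 * W = 2 * (f / 2 * (lam + 1)) := by rw [h2W, ← mul_assoc, ← hf2]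
      omega
    have hpW : (p : ℂ) ^ W ≠ 0 := pow_ne_zero _ hp0
    have hU : g ^ lam * G' = (p : ℂ) ^ W * (x1 ^ lam * y2) := by
      rw [hg1, hg2', hW, mul_pow, ← pow_mul, pow_add]; ring
    have hU' : g' ^ lam * G = (p : ℂ) ^ W * (y1 ^ lam * x2) := by
      rw [hg1', hg2, hW', mul_pow, ← pow_mul, pow_add]; ring
    have hqU := quad_div (quad_mul (quad_pow hq1 lam) hq2') (p ^ W)
    have eU : g ^ lam * G' / ((p ^ W : ℕ) : ℂ) = x1 ^ lam * y2 := by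
      rw [hU]; push_cast; field_simp
    have eU' : g' ^ lam * G / ((p ^ W : ℕ) : ℂ) = y1 ^ lam * x2 := by
      rw [hU']; push_cast; field_simp
    rw [eU, eU'] at hqU
    obtain ⟨u2, v2, hu2, hv2⟩ := hqU
    obtain ⟨A, B, hA, -, hAB⟩ := quad_int V hp hV c.D_mod c.D_sq _ _ u2 v2 hu2 hv2
      (mul_mem (pow_mem hx1 _) hy2) (mul_mem (pow_mem hy1 _) hx2) W
      (by rw [mul_add, ← hU, ← hU']; exact ((hi1.pow _).mul hi2').add ((hi1'.pow _).mul hi2)) 1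
      (by
        have : x1 ^ lam * y2 * (y1 ^ lam * x2) = (x1 * y1) ^ lam * (x2 * y2) := by rw [mul_pow]; ring
        rw [this, hxy1, hxy2]; simp)
    obtain ⟨hB, hA2⟩ := int_small A B _ c.D_ge hAB
    have hone : x1 ^ lam * y2 = 1 ∨ x1 ^ lam * y2 = -1 := by
      rw [hB] at hA
      rcases hA2 with hc | hc
      · left; rw [hA, hc]; push_cast; ring
      · right; rw [hA, hc]; push_cast; ring
    -- sign
    have hpos : g ^ lam * G' = (p : ℂ) ^ W := by
      rcases hone with h1 | h1
      · rw [hU, h1, mul_one]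
      · exfalso
        have h2 : g ^ lam * (p : ℂ) ^ f = - ((p : ℂ) ^ W * G) := by
          rw [← hn2]
          rw [h1] at hU
          linear_combination G * hU
        have hpp : ∀ n, (p : ℂ) ^ (f / 2 * n) - 1 ∈ V1.nonunits := by
          intro n
          have := VS.pow_sub V1 (VS.int_mem V1 ((p : ℤ) ^ (f / 2))) (one_mem V1)
            (by push_cast at hpf1 ⊢; exact hpf1) n
          push_cast at this
          rwa [← pow_mul, one_pow] at this
        have k1 := hpp (lam + 1)
        have k2 := hpp 2
        rw [← hWf] at k1
        rw [mul_comm, ← hf2] at k2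
        have k3 := VS.pow_sub V1 hV1g (one_mem V1) hm11 lam
        rw [one_pow] at k3
        have hpV1 : ∀ n, (p : ℂ) ^ n ∈ V1 := fun n => by
          have := VS.int_mem V1 ((p : ℤ) ^ n)
          push_cast at this; exact this
        have k4 := VS.nu_add V1 (VS.nu_mul V1 k3 (hpV1 f)) k2
        have k5 := VS.nu_add V1 (VS.nu_mul V1 k1 hV2g) hm12
        have k6 := VS.nu_neg V1 (VS.nu_add V1 k4 k5)
        have k7 : (((2 : ℤ)) : ℂ) ∈ V1.nonunits := by
          convert k6 using 1
          push_cast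
          linear_combination h2
        rw [VS.int_nu V1 c.hl1 hV1] at k7
        have := Int.le_of_dvd (by norm_num) k7
        have := c.l1_ge
        omega
    have hG : G * (p : ℂ) ^ W = g ^ lam * (p : ℂ) ^ f := by
      rw [← hpos, ← hn2]; ring
    have hgα : g = (p : ℂ) ^ w * (((a : ℂ) + b * sqrtNeg D) / 2) := by
      rw [← ha]; push_cast; field_simp
    apply mul_right_cancel₀ hpW
    rw [hG, hgα, mul_pow, ← pow_mul]
    have hexp : (((f : ℤ) - (h : ℤ) * (lam : ℤ)) / 2) + W = w * lam + f := by
      have k1 : (f : ℤ) = 2 * w + h := by exact_mod_cast hw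
      have k2 : 2 * (W : ℤ) = f * (lam + 1) := by exact_mod_cast h2W
      have k3 : (f : ℤ) - (h : ℤ) * lam = 2 * (w * lam + f - W) := by
        linear_combination (lam : ℤ) * k1 + k2
      rw [k3, Int.mul_ediv_cancel_left _ (by norm_num)]; ring
    have hz : (p : ℂ) ^ (((f : ℤ) - (h : ℤ) * (lam : ℤ)) / 2) * (p : ℂ) ^ W = (p : ℂ) ^ (w * lam) * (p : ℂ) ^ f := by
      rw [← zpow_natCast (p : ℂ) W, ← zpow_add₀ hp0, hexp, ← pow_add, ← zpow_natCast]
      push_cast; rfl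
    linear_combination (-(((a : ℂ) + b * sqrtNeg D) / 2) ^ lam) * hz

end Cfg


theorem statement17 (p l1 l2 r1 r2 N f : ℕ) (hp : p.Prime)
    (hl1 : l1.Prime) (hl2 : l2.Prime) (hne : l1 ≠ l2)
    (hl1m : l1 % 4 = 3) (hl2m : l2 % 4 = 1)
    (hr1 : 1 ≤ r1) (hr2 : 1 ≤ r2) (hN : N = l1 ^ r1 * l2 ^ r2) (hNp : Nat.gcd N p = 1)
    (hord1 : orderOf (p : ZMod (l1 ^ r1)) = Nat.totient (l1 ^ r1))
    (hord2 : orderOf (p : ZMod (l2 ^ r2)) = Nat.totient (l2 ^ r2))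
    (hf : orderOf (p : ZMod N) = f) (hind : f = Nat.totient N / 2)
    (F : Type) [Field F] [Fintype F] [Algebra (ZMod p) F]
    (hcard : Fintype.card F = p ^ f)
    (χ : MulChar F ℂ) (hχord : orderOf χ = N) :
    ∃ a b : ℤ,
      4 * (p : ℤ) ^ classNumSqrtNeg (l1 * l2) = a ^ 2 + (l1 : ℤ) * (l2 : ℤ) * b ^ 2 ∧
      a ≡ 2 * (p : ℤ) ^ (classNumSqrtNeg (l1 * l2) / 2) [ZMOD (l1 : ℤ)] ∧
      ∀ t1 t2 : ℕ, t1 < r1 → t2 < r2 →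
        gaussSumN p χ (l1 ^ t1 * l2 ^ t2) =
          (p : ℂ) ^
              (((f : ℤ) - (classNumSqrtNeg (l1 * l2) : ℤ) * ((l1 : ℤ) ^ t1 * (l2 : ℤ) ^ t2)) / 2) *
            (((a : ℂ) + (b : ℂ) * sqrtNeg (l1 * l2)) / 2) ^ (l1 ^ t1 * l2 ^ t2) ∧
        gaussSumN p χ (l1 ^ r1 * l2 ^ t2) = (p : ℂ) ^ ((f : ℤ) / 2) ∧
        gaussSumN p χ (l1 ^ t1 * l2 ^ r2) = -(p : ℂ) ^ ((f : ℤ) / 2) := by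
  haveI : Fact p.Prime := ⟨hp⟩
  have c : Cfg p l1 l2 r1 r2 N f :=
    ⟨hp, hl1, hl2, hne, hl1m, hl2m, hr1, hr2, hN, hNp, hord1, hord2, hf, hind⟩
  obtain ⟨a, b, h1, h2, h3⟩ := c.main hcard χ hχord
  have e : (f : ℤ) / 2 = ((f / 2 : ℕ) : ℤ) := by omega
  refine ⟨a, b, h1, h2, fun t1 t2 ht1 ht2 => ⟨?_, ?_, ?_⟩⟩
  · rw [gaussSumN_eq]; exact h3 t1 t2 ht1 ht2
  · rw [gaussSumN_eq, e, zpow_natCast]; exact c.g_pure1 hcard χ hχord t2 ht2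
  · rw [gaussSumN_eq, e, zpow_natCast]; exact c.g_pure2 hcard χ hχord t1 ht1
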